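/- arXiv:1705.07484 — 2 statements merged into one kernel-verified Lean document; each statement's English description precedes it below -/
import Mathlib

section
/- Let $c$ and $\mu$ be fixed real numbers with $1 < c < \frac{17}{16}$ and $0 < \mu < 1$, and set $\delta = \frac{17 - 16c}{32}$ and $\xi = \frac{16c - 5}{32}$. There exist $\varepsilon_0 = \varepsilon_0(c) > 0$ and $X_0 > 0$ such that for every real $X \geq X_0$, with $D = X^{\delta}$ and $\Delta = X^{\xi - c}$, and every sieve weight $\lambda$ of level $D$, one has $\max_{\Delta \leq |\alpha| \leq \frac{1}{2}} |L(\alpha)| \leq X^{1 - \varepsilon_0}$. -/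
/-!
The key estimate is a bound `X ^ (31 / 32)`, up to powers of `log X`, for
`∑ Λ(n) e(α ⌊n ^ c⌋ + β n)` over `μ X < n ≤ X`, uniform in the real number `β`
(`exists_norm_sum_vonMangoldt_floor_le`). Uniformity in `β` makes the congruence `p + 2 ≡ 0 (mod d)`
harmless: it is detected by the additive characters modulo `d` at no cost
(`norm_sum_filter_dvd_le`). Prime powers contribute `O(√X log X)`. Summing trivially over
`d ≤ X ^ ((17 - 16 c) / 32)` gives the exponent `31 / 32 + (17 - 16 c) / 32 = 1 - (c - 1) / 2 < 1`,
and `ε₀ = (c - 1) / 4` leaves room for the logarithms.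

To remove the integer part, write `e(α ⌊y⌋) = e(α y) e(-α {y})` and approximate `e(-α {y})` by a
Fejér mean (with the Fourier coefficients replaced by averages over finitely many nodes, so that no
integrals occur). The coefficients have total mass `O(log X)`, and the error is large only near the
jump of `{y}`, where it is majorised by another Fejér kernel; see `norm_sum_floor_le`. What remains
are sums with phase `θ n ^ c + β n` where `X ^ (11 / 32) ≤ |θ| X ^ c ≤ X ^ (38 / 32)`.

These are treated by Vaughan's identity with `U = X ^ (1 / 16)`
(`exists_norm_sum_vonMangoldt_le`). In the type I sums the short variable is at most `X ^ (1 / 8)`,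
and van der Corput's second derivative test in the long variable suffices
(`exists_norm_typeI_le`). In the type II sums (`exists_norm_typeII_le`) both variables exceed
`X ^ (1 / 16)`; on each dyadic box Cauchy's inequality and van der Corput's shifts in the
shorter variable lead to correlations in the longer variable, whose phases `A m ^ c + B m` are again
covered by the second derivative test. That test is proved from the Kuzmin–Landau inequality and
stated with second differences of the phase (`norm_sum_e_le_second_diff`), so the linear terms drop
out at once.
-/

/-- `e(t) = e^{2πit}`. -/
noncomputable def e (t : ℝ) : ℂ := Complex.exp (2 * Real.pi * Complex.I * t)

/-- A sieve weight of level `D`. -/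
def IsSieveWeight (D : ℝ) (lam : ℕ → ℝ) : Prop :=
  (∀ d : ℕ, |lam d| ≤ 1) ∧ ∀ d : ℕ, (D < (d : ℝ) ∨ 2 ∣ d ∨ ¬ Squarefree d) → lam d = 0

/-- The exponential sum `L(α)` over primes `μX < p ≤ X` with `p + 2 ≡ 0 (mod d)`. -/
noncomputable def L (c μ X D : ℝ) (lam : ℕ → ℝ) (α : ℝ) : ℂ :=
  ∑ d ∈ Finset.range (⌊D⌋₊ + 1), (lam d : ℂ) *
    ∑ p ∈ (Finset.range (⌊X⌋₊ + 1)).filter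
        (fun p : ℕ => p.Prime ∧ μ * X < (p : ℝ) ∧ d ∣ (p + 2)),
      (Real.log p : ℂ) * e (α * ⌊(p : ℝ) ^ c⌋)

/-! ### The additive character -/

lemma e_add (s t : ℝ) : e (s + t) = e s * e t := by
  simp only [e, Complex.ofReal_add, mul_add, Complex.exp_add]

lemma e_zero : e 0 = 1 := by simp [e]

lemma e_int (k : ℤ) : e k = 1 := by
  rw [e, ← Complex.exp_int_mul_two_pi_mul_I k]
  congr 1
  push_cast
  ring

lemma e_eq (t : ℝ) : e t = Complex.exp (Complex.I * ((2 * Real.pi * t : ℝ) : ℂ)) := by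
  rw [e]; congr 1; push_cast; ring

lemma norm_e (t : ℝ) : ‖e t‖ = 1 := by
  rw [e_eq]; exact Complex.norm_exp_I_mul_ofReal _

lemma e_neg (t : ℝ) : e (-t) = (starRingEnd ℂ) (e t) := by
  rw [e_eq, e_eq, ← Complex.exp_conj]
  congr 1
  rw [map_mul, Complex.conj_I, Complex.conj_ofReal]
  push_cast
  ring

lemma e_neg_mul (t : ℝ) : e (-t) * e t = 1 := by
  rw [← e_add]; simp [e_zero]

lemma e_mul_nat (t : ℝ) (n : ℕ) : e (t * n) = e t ^ n := by
  rw [e, e, ← Complex.exp_nat_mul]; congr 1; push_cast; ring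

lemma e_add_int (t : ℝ) (k : ℤ) : e (t + k) = e t := by rw [e_add, e_int, mul_one]

lemma norm_e_sub_one (t : ℝ) : ‖e t - 1‖ = 2 * |Real.sin (Real.pi * t)| := by
  rw [e_eq, Complex.norm_exp_I_mul_ofReal_sub_one, Real.norm_eq_abs, abs_mul,
    abs_of_pos (by norm_num : (0 : ℝ) < 2)]
  congr 3; ring

lemma norm_e_sub_one_le (t : ℝ) : ‖e t - 1‖ ≤ 2 * Real.pi * |t| := by
  rw [e_eq]
  refine (Real.norm_exp_I_mul_ofReal_sub_one_le).trans ?_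
  rw [Real.norm_eq_abs, abs_mul, abs_of_pos (by positivity)]

lemma four_mul_le_norm_e_sub_one {t : ℝ} (ht : |t| ≤ 1 / 2) : 4 * |t| ≤ ‖e t - 1‖ := by
  rw [norm_e_sub_one]
  have h : |Real.sin (Real.pi * t)| = |Real.sin (Real.pi * |t|)| := by
    rcases abs_cases t with ⟨h, _⟩ | ⟨h, _⟩ <;> rw [h]
    rw [mul_neg, Real.sin_neg, abs_neg]
  rw [h]
  have h1 := Real.mul_le_sin (x := Real.pi * |t|) (by positivity)
    (by nlinarith [Real.pi_pos])
  have h2 : 2 / Real.pi * (Real.pi * |t|) = 2 * |t| := by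
    field_simp
  have := le_abs_self (Real.sin (Real.pi * |t|))
  linarith

/-- Geometric sums of the additive character. -/
lemma norm_sum_e_mul_le {t κ : ℝ} (hκ : 0 < κ) (h : κ ≤ ‖e t - 1‖) (N : ℕ) :
    ‖∑ a ∈ Finset.range N, e (t * a)‖ ≤ 2 / κ := by
  have h1 : e t ≠ 1 := by
    intro h0; rw [h0] at h; simp at h; linarith
  simp_rw [e_mul_nat]
  rw [geom_sum_eq h1, norm_div]
  have h2 : ‖e t ^ N - 1‖ ≤ 2 := by
    refine (norm_sub_le _ _).trans ?_
    rw [norm_pow, norm_e]; norm_num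
  gcongr

/-! ### The second derivative test -/

/-- Abel summation against a bounded monotone or antitone weight. -/
lemma norm_sum_weight_le {N : ℕ} {w : ℕ → ℝ} {z : ℕ → ℂ} {A B : ℝ} (hA : 0 ≤ A) (hB0 : 0 ≤ B)
    (hw : (∀ n, n + 1 < N → w n ≤ w (n + 1)) ∨ (∀ n, n + 1 < N → w (n + 1) ≤ w n))
    (hB : ∀ n < N, |w n| ≤ B)
    (hz : ∀ n ≤ N, ‖∑ i ∈ Finset.range n, z i‖ ≤ A) :
    ‖∑ n ∈ Finset.range N, (w n : ℂ) * z n‖ ≤ 3 * A * B := by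
  rcases Nat.eq_zero_or_pos N with rfl | hN
  · simp only [Finset.range_zero, Finset.sum_empty, norm_zero]
    positivity
  have hparts := Finset.sum_range_by_parts (fun n => (w n : ℂ)) z N
  simp only [smul_eq_mul] at hparts
  rw [hparts]
  have hvar : ∑ i ∈ Finset.range (N - 1), |w (i + 1) - w i| ≤ 2 * B := by
    have h0 := abs_le.1 (hB 0 hN)
    have h1 := abs_le.1 (hB (N - 1) (by omega))
    rcases hw with hw | hw
    · have : ∑ i ∈ Finset.range (N - 1), |w (i + 1) - w i|
          = ∑ i ∈ Finset.range (N - 1), (w (i + 1) - w i) := by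
        refine Finset.sum_congr rfl fun i hi => abs_of_nonneg ?_
        rw [Finset.mem_range] at hi
        linarith [hw i (by omega)]
      rw [this, Finset.sum_range_sub]; linarith
    · have : ∑ i ∈ Finset.range (N - 1), |w (i + 1) - w i|
          = ∑ i ∈ Finset.range (N - 1), (w i - w (i + 1)) := by
        refine Finset.sum_congr rfl fun i hi => ?_
        rw [Finset.mem_range] at hi
        rw [abs_of_nonpos (by linarith [hw i (by omega)])]; ring
      rw [this, Finset.sum_range_sub']; linarith
  have hfirst : ‖(w (N - 1) : ℂ) * ∑ i ∈ Finset.range N, z i‖ ≤ B * A := by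
    rw [norm_mul, Complex.norm_real, Real.norm_eq_abs]
    exact mul_le_mul (hB _ (by omega)) (hz N le_rfl) (norm_nonneg _) hB0
  have hsecond : ‖∑ i ∈ Finset.range (N - 1),
      ((w (i + 1) : ℂ) - (w i : ℂ)) * ∑ j ∈ Finset.range (i + 1), z j‖ ≤ 2 * B * A := by
    refine (norm_sum_le _ _).trans ?_
    refine le_trans ?_ (mul_le_mul_of_nonneg_right hvar hA)
    rw [Finset.sum_mul]
    refine Finset.sum_le_sum fun i hi => ?_
    rw [Finset.mem_range] at hi
    rw [norm_mul, ← Complex.ofReal_sub, Complex.norm_real, Real.norm_eq_abs]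
    exact mul_le_mul_of_nonneg_left (hz _ (by omega)) (abs_nonneg _)
  refine (norm_sub_le _ _).trans ?_
  linarith

lemma cot_antitone {x y : ℝ} (hx : 0 < x) (hxy : x ≤ y) (hy : y < Real.pi) :
    Real.cos y / Real.sin y ≤ Real.cos x / Real.sin x := by
  have h1 := Real.sin_pos_of_pos_of_lt_pi hx (by linarith)
  have h2 := Real.sin_pos_of_pos_of_lt_pi (by linarith) hy
  rw [div_le_div_iff₀ h2 h1]
  have := Real.sin_nonneg_of_nonneg_of_le_pi (x := y - x) (by linarith) (by linarith)
  rw [Real.sin_sub] at this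
  linarith

/-- The identity `1 / (e(t) - 1) = -1/2 - (i/2) cot (πt)`. -/
lemma e_sub_one_mul {t : ℝ} (h : Real.sin (Real.pi * t) ≠ 0) :
    (e t - 1) * (-1 / 2 - Complex.I / 2 *
      ((Real.cos (Real.pi * t) / Real.sin (Real.pi * t) : ℝ) : ℂ)) = 1 := by
  have h1 : e t = ((Real.cos (Real.pi * t) : ℂ) + Real.sin (Real.pi * t) * Complex.I) ^ 2 := by
    rw [e, Complex.ofReal_cos, Complex.ofReal_sin, ← Complex.exp_mul_I, ← Complex.exp_nat_mul]
    congr 1; push_cast; ring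
  have h2 : (Real.sin (Real.pi * t) : ℂ) ≠ 0 := by exact_mod_cast h
  have h3 : (Real.sin (Real.pi * t) : ℂ) ^ 2 + (Real.cos (Real.pi * t) : ℂ) ^ 2 = 1 := by
    exact_mod_cast Real.sin_sq_add_cos_sq (Real.pi * t)
  rw [h1, Complex.ofReal_div]
  generalize (Real.sin (Real.pi * t) : ℂ) = s at *
  generalize (Real.cos (Real.pi * t) : ℂ) = u at *
  have hI := Complex.I_sq
  field_simp
  have h4 : u ^ 2 = 1 - s ^ 2 := by linear_combination h3
  ring_nf
  have hI3 : Complex.I ^ 3 = - Complex.I := by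
    rw [pow_succ, Complex.I_sq]; ring
  simp only [hI, hI3]
  have h5 : u ^ 3 = u * (1 - s ^ 2) := by rw [← h4]; ring
  rw [h5, h4]
  ring

/-- The Kuzmin–Landau inequality in discrete form: the increments of the phase increase and stay
at distance `κ` from the integers. -/
lemma norm_sum_e_le_of_diff {N : ℕ} {f : ℕ → ℝ} {κ : ℝ} {k : ℤ} (hκ : 0 < κ)
    (hκ2 : κ ≤ 1 / 2)
    (hmono : ∀ n, n + 1 < N → f (n + 1) - f n ≤ f (n + 2) - f (n + 1))
    (hlo : ∀ n < N, k + κ ≤ f (n + 1) - f n) (hhi : ∀ n < N, f (n + 1) - f n ≤ k + 1 - κ) :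
    ‖∑ n ∈ Finset.range N, e (f n)‖ ≤ 2 / κ := by
  -- Subtracting `k n` from the phase puts the increments into `[κ, 1 - κ]`.
  set g : ℕ → ℝ := fun n => f n - k * n with hg
  have hfg : ∀ n, e (f n) = e (g n) := by
    intro n
    have : f n = g n + ((k * n : ℤ) : ℝ) := by simp [hg]
    rw [this, e_add_int]
  set a : ℕ → ℝ := fun n => g (n + 1) - g n with ha
  have ha' : ∀ n, a n = f (n + 1) - f n - k := by
    intro n; simp only [ha, hg]; push_cast; ring
  have halo : ∀ n < N, κ ≤ a n := fun n hn => by rw [ha']; linarith [hlo n hn]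
  have hahi : ∀ n < N, a n ≤ 1 - κ := fun n hn => by rw [ha']; linarith [hhi n hn]
  have hpi := Real.pi_pos
  have hsin : ∀ n < N, 2 * κ ≤ Real.sin (Real.pi * a n) := by
    intro n hn
    have h1 := halo n hn
    have h2 := hahi n hn
    have key : ∀ t : ℝ, κ ≤ t → t ≤ 1 / 2 → 2 * κ ≤ Real.sin (Real.pi * t) := by
      intro t ht1 ht2
      have ht0 : 0 < t := by linarith
      have := Real.mul_le_sin (x := Real.pi * t) (by positivity) (by nlinarith)
      have h3 : 2 / Real.pi * (Real.pi * t) = 2 * t := by field_simp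
      linarith
    rcases le_total (a n) (1 / 2) with h | h
    · exact key _ h1 h
    · have := key (1 - a n) (by linarith) (by linarith)
      rwa [mul_sub, mul_one, Real.sin_pi_sub] at this
  set w : ℕ → ℝ := fun n => Real.cos (Real.pi * a n) / Real.sin (Real.pi * a n) with hw
  set z : ℕ → ℂ := fun n => e (g (n + 1)) - e (g n) with hz
  have hterm : ∀ n < N, e (g n) = -1 / 2 * z n - Complex.I / 2 * ((w n : ℂ) * z n) := by
    intro n hn
    have h1 := e_sub_one_mul (t := a n) (by have := hsin n hn; exact ne_of_gt (by linarith))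
    have h2 : z n = e (g n) * (e (a n) - 1) := by
      simp only [hz]
      rw [mul_sub, ← e_add, mul_one]
      congr 2; simp only [ha]; ring
    rw [h2]
    simp only [hw]
    linear_combination (-e (g n)) * h1
  have hzsum : ∀ n, ‖∑ i ∈ Finset.range n, z i‖ ≤ 2 := by
    intro n
    simp only [hz]
    rw [Finset.sum_range_sub (fun n => e (g n))]
    refine (norm_sub_le _ _).trans ?_
    rw [norm_e, norm_e]; norm_num
  have hwsum := norm_sum_weight_le (N := N) (w := w) (z := z) (A := 2) (B := 1 / (2 * κ))
    (by norm_num) (by positivity)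
    (by
      right
      intro n hn
      refine cot_antitone ?_ ?_ ?_
      · exact mul_pos hpi (by linarith [halo n (by omega)])
      · refine mul_le_mul_of_nonneg_left ?_ hpi.le
        rw [ha', ha']; linarith [hmono n hn]
      · have := hahi (n + 1) hn
        nlinarith)
    (by
      intro n hn
      have h1 := hsin n hn
      simp only [hw]
      rw [abs_div, abs_of_pos (by linarith : 0 < Real.sin (Real.pi * a n))]
      exact div_le_div₀ (by norm_num) (Real.abs_cos_le_one _) (by positivity) h1)
    (fun n _ => hzsum n)
  have hsum : ∑ n ∈ Finset.range N, e (f n) = -1 / 2 * ∑ n ∈ Finset.range N, z n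
      - Complex.I / 2 * ∑ n ∈ Finset.range N, (w n : ℂ) * z n := by
    rw [Finset.mul_sum, Finset.mul_sum, ← Finset.sum_sub_distrib]
    refine Finset.sum_congr rfl fun n hn => ?_
    rw [hfg, hterm n (Finset.mem_range.1 hn)]
  rw [hsum]
  refine (norm_sub_le _ _).trans ?_
  rw [norm_mul, norm_mul]
  have e1 : ‖(-1 / 2 : ℂ)‖ = 1 / 2 := by norm_num
  have e2 : ‖(Complex.I / 2 : ℂ)‖ = 1 / 2 := by norm_num
  rw [e1, e2]
  have h1 : (1 : ℝ) ≤ 1 / (2 * κ) := by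
    rw [le_div_iff₀ (by positivity)]; linarith
  have h2 : 2 / κ = 4 * (1 / (2 * κ)) := by field_simp; norm_num
  rw [h2]
  have := hzsum N
  nlinarith

/-- A subset of an initial segment cut out by an order-convex condition is an interval. -/
lemma exists_filter_eq_Ico {N : ℕ} (p : ℕ → Prop) [DecidablePred p]
    (hp : ∀ i j k, i ≤ j → j ≤ k → k < N → p i → p k → p j) :
    ∃ x y, y ≤ N ∧ (Finset.range N).filter p = Finset.Ico x y := by
  rcases ((Finset.range N).filter p).eq_empty_or_nonempty with h | h
  · exact ⟨0, 0, Nat.zero_le _, by rw [h]; simp⟩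
  · have h1 := Finset.min'_mem _ h
    have h2 := Finset.max'_mem _ h
    refine ⟨((Finset.range N).filter p).min' h, ((Finset.range N).filter p).max' h + 1, ?_, ?_⟩
    · have := (Finset.mem_filter.1 h2).1
      rw [Finset.mem_range] at this; omega
    · ext n
      constructor
      · intro hn
        rw [Finset.mem_Ico]
        exact ⟨Finset.min'_le _ _ hn, Nat.lt_succ_of_le (Finset.le_max' _ _ hn)⟩
      · intro hn
        rw [Finset.mem_Ico] at hn
        rw [Finset.mem_filter, Finset.mem_range] at h1 h2 ⊢
        exact ⟨by omega, hp _ _ _ hn.1 (by omega) h2.1 h1.2 h2.2⟩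

/-- A `lam`-separated sequence has at most `κ / lam + 1` terms in an interval of length `κ`. -/
lemma card_filter_le_of_sep {N : ℕ} {a : ℕ → ℝ} {lam κ u : ℝ} (hlam : 0 < lam) (hκ : 0 ≤ κ)
    (hsep : ∀ i j, i ≤ j → j < N → lam * ((j : ℝ) - i) ≤ a j - a i)
    (s : Finset ℕ) (hs : ∀ n ∈ s, n < N ∧ u ≤ a n ∧ a n ≤ u + κ) :
    (s.card : ℝ) ≤ κ / lam + 1 := by
  rcases s.eq_empty_or_nonempty with h | h
  · rw [h]; simp; positivity
  · have h1 := hs _ (Finset.min'_mem _ h)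
    have h2 := hs _ (Finset.max'_mem _ h)
    set x := s.min' h
    set y := s.max' h
    have hxy : x ≤ y := Finset.min'_le _ _ (Finset.max'_mem _ h)
    have hsub : s ⊆ Finset.Icc x y := fun n hn =>
      Finset.mem_Icc.2 ⟨Finset.min'_le _ _ hn, Finset.le_max' _ _ hn⟩
    have hcard := Finset.card_le_card hsub
    rw [Nat.card_Icc] at hcard
    have hc2 : (s.card : ℝ) ≤ (y : ℝ) - x + 1 := by
      have : s.card + x ≤ y + 1 := by omega
      have : (s.card : ℝ) + x ≤ y + 1 := by exact_mod_cast this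
      linarith
    have h3 := hsep x y hxy h2.1
    have h4 : (y : ℝ) - x ≤ κ / lam := by
      rw [le_div_iff₀ hlam]; nlinarith [h1.2.1, h2.2.2]
    linarith

/-- Van der Corput's second derivative test, with second differences in place of the second
derivative. -/
lemma norm_sum_e_le_second_diff {N : ℕ} {f : ℕ → ℝ} {lam Lam : ℝ} (hlam : 0 < lam)
    (hlo : ∀ n < N, lam ≤ f (n + 2) - 2 * f (n + 1) + f n)
    (hhi : ∀ n < N, f (n + 2) - 2 * f (n + 1) + f n ≤ Lam) :
    ‖∑ n ∈ Finset.range N, e (f n)‖ ≤ 7 * (Lam * N + 2) / √lam := by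
  classical
  rcases Nat.eq_zero_or_pos N with rfl | hN
  · simp only [Finset.range_zero, Finset.sum_empty, norm_zero, Nat.cast_zero, mul_zero, zero_add]
    positivity
  have hLam : lam ≤ Lam := (hlo 0 hN).trans (hhi 0 hN)
  have hsq : 0 < √lam := Real.sqrt_pos.2 hlam
  have hsq2 : √lam * √lam = lam := Real.mul_self_sqrt hlam.le
  have hN' : (0 : ℝ) < N := by exact_mod_cast hN
  rcases lt_or_ge 1 lam with h1 | h1
  · have htriv : ‖∑ n ∈ Finset.range N, e (f n)‖ ≤ N := by
      refine (norm_sum_le _ _).trans ?_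
      simp [norm_e]
    refine htriv.trans ?_
    rw [le_div_iff₀ hsq]
    have : √lam ≤ lam := by
      rw [Real.sqrt_le_left (by linarith)]; nlinarith
    nlinarith [mul_le_mul_of_nonneg_left hLam hN'.le, mul_le_mul_of_nonneg_left this hN'.le]
  set a : ℕ → ℝ := fun n => f (n + 1) - f n with ha
  have hstep : ∀ n < N, lam ≤ a (n + 1) - a n ∧ a (n + 1) - a n ≤ Lam := by
    intro n hn
    have := hlo n hn
    have := hhi n hn
    simp only [ha]
    constructor <;> linarith
  have hsep : ∀ i j, i ≤ j → j ≤ N → lam * ((j : ℝ) - i) ≤ a j - a i := by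
    intro i j hij
    induction j, hij using Nat.le_induction with
    | base => intro _; simp
    | succ j hij ih =>
      intro hj
      have := ih (by omega)
      have := (hstep j (by omega)).1
      push_cast; linarith
  have hsep' : ∀ i j, i ≤ j → j < N → lam * ((j : ℝ) - i) ≤ a j - a i :=
    fun i j hij hj => hsep i j hij hj.le
  have hup : ∀ j ≤ N, a j - a 0 ≤ Lam * j := by
    intro j
    induction j with
    | zero => intro _; simp
    | succ j ih =>
      intro hj
      have := ih (by omega)
      have := (hstep j (by omega)).2
      push_cast; linarith
  have hmono : ∀ i j, i ≤ j → j ≤ N → a i ≤ a j := by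
    intro i j hij hj
    have h2 := hsep i j hij hj
    have : (i : ℝ) ≤ j := by exact_mod_cast hij
    nlinarith
  set κ : ℝ := √lam / 2 with hκdef
  have hκ : 0 < κ := by positivity
  have hκ2 : κ ≤ 1 / 2 := by
    have : √lam ≤ 1 := Real.sqrt_le_one.2 h1
    rw [hκdef]; linarith
  have hmaps : ∀ n ∈ Finset.range N, ⌊a n⌋ ∈ Finset.Icc ⌊a 0⌋ ⌊a (N - 1)⌋ := by
    intro n hn
    rw [Finset.mem_range] at hn
    rw [Finset.mem_Icc]
    exact ⟨Int.floor_mono (hmono _ _ (by omega) (by omega)),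
      Int.floor_mono (hmono _ _ (by omega) (by omega))⟩
  rw [← Finset.sum_fiberwise_of_maps_to hmaps]
  refine (norm_sum_le _ _).trans ?_
  -- The terms whose increment has integer part `k`.
  have hclass : ∀ k : ℤ, ‖∑ n ∈ (Finset.range N).filter (fun n => ⌊a n⌋ = k), e (f n)‖
      ≤ 7 / √lam := by
    intro k
    set s := (Finset.range N).filter (fun n => ⌊a n⌋ = k) with hs
    have hmem : ∀ n ∈ s, n < N ∧ (k : ℝ) ≤ a n ∧ a n < k + 1 := by
      intro n hn
      rw [hs, Finset.mem_filter, Finset.mem_range, Int.floor_eq_iff] at hn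
      exact hn
    set P : ℕ → Prop := fun n => k + κ ≤ a n ∧ a n ≤ k + 1 - κ with hP
    have hmid : ‖∑ n ∈ s.filter P, e (f n)‖ ≤ 2 / κ := by
      have heq : s.filter P = (Finset.range N).filter P := by
        ext n
        simp only [hs, Finset.mem_filter, Int.floor_eq_iff]
        constructor
        · rintro ⟨⟨h1, _⟩, h2⟩; exact ⟨h1, h2⟩
        · rintro ⟨h1, h2⟩
          exact ⟨⟨h1, by linarith [h2.1], by linarith [h2.2]⟩, h2⟩
      obtain ⟨x, y, hy, hxy⟩ := exists_filter_eq_Ico (N := N) P (by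
        intro i j l hij hjl hl hi hk
        exact ⟨hi.1.trans (hmono _ _ hij (by omega)), (hmono _ _ hjl (by omega)).trans hk.2⟩)
      rw [heq, hxy, Finset.sum_Ico_eq_sum_range]
      have hin : ∀ n < y - x, P (x + n) := by
        intro n hn
        have : x + n ∈ (Finset.range N).filter P := by
          rw [hxy, Finset.mem_Ico]; omega
        exact (Finset.mem_filter.1 this).2
      refine norm_sum_e_le_of_diff (f := fun n => f (x + n)) (k := k) hκ hκ2 ?_ ?_ ?_
      · intro n hn
        exact hmono (x + n) (x + n + 1) (by omega) (by omega)
      · intro n hn; exact (hin n hn).1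
      · intro n hn; exact (hin n hn).2
    have hout : ‖∑ n ∈ s.filter (fun n => ¬ P n), e (f n)‖ ≤ 2 * (κ / lam + 1) := by
      refine (norm_sum_le _ _).trans ?_
      simp only [norm_e, Finset.sum_const, nsmul_eq_mul, mul_one]
      have hsub : s.filter (fun n => ¬ P n) ⊆
          s.filter (fun n => a n ≤ k + κ) ∪ s.filter (fun n => k + 1 - κ ≤ a n) := by
        intro n hn
        rw [Finset.mem_filter] at hn
        rw [Finset.mem_union, Finset.mem_filter (s := s), Finset.mem_filter (s := s)]
        by_cases h : a n ≤ k + κ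
        · exact Or.inl ⟨hn.1, h⟩
        · refine Or.inr ⟨hn.1, ?_⟩
          by_contra h'
          exact hn.2 ⟨by linarith, by linarith⟩
      have hc := (Finset.card_le_card hsub).trans (Finset.card_union_le _ _)
      have hA := card_filter_le_of_sep (u := k) hlam hκ.le hsep' (s.filter (fun n => a n ≤ k + κ))
        (by
          intro n hn
          rw [Finset.mem_filter] at hn
          exact ⟨(hmem n hn.1).1, (hmem n hn.1).2.1, hn.2⟩)
      have hB := card_filter_le_of_sep (u := k + 1 - κ) hlam hκ.le hsep'
        (s.filter (fun n => k + 1 - κ ≤ a n))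
        (by
          intro n hn
          rw [Finset.mem_filter] at hn
          exact ⟨(hmem n hn.1).1, hn.2, by linarith [(hmem n hn.1).2.2]⟩)
      have hc' : ((s.filter (fun n => ¬ P n)).card : ℝ) ≤ (s.filter (fun n => a n ≤ k + κ)).card
        + (s.filter (fun n => k + 1 - κ ≤ a n)).card := by exact_mod_cast hc
      linarith
    rw [← Finset.sum_filter_add_sum_filter_not s P]
    refine (norm_add_le _ _).trans ((add_le_add hmid hout).trans ?_)
    have e1 : 2 / κ = 4 / √lam := by rw [hκdef]; field_simp; norm_num
    have e2 : κ / lam = 1 / 2 / √lam := by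
      rw [hκdef, div_eq_div_iff hlam.ne' hsq.ne']; linarith
    have e3 : 1 ≤ 1 / √lam := by
      rw [le_div_iff₀ hsq]; linarith
    have e4 : 7 / √lam = 4 / √lam + 2 * (1 / 2 / √lam) + 2 * (1 / √lam) := by ring
    rw [e1, e2, e4]; linarith
  refine (Finset.sum_le_sum fun k _ => hclass k).trans ?_
  rw [Finset.sum_const, nsmul_eq_mul, Int.card_Icc]
  have hcount : (((⌊a (N - 1)⌋ + 1 - ⌊a 0⌋).toNat : ℕ) : ℝ) ≤ Lam * N + 2 := by
    have h2 : ⌊a 0⌋ ≤ ⌊a (N - 1)⌋ := Int.floor_mono (hmono _ _ (by omega) (by omega))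
    have h3 : (((⌊a (N - 1)⌋ + 1 - ⌊a 0⌋).toNat : ℕ) : ℝ)
        = (⌊a (N - 1)⌋ : ℝ) + 1 - ⌊a 0⌋ := by
      have : (((⌊a (N - 1)⌋ + 1 - ⌊a 0⌋).toNat : ℕ) : ℤ) = ⌊a (N - 1)⌋ + 1 - ⌊a 0⌋ :=
        Int.toNat_of_nonneg (by omega)
      exact_mod_cast congrArg (Int.cast (R := ℝ)) this
    rw [h3]
    have h4 := Int.floor_le (a (N - 1))
    have h5 := Int.lt_floor_add_one (a 0)
    have h6 := hup (N - 1) (by omega)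
    have h7 : ((N - 1 : ℕ) : ℝ) ≤ N := by exact_mod_cast Nat.sub_le _ _
    nlinarith
  calc _ ≤ (Lam * N + 2) * (7 / √lam) := by gcongr
    _ = _ := by ring

/-- The second difference of `x ^ c` lies between the extreme values of the second derivative on
`[x, x + 2]`. -/
lemma second_diff_rpow {c x : ℝ} (hc1 : 1 < c) (hc2 : c < 2) (hx : 0 < x) :
    c * (c - 1) * (x + 2) ^ (c - 2) ≤ (x + 2) ^ c - 2 * (x + 1) ^ c + x ^ c ∧
      (x + 2) ^ c - 2 * (x + 1) ^ c + x ^ c ≤ c * (c - 1) * x ^ (c - 2) := by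
  have hd : ∀ t, 0 < t → HasDerivAt (fun t : ℝ => (t + 1) ^ c - t ^ c)
      (c * (t + 1) ^ (c - 1) - c * t ^ (c - 1)) t := by
    intro t ht
    have h1 : HasDerivAt (fun t : ℝ => (t + 1) ^ c) (c * (t + 1) ^ (c - 1)) t := by
      have := (Real.hasDerivAt_rpow_const (x := t + 1) (p := c)
        (Or.inl (by positivity))).comp_add_const t 1
      simpa using this
    exact h1.sub (Real.hasDerivAt_rpow_const (Or.inl ht.ne'))
  obtain ⟨t, ht, hteq⟩ := exists_hasDerivAt_eq_slope (fun t : ℝ => (t + 1) ^ c - t ^ c)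
    (fun t => c * (t + 1) ^ (c - 1) - c * t ^ (c - 1)) (show x < x + 1 by linarith)
    (fun s hs => (hd s (by linarith [hs.1])).continuousAt.continuousWithinAt)
    (fun s hs => hd s (by linarith [hs.1]))
  have ht0 : 0 < t := by linarith [ht.1]
  obtain ⟨s, hs, hseq⟩ := exists_hasDerivAt_eq_slope (fun s : ℝ => c * s ^ (c - 1))
    (fun s => c * ((c - 1) * s ^ (c - 1 - 1))) (show t < t + 1 by linarith)
    (fun s hs => ((Real.hasDerivAt_rpow_const (Or.inl (by linarith [hs.1] : s ≠ 0))).const_mul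
      c).continuousAt.continuousWithinAt)
    (fun s hs => (Real.hasDerivAt_rpow_const
      (Or.inl (by linarith [hs.1] : s ≠ 0))).const_mul c)
  have hval : (x + 2) ^ c - 2 * (x + 1) ^ c + x ^ c = c * (c - 1) * s ^ (c - 2) := by
    have e1 : x + 1 + 1 = x + 2 := by ring
    have e2 : c - 1 - 1 = c - 2 := by ring
    simp only [add_sub_cancel_left, div_one, e1, e2] at hteq hseq
    linarith
  rw [hval]
  have hs0 : 0 < s := by linarith [hs.1]
  have hcc : 0 < c * (c - 1) := mul_pos (by linarith) (by linarith)
  constructor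
  · refine mul_le_mul_of_nonneg_left ?_ hcc.le
    exact Real.rpow_le_rpow_of_nonpos hs0 (by linarith [hs.2, ht.2]) (by linarith)
  · refine mul_le_mul_of_nonneg_left ?_ hcc.le
    exact Real.rpow_le_rpow_of_nonpos hx (by linarith [hs.1, ht.1]) (by linarith)

/-- The second derivative test for the phase `A n ^ c + B n`. The bound does not involve `B`, which
is what allows congruence conditions to be detected by additive characters. -/
lemma exists_norm_sum_e_pow_le {c R : ℝ} (hc1 : 1 < c) (hc2 : c < 2) (hR : 1 ≤ R) :
    ∃ C : ℝ, 0 < C ∧ ∀ (A B M : ℝ) (a b : ℕ), A ≠ 0 → 1 ≤ M → M ≤ a → (b : ℝ) ≤ R * M →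
      ‖∑ n ∈ Finset.Ico a b, e (A * (n : ℝ) ^ c + B * n)‖
        ≤ C * (√(|A| * M ^ c) + M / √(|A| * M ^ c)) := by
  have hcc : 0 < c * (c - 1) := mul_pos (by linarith) (by linarith)
  set p : ℝ := c * (c - 1) * (R + 2) ^ (c - 2) with hp
  set q : ℝ := c * (c - 1) with hq
  have hp0 : 0 < p := by positivity
  refine ⟨7 * (q * R + 2) / √p, by positivity, ?_⟩
  -- Conjugation reduces to the case `0 < A`.
  suffices main : ∀ (A B M : ℝ) (a b : ℕ), 0 < A → 1 ≤ M → M ≤ a → (b : ℝ) ≤ R * M →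
      ‖∑ n ∈ Finset.Ico a b, e (A * (n : ℝ) ^ c + B * n)‖
        ≤ 7 * (q * R + 2) / √p * (√(|A| * M ^ c) + M / √(|A| * M ^ c)) by
    intro A B M a b hA hM ha hb
    rcases lt_or_gt_of_ne hA with h | h
    · have h1 := main (-A) (-B) M a b (by linarith) hM ha hb
      rw [abs_neg] at h1
      refine le_trans (le_of_eq ?_) h1
      rw [← RCLike.norm_conj, map_sum]
      congr 1
      refine Finset.sum_congr rfl fun n _ => ?_
      rw [← e_neg]; congr 1; ring
    · exact main A B M a b h hM ha hb
  intro A B M a b hA hM ha hb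
  rw [abs_of_pos hA]
  have hM0 : 0 < M := by linarith
  set F := A * M ^ c with hF
  have hF0 : 0 < F := by positivity
  rw [Finset.sum_Ico_eq_sum_range]
  have hFM : F / M ^ 2 = A * M ^ (c - 2) := by
    rw [hF, Real.rpow_sub hM0, Real.rpow_two]; ring
  have hin : ∀ n < b - a, M ≤ ((a + n : ℕ) : ℝ) ∧ ((a + n : ℕ) : ℝ) + 2 ≤ (R + 2) * M := by
    intro n hn
    have h1 : (a : ℝ) ≤ ((a + n : ℕ) : ℝ) := by exact_mod_cast Nat.le_add_right _ _
    have h2 : ((a + n : ℕ) : ℝ) ≤ b := by exact_mod_cast (by omega : a + n ≤ b)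
    exact ⟨by linarith, by nlinarith⟩
  have hdiff : ∀ n : ℕ, (A * ((a + (n + 2) : ℕ) : ℝ) ^ c + B * ((a + (n + 2) : ℕ) : ℝ))
      - 2 * (A * ((a + (n + 1) : ℕ) : ℝ) ^ c + B * ((a + (n + 1) : ℕ) : ℝ))
      + (A * ((a + n : ℕ) : ℝ) ^ c + B * ((a + n : ℕ) : ℝ))
      = A * ((((a + n : ℕ) : ℝ) + 2) ^ c - 2 * (((a + n : ℕ) : ℝ) + 1) ^ c
        + ((a + n : ℕ) : ℝ) ^ c) := by
    intro n
    have e1 : ((a + (n + 2) : ℕ) : ℝ) = ((a + n : ℕ) : ℝ) + 2 := by push_cast; ring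
    have e2 : ((a + (n + 1) : ℕ) : ℝ) = ((a + n : ℕ) : ℝ) + 1 := by push_cast; ring
    rw [e1, e2]; ring
  have hmain := norm_sum_e_le_second_diff (N := b - a)
    (f := fun n => A * ((a + n : ℕ) : ℝ) ^ c + B * ((a + n : ℕ) : ℝ))
    (lam := p * (F / M ^ 2)) (Lam := q * (F / M ^ 2)) (by positivity)
    (by
      intro n hn
      rw [hdiff]
      obtain ⟨h1, h2⟩ := hin n hn
      have h3 := (second_diff_rpow hc1 hc2 (x := ((a + n : ℕ) : ℝ)) (by linarith)).1
      rw [hFM]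
      have h4 : (R + 2) ^ (c - 2) * M ^ (c - 2) ≤ (((a + n : ℕ) : ℝ) + 2) ^ (c - 2) := by
        rw [← Real.mul_rpow (by linarith) hM0.le]
        exact Real.rpow_le_rpow_of_nonpos (by linarith) h2 (by linarith)
      calc p * (A * M ^ (c - 2)) = A * (q * ((R + 2) ^ (c - 2) * M ^ (c - 2))) := by
            rw [hp]; ring
        _ ≤ A * (q * (((a + n : ℕ) : ℝ) + 2) ^ (c - 2)) := by gcongr
        _ ≤ _ := mul_le_mul_of_nonneg_left h3 hA.le)
    (by
      intro n hn
      rw [hdiff]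
      obtain ⟨h1, h2⟩ := hin n hn
      have h3 := (second_diff_rpow hc1 hc2 (x := ((a + n : ℕ) : ℝ)) (by linarith)).2
      rw [hFM]
      have h4 : ((a + n : ℕ) : ℝ) ^ (c - 2) ≤ M ^ (c - 2) :=
        Real.rpow_le_rpow_of_nonpos hM0 h1 (by linarith)
      calc _ ≤ A * (q * ((a + n : ℕ) : ℝ) ^ (c - 2)) := mul_le_mul_of_nonneg_left h3 hA.le
        _ ≤ A * (q * M ^ (c - 2)) := by gcongr
        _ = _ := by ring)
  refine hmain.trans ?_
  have hN : ((b - a : ℕ) : ℝ) ≤ R * M := by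
    have : ((b - a : ℕ) : ℝ) ≤ b := by exact_mod_cast Nat.sub_le _ _
    linarith
  have hsF : 0 < √F := Real.sqrt_pos.2 hF0
  have hsp : 0 < √p := Real.sqrt_pos.2 hp0
  have hs : √(p * (F / M ^ 2)) = √p * (√F / M) := by
    rw [Real.sqrt_mul hp0.le, Real.sqrt_div hF0.le, Real.sqrt_sq hM0.le]
  rw [hs]
  calc 7 * (q * (F / M ^ 2) * ((b - a : ℕ) : ℝ) + 2) / (√p * (√F / M))
      ≤ 7 * (q * (F / M ^ 2) * (R * M) + 2) / (√p * (√F / M)) := by gcongr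
    _ = 7 / √p * (q * R * √F + 2 * (M / √F)) := by
        field_simp
        rw [Real.sq_sqrt hF0.le]
        ring
    _ ≤ 7 / √p * ((q * R + 2) * √F + (q * R + 2) * (M / √F)) := by
        have h1 : 0 ≤ M / √F := by positivity
        have h2 : 0 < q * R := by positivity
        gcongr
        · linarith
        · linarith
    _ = _ := by ring

/-! ### Shifts and correlations -/


/-- Each difference `|a - b|` with `b < H` occurs at most twice. -/
lemma sum_natAbs_sub_le {g : ℕ → ℝ} (hg : ∀ n, 0 ≤ g n) {H a : ℕ} (ha : a < H) :
    ∑ b ∈ Finset.range H, g (Int.natAbs ((a : ℤ) - b))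
      ≤ g 0 + 2 * ∑ i ∈ Finset.range H, g (i + 1) := by
  have h1 : ∑ b ∈ Finset.range a, g (Int.natAbs ((a : ℤ) - b))
      ≤ ∑ i ∈ Finset.range H, g (i + 1) := by
    rw [← Finset.sum_range_reflect]
    calc _ = ∑ j ∈ Finset.range a, g (j + 1) := by
          refine Finset.sum_congr rfl fun j hj => ?_
          rw [Finset.mem_range] at hj
          congr 1; omega
      _ ≤ _ := Finset.sum_le_sum_of_subset_of_nonneg
          (by intro x; simp only [Finset.mem_range]; omega) (fun _ _ _ => hg _)
  have h2 : ∑ b ∈ Finset.Ico (a + 1) H, g (Int.natAbs ((a : ℤ) - b))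
      ≤ ∑ i ∈ Finset.range H, g (i + 1) := by
    rw [Finset.sum_Ico_eq_sum_range]
    calc _ = ∑ j ∈ Finset.range (H - (a + 1)), g (j + 1) := by
          refine Finset.sum_congr rfl fun j hj => ?_
          congr 1; omega
      _ ≤ _ := Finset.sum_le_sum_of_subset_of_nonneg
          (by intro x; simp only [Finset.mem_range]; omega) (fun _ _ _ => hg _)
  have h3 : ∑ b ∈ Finset.range H, g (Int.natAbs ((a : ℤ) - b))
      = ∑ b ∈ Finset.range a, g (Int.natAbs ((a : ℤ) - b)) + g 0
        + ∑ b ∈ Finset.Ico (a + 1) H, g (Int.natAbs ((a : ℤ) - b)) := by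
    rw [← Finset.sum_range_add_sum_Ico _ (show a + 1 ≤ H by omega), Finset.sum_range_succ]
    simp
  linarith

lemma sum_inv_sqrt_le (n : ℕ) : ∑ i ∈ Finset.range n, 1 / √((i + 1 : ℕ) : ℝ) ≤ 2 * √n := by
  induction n with
  | zero => simp
  | succ n ih =>
    rw [Finset.sum_range_succ]
    have h1 : √(n : ℝ) * √n = n := Real.mul_self_sqrt (by positivity)
    have h2 : √((n + 1 : ℕ) : ℝ) * √((n + 1 : ℕ) : ℝ) = n + 1 := by
      rw [Real.mul_self_sqrt (by positivity)]; push_cast; ring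
    have h3 : 0 < √((n + 1 : ℕ) : ℝ) := Real.sqrt_pos.2 (by positivity)
    have h4 : 1 / √((n + 1 : ℕ) : ℝ) ≤ 2 * √((n + 1 : ℕ) : ℝ) - 2 * √n := by
      rw [div_le_iff₀ h3]
      nlinarith [sq_nonneg (√((n + 1 : ℕ) : ℝ) - √n)]
    linarith

/-- Van der Corput's inequality, with the correlations left as a double sum over shifts. -/
lemma norm_sq_sum_le_shift {z : ℕ → ℂ} {N Q : ℕ} (hQ : Q ≤ N)
    (hz : ∀ l, l ∉ Finset.Ico N (2 * N) → z l = 0) :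
    (Q : ℝ) ^ 2 * ‖∑ l ∈ Finset.Ico N (2 * N), z l‖ ^ 2
      ≤ 2 * N * ∑ t ∈ Finset.range (2 * N), ‖∑ q ∈ Finset.range Q, z (t + q)‖ ^ 2 := by
  have hshift : ∀ q ∈ Finset.range Q,
      ∑ t ∈ Finset.range (2 * N), z (t + q) = ∑ l ∈ Finset.Ico N (2 * N), z l := by
    intro q hq
    rw [Finset.mem_range] at hq
    have h1 : ∑ t ∈ Finset.range (2 * N), z (t + q) = ∑ l ∈ Finset.Ico q (2 * N + q), z l := by
      rw [Finset.sum_Ico_eq_sum_range]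
      simp [add_comm]
    rw [h1]
    symm
    refine Finset.sum_subset ?_ fun l _ hl => hz l hl
    intro l
    simp only [Finset.mem_Ico]
    omega
  have hsum : (Q : ℂ) * ∑ l ∈ Finset.Ico N (2 * N), z l
      = ∑ t ∈ Finset.range (2 * N), ∑ q ∈ Finset.range Q, z (t + q) := by
    rw [Finset.sum_comm, Finset.sum_congr rfl hshift]
    simp
  have h2 : (Q : ℝ) ^ 2 * ‖∑ l ∈ Finset.Ico N (2 * N), z l‖ ^ 2
      = ‖∑ t ∈ Finset.range (2 * N), ∑ q ∈ Finset.range Q, z (t + q)‖ ^ 2 := by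
    rw [← hsum, norm_mul, mul_pow, Complex.norm_natCast]
  rw [h2]
  calc _ ≤ (∑ t ∈ Finset.range (2 * N), ‖∑ q ∈ Finset.range Q, z (t + q)‖) ^ 2 := by
        gcongr; exact norm_sum_le _ _
    _ ≤ _ := by
        have := sq_sum_le_card_mul_sum_sq (s := Finset.range (2 * N))
          (f := fun t => ‖∑ q ∈ Finset.range Q, z (t + q)‖)
        simpa using this

lemma rpow_sub_rpow_bounds {c x y N : ℝ} (hc1 : 1 < c) (hc2 : c < 2) (hN : 0 < N) (hx : N ≤ x)
    (hxy : x < y) (hy : y ≤ 2 * N) :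
    N ^ (c - 1) * (y - x) ≤ y ^ c - x ^ c ∧ y ^ c - x ^ c ≤ 4 * (N ^ (c - 1) * (y - x)) := by
  obtain ⟨t, ht, hteq⟩ := exists_hasDerivAt_eq_slope (fun t : ℝ => t ^ c)
    (fun t => c * t ^ (c - 1)) hxy
    (fun s hs => (Real.hasDerivAt_rpow_const
      (Or.inl (by linarith [hs.1] : s ≠ 0))).continuousAt.continuousWithinAt)
    (fun s hs => Real.hasDerivAt_rpow_const (Or.inl (by linarith [hs.1] : s ≠ 0)))
  have hd : 0 < y - x := by linarith
  rw [eq_div_iff hd.ne'] at hteq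
  rw [← hteq]
  have ht1 : N ^ (c - 1) ≤ t ^ (c - 1) :=
    Real.rpow_le_rpow hN.le (by linarith [ht.1]) (by linarith)
  have ht2 : t ^ (c - 1) ≤ 2 * N ^ (c - 1) := by
    calc t ^ (c - 1) ≤ (2 * N) ^ (c - 1) :=
          Real.rpow_le_rpow (by linarith [ht.1]) (by linarith [ht.2]) (by linarith)
      _ = 2 ^ (c - 1) * N ^ (c - 1) := Real.mul_rpow (by norm_num) hN.le
      _ ≤ 2 ^ (1 : ℝ) * N ^ (c - 1) := by
          gcongr
          · norm_num
          · linarith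
      _ = _ := by rw [Real.rpow_one]
  have hNp : 0 < N ^ (c - 1) := by positivity
  constructor
  · refine mul_le_mul_of_nonneg_right ?_ hd.le
    nlinarith
  · rw [← mul_assoc]
    refine mul_le_mul_of_nonneg_right ?_ hd.le
    nlinarith

/-- The correlation, in the smooth variable `m`, of the phases attached to two distinct values of
the other variable: it is again a sum with phase `A m ^ c + B m`. -/
lemma exists_norm_correlation_le {c : ℝ} (hc1 : 1 < c) (hc2 : c < 2) :
    ∃ C : ℝ, 0 < C ∧ ∀ (θ β : ℝ) (M N l l' n₁ n₂ : ℕ), θ ≠ 0 → 1 ≤ M → 1 ≤ N →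
      l ∈ Finset.Ico N (2 * N) → l' ∈ Finset.Ico N (2 * N) → l ≠ l' →
      ‖∑ m ∈ (Finset.Ico M (2 * M)).filter (fun m => (n₁ < m * l ∧ m * l ≤ n₂) ∧
          (n₁ < m * l' ∧ m * l' ≤ n₂)),
        e (θ * ((m * l : ℕ) : ℝ) ^ c + β * (m * l : ℕ))
          * (starRingEnd ℂ) (e (θ * ((m * l' : ℕ) : ℝ) ^ c + β * (m * l' : ℕ)))‖
      ≤ C * (√(|θ| * ((M * N : ℕ) : ℝ) ^ c / N * Int.natAbs ((l : ℤ) - l'))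
          + M / √(|θ| * ((M * N : ℕ) : ℝ) ^ c / N * Int.natAbs ((l : ℤ) - l'))) := by
  obtain ⟨C, hC, hmain⟩ := exists_norm_sum_e_pow_le (R := 2) hc1 hc2 (by norm_num)
  refine ⟨2 * C, by positivity, ?_⟩
  intro θ β M N l l' n₁ n₂ hθ hM hN hl hl' hne
  have hM' : (1 : ℝ) ≤ M := by exact_mod_cast hM
  have hN' : (1 : ℝ) ≤ N := by exact_mod_cast hN
  rw [Finset.mem_Ico] at hl hl'
  have hterm : ∀ m : ℕ, e (θ * ((m * l : ℕ) : ℝ) ^ c + β * (m * l : ℕ))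
          * (starRingEnd ℂ) (e (θ * ((m * l' : ℕ) : ℝ) ^ c + β * (m * l' : ℕ)))
      = e (θ * ((l : ℝ) ^ c - (l' : ℝ) ^ c) * (m : ℝ) ^ c + β * ((l : ℝ) - l') * m) := by
    intro m
    rw [← e_neg, ← e_add]
    congr 1
    push_cast
    rw [Real.mul_rpow (by positivity) (by positivity),
      Real.mul_rpow (by positivity) (by positivity)]
    ring
  simp_rw [hterm]
  set k : ℝ := ((Int.natAbs ((l : ℤ) - l') : ℕ) : ℝ) with hk
  have hkabs : k = |(l : ℝ) - l'| := by
    rw [hk, Nat.cast_natAbs]; push_cast; rfl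
  have hk0 : 0 < k := by
    rw [hkabs, abs_pos, sub_ne_zero]; exact_mod_cast hne
  have hdiff : (N : ℝ) ^ (c - 1) * k ≤ |(l : ℝ) ^ c - (l' : ℝ) ^ c| ∧
      |(l : ℝ) ^ c - (l' : ℝ) ^ c| ≤ 4 * ((N : ℝ) ^ (c - 1) * k) := by
    have c1 : (N : ℝ) ≤ l := by exact_mod_cast hl.1
    have c2 : (l : ℝ) ≤ 2 * N := by exact_mod_cast hl.2.le
    have c3 : (N : ℝ) ≤ l' := by exact_mod_cast hl'.1
    have c4 : (l' : ℝ) ≤ 2 * N := by exact_mod_cast hl'.2.le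
    rcases lt_or_gt_of_ne hne with h | h
    · have h' : (l : ℝ) < l' := by exact_mod_cast h
      have hp : (l : ℝ) ^ c ≤ (l' : ℝ) ^ c := Real.rpow_le_rpow (by positivity) h'.le (by linarith)
      have := rpow_sub_rpow_bounds hc1 hc2 (by linarith) c1 h' c4
      rw [hkabs, abs_of_nonpos (by linarith), abs_of_nonpos (by linarith)]
      simpa using this
    · have h' : (l' : ℝ) < l := by exact_mod_cast h
      have hp : (l' : ℝ) ^ c ≤ (l : ℝ) ^ c := Real.rpow_le_rpow (by positivity) h'.le (by linarith)
      have := rpow_sub_rpow_bounds hc1 hc2 (by linarith) c3 h' c2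
      rw [hkabs, abs_of_nonneg (by linarith), abs_of_nonneg (by linarith)]
      exact this
  set F : ℝ := |θ * ((l : ℝ) ^ c - (l' : ℝ) ^ c)| * (M : ℝ) ^ c with hF
  set G : ℝ := |θ| * ((M * N : ℕ) : ℝ) ^ c / N * k with hG
  have hGeq : G = |θ| * (M : ℝ) ^ c * ((N : ℝ) ^ (c - 1) * k) := by
    rw [hG]
    push_cast
    rw [Real.mul_rpow (by positivity) (by positivity), Real.rpow_sub (by linarith), Real.rpow_one]
    ring
  have hθ0 : 0 < |θ| := abs_pos.2 hθ
  have hG0 : 0 < G := by rw [hGeq]; positivity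
  have hFG : G ≤ F := by
    rw [hGeq, hF, abs_mul]
    nlinarith [mul_le_mul_of_nonneg_left hdiff.1 (by positivity : 0 ≤ |θ| * (M : ℝ) ^ c)]
  have hFG2 : F ≤ 4 * G := by
    rw [hGeq, hF, abs_mul]
    nlinarith [mul_le_mul_of_nonneg_left hdiff.2 (by positivity : 0 ≤ |θ| * (M : ℝ) ^ c)]
  have hA : θ * ((l : ℝ) ^ c - (l' : ℝ) ^ c) ≠ 0 := by
    refine mul_ne_zero hθ ?_
    rw [← abs_pos]
    exact lt_of_lt_of_le (by positivity) hdiff.1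
  obtain ⟨x, y, hy, hxy⟩ := exists_filter_eq_Ico (N := 2 * M)
    (fun m => M ≤ m ∧ (n₁ < m * l ∧ m * l ≤ n₂) ∧ (n₁ < m * l' ∧ m * l' ≤ n₂)) (by
      rintro i j k hij hjk - ⟨h1, ⟨h2, h3⟩, h4, h5⟩ ⟨g1, ⟨g2, g3⟩, g4, g5⟩
      have a1 := Nat.mul_le_mul_right l hij
      have a2 := Nat.mul_le_mul_right l hjk
      have a3 := Nat.mul_le_mul_right l' hij
      have a4 := Nat.mul_le_mul_right l' hjk
      refine ⟨by omega, ⟨by omega, by omega⟩, by omega, by omega⟩)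
  have hset : (Finset.Ico M (2 * M)).filter (fun m => (n₁ < m * l ∧ m * l ≤ n₂) ∧
          (n₁ < m * l' ∧ m * l' ≤ n₂)) = Finset.Ico x y := by
    rw [← hxy]
    ext m
    simp only [Finset.mem_filter, Finset.mem_Ico, Finset.mem_range]
    tauto
  rw [hset]
  rcases le_or_gt y x with hyx | hxy'
  · rw [Finset.Ico_eq_empty_of_le hyx, Finset.sum_empty, norm_zero]
    positivity
  · have hx : M ≤ x := by
      have : x ∈ Finset.Ico x y := Finset.mem_Ico.2 ⟨le_rfl, hxy'⟩
      rw [← hxy] at this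
      exact (Finset.mem_filter.1 this).2.1
    refine (hmain _ (β * ((l : ℝ) - l')) M x y hA hM' (by exact_mod_cast hx)
      (by exact_mod_cast hy)).trans ?_
    have s1 : √F ≤ 2 * √G := by
      rw [show (2 : ℝ) = √4 by rw [show (4 : ℝ) = 2 ^ 2 by norm_num]; simp,
        ← Real.sqrt_mul (by norm_num)]
      exact Real.sqrt_le_sqrt hFG2
    have s2 : (M : ℝ) / √F ≤ M / √G := by
      have := Real.sqrt_pos.2 hG0
      gcongr
    have s3 : 0 ≤ (M : ℝ) / √G := by positivity
    rw [mul_comm 2 C, mul_assoc]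
    refine mul_le_mul_of_nonneg_left ?_ hC.le
    linarith

/-! ### Bilinear sums -/

/-- Bilinear sums over a dyadic box: Cauchy's inequality in `m`, van der Corput's inequality with
`Q` shifts in `l`, and the second derivative test for the correlations. The bilinear coefficients
are arbitrary. -/
lemma exists_norm_sq_bilinear_le {c : ℝ} (hc1 : 1 < c) (hc2 : c < 2) :
    ∃ C : ℝ, 0 < C ∧ ∀ (θ β A B : ℝ) (a b : ℕ → ℂ) (M N Q n₁ n₂ : ℕ), θ ≠ 0 → 1 ≤ M →
      1 ≤ Q → Q ≤ N → (∀ m ∈ Finset.Ico M (2 * M), ‖a m‖ ≤ A) →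
      (∀ l ∈ Finset.Ico N (2 * N), ‖b l‖ ≤ B) →
      ‖∑ m ∈ Finset.Ico M (2 * M), ∑ l ∈ Finset.Ico N (2 * N),
        if n₁ < m * l ∧ m * l ≤ n₂ then
          a m * b l * e (θ * ((m * l : ℕ) : ℝ) ^ c + β * (m * l : ℕ)) else 0‖ ^ 2
      ≤ C * (A * B) ^ 2 * ((M * N) ^ 2 / Q
          + M * N ^ 2 * √(|θ| * ((M * N : ℕ) : ℝ) ^ c / N * Q)
          + (M * N) ^ 2 / √(|θ| * ((M * N : ℕ) : ℝ) ^ c / N * Q)) := by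
  classical
  obtain ⟨C, hC, hcorr⟩ := exists_norm_correlation_le hc1 hc2
  refine ⟨4 * (1 + 4 * C), by positivity, ?_⟩
  intro θ β A B a b M N Q n₁ n₂ hθ hM hQ hQN ha hb
  have hN : 1 ≤ N := hQ.trans hQN
  have hM' : (1 : ℝ) ≤ M := by exact_mod_cast hM
  have hN' : (1 : ℝ) ≤ N := by exact_mod_cast hN
  have hQ' : (1 : ℝ) ≤ Q := by exact_mod_cast hQ
  have hA0 : 0 ≤ A := (norm_nonneg _).trans (ha M (Finset.mem_Ico.2 ⟨le_rfl, by omega⟩))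
  have hB0 : 0 ≤ B := (norm_nonneg _).trans (hb N (Finset.mem_Ico.2 ⟨le_rfl, by omega⟩))
  set φ : ℕ → ℂ := fun n => e (θ * (n : ℝ) ^ c + β * n) with hφ
  set V : ℝ := |θ| * ((M * N : ℕ) : ℝ) ^ c / N with hV
  have hV0 : 0 < V := by
    have : 0 < |θ| := abs_pos.2 hθ
    have : 0 < ((M * N : ℕ) : ℝ) := by push_cast; positivity
    positivity
  -- The inner summand is extended by zero so that it can be shifted freely.
  set z : ℕ → ℕ → ℂ := fun m l => if l ∈ Finset.Ico N (2 * N) ∧ (n₁ < m * l ∧ m * l ≤ n₂) then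
    b l * φ (m * l) else 0 with hz
  have hz0 : ∀ m l, l ∉ Finset.Ico N (2 * N) → z m l = 0 := by
    intro m l hl
    simp only [hz]
    rw [if_neg (fun h => hl h.1)]
  set S : ℕ → ℂ := fun m => ∑ l ∈ Finset.Ico N (2 * N), z m l with hS
  have hrew : ∑ m ∈ Finset.Ico M (2 * M), ∑ l ∈ Finset.Ico N (2 * N),
        (if n₁ < m * l ∧ m * l ≤ n₂ then
          a m * b l * e (θ * ((m * l : ℕ) : ℝ) ^ c + β * (m * l : ℕ)) else 0)
      = ∑ m ∈ Finset.Ico M (2 * M), a m * S m := by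
    refine Finset.sum_congr rfl fun m _ => ?_
    simp only [hS]
    rw [Finset.mul_sum]
    refine Finset.sum_congr rfl fun l hl => ?_
    simp only [hz, hl, true_and, hφ]
    split_ifs
    · ring
    · simp
  rw [hrew]
  have hcs : ‖∑ m ∈ Finset.Ico M (2 * M), a m * S m‖ ^ 2
      ≤ A ^ 2 * M * ∑ m ∈ Finset.Ico M (2 * M), ‖S m‖ ^ 2 := by
    calc _ ≤ (∑ m ∈ Finset.Ico M (2 * M), A * ‖S m‖) ^ 2 := by
          gcongr
          refine (norm_sum_le _ _).trans (Finset.sum_le_sum fun m hm => ?_)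
          rw [norm_mul]
          exact mul_le_mul_of_nonneg_right (ha m hm) (norm_nonneg _)
      _ ≤ _ := by
          have := sq_sum_le_card_mul_sum_sq (s := Finset.Ico M (2 * M)) (f := fun m => ‖S m‖)
          rw [← Finset.mul_sum, mul_pow, mul_assoc]
          refine mul_le_mul_of_nonneg_left (this.trans ?_) (by positivity)
          rw [Nat.card_Ico]
          have : 2 * M - M = M := by omega
          rw [this]
  have hK : ∀ l l' : ℕ, ‖∑ m ∈ Finset.Ico M (2 * M), z m l * (starRingEnd ℂ) (z m l')‖
      ≤ B ^ 2 * ((if l = l' then (M : ℝ) else 0)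
        + C * (√(V * Int.natAbs ((l : ℤ) - l')) + M / √(V * Int.natAbs ((l : ℤ) - l')))) := by
    intro l l'
    have hpos : 0 ≤ B ^ 2 * ((if l = l' then (M : ℝ) else 0)
        + C * (√(V * Int.natAbs ((l : ℤ) - l')) + M / √(V * Int.natAbs ((l : ℤ) - l')))) := by
      have : (0 : ℝ) ≤ if l = l' then (M : ℝ) else 0 := by split_ifs <;> positivity
      positivity
    by_cases hl : l ∈ Finset.Ico N (2 * N)
    swap
    · simp only [hz0 _ l hl, zero_mul, Finset.sum_const_zero, norm_zero]; exact hpos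
    by_cases hl' : l' ∈ Finset.Ico N (2 * N)
    swap
    · simp only [hz0 _ l' hl', map_zero, mul_zero, Finset.sum_const_zero, norm_zero]; exact hpos
    by_cases hne : l = l'
    · subst hne
      rw [if_pos rfl]
      have h1 : ‖∑ m ∈ Finset.Ico M (2 * M), z m l * (starRingEnd ℂ) (z m l)‖ ≤ B ^ 2 * M := by
        refine (norm_sum_le _ _).trans ?_
        have h2 : ∀ m ∈ Finset.Ico M (2 * M), ‖z m l * (starRingEnd ℂ) (z m l)‖ ≤ B ^ 2 := by
          intro m _
          have h3 : ‖z m l‖ ≤ B := by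
            simp only [hz, hφ]
            split_ifs
            · rw [norm_mul, norm_e, mul_one]; exact hb l hl
            · simpa using hB0
          rw [norm_mul, RCLike.norm_conj, ← sq]
          gcongr
        refine (Finset.sum_le_card_nsmul _ _ _ h2).trans ?_
        rw [Nat.card_Ico, nsmul_eq_mul, mul_comm, show 2 * M - M = M by omega]
      refine h1.trans ?_
      refine mul_le_mul_of_nonneg_left ?_ (by positivity)
      have : 0 ≤ C * (√(V * Int.natAbs ((l : ℤ) - l)) + M / √(V * Int.natAbs ((l : ℤ) - l))) := by
        positivity
      linarith
    · have h1 : ∑ m ∈ Finset.Ico M (2 * M), z m l * (starRingEnd ℂ) (z m l')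
          = b l * (starRingEnd ℂ) (b l') *
            ∑ m ∈ (Finset.Ico M (2 * M)).filter (fun m => (n₁ < m * l ∧ m * l ≤ n₂) ∧
              (n₁ < m * l' ∧ m * l' ≤ n₂)), φ (m * l) * (starRingEnd ℂ) (φ (m * l')) := by
        rw [Finset.mul_sum, Finset.sum_filter]
        refine Finset.sum_congr rfl fun m _ => ?_
        simp only [hz, hl, hl', true_and]
        by_cases c1 : n₁ < m * l ∧ m * l ≤ n₂ <;> by_cases c2 : n₁ < m * l' ∧ m * l' ≤ n₂ <;>
          simp [c1, c2]
        ring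
      rw [h1, norm_mul, norm_mul, RCLike.norm_conj, if_neg hne, zero_add, sq]
      exact mul_le_mul (mul_le_mul (hb l hl) (hb l' hl') (norm_nonneg _) hB0)
        (hcorr θ β M N l l' n₁ n₂ hθ hM hN hl hl' hne) (norm_nonneg _) (by positivity)
  have hvdc : (Q : ℝ) ^ 2 * ∑ m ∈ Finset.Ico M (2 * M), ‖S m‖ ^ 2
      ≤ 2 * N * ∑ t ∈ Finset.range (2 * N), ∑ q ∈ Finset.range Q, ∑ q' ∈ Finset.range Q,
        ‖∑ m ∈ Finset.Ico M (2 * M), z m (t + q) * (starRingEnd ℂ) (z m (t + q'))‖ := by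
    rw [Finset.mul_sum]
    calc _ ≤ ∑ m ∈ Finset.Ico M (2 * M),
          2 * N * ∑ t ∈ Finset.range (2 * N), ‖∑ q ∈ Finset.range Q, z m (t + q)‖ ^ 2 :=
          Finset.sum_le_sum fun m _ => norm_sq_sum_le_shift hQN (hz0 m)
      _ = 2 * N * ∑ t ∈ Finset.range (2 * N), ∑ m ∈ Finset.Ico M (2 * M),
          ‖∑ q ∈ Finset.range Q, z m (t + q)‖ ^ 2 := by
          rw [← Finset.mul_sum, Finset.sum_comm]
      _ ≤ _ := by
          refine mul_le_mul_of_nonneg_left (Finset.sum_le_sum fun t _ => ?_) (by positivity)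
          have hexp : ((∑ m ∈ Finset.Ico M (2 * M), ‖∑ q ∈ Finset.range Q, z m (t + q)‖ ^ 2 : ℝ)
              : ℂ) = ∑ q ∈ Finset.range Q, ∑ q' ∈ Finset.range Q, ∑ m ∈ Finset.Ico M (2 * M),
                z m (t + q) * (starRingEnd ℂ) (z m (t + q')) := by
            push_cast
            have : ∀ m, ((‖∑ q ∈ Finset.range Q, z m (t + q)‖ : ℝ) : ℂ) ^ 2
                = ∑ q ∈ Finset.range Q, ∑ q' ∈ Finset.range Q,
                  z m (t + q) * (starRingEnd ℂ) (z m (t + q')) := by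
              intro m
              rw [← Complex.mul_conj', map_sum, Finset.sum_mul_sum]
            simp_rw [this]
            rw [Finset.sum_comm]
            refine Finset.sum_congr rfl fun q _ => ?_
            rw [Finset.sum_comm]
          have hnn : 0 ≤ ∑ m ∈ Finset.Ico M (2 * M), ‖∑ q ∈ Finset.range Q, z m (t + q)‖ ^ 2 := by
            positivity
          rw [← abs_of_nonneg hnn, ← Real.norm_eq_abs, ← Complex.norm_real, hexp]
          refine (norm_sum_le _ _).trans (Finset.sum_le_sum fun q _ => ?_)
          exact norm_sum_le _ _
  have hQs : 0 < √(Q : ℝ) := Real.sqrt_pos.2 (by linarith)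
  have hVs : 0 < √V := Real.sqrt_pos.2 hV0
  have hQQ : √(Q : ℝ) * √Q = Q := Real.mul_self_sqrt (by linarith)
  have hrow : ∀ t, ∀ q ∈ Finset.range Q, ∑ q' ∈ Finset.range Q,
        ‖∑ m ∈ Finset.Ico M (2 * M), z m (t + q) * (starRingEnd ℂ) (z m (t + q'))‖
      ≤ B ^ 2 * (M + C * (Q * √(V * Q) + M / √V * (4 * √Q))) := by
    intro t q hq
    have hq' := Finset.mem_range.1 hq
    have hbd : ∀ q' ∈ Finset.range Q,
        ‖∑ m ∈ Finset.Ico M (2 * M), z m (t + q) * (starRingEnd ℂ) (z m (t + q'))‖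
        ≤ B ^ 2 * ((if q = q' then (M : ℝ) else 0)
          + C * (√(V * Q) + M / √V * (1 / √((Int.natAbs ((q : ℤ) - q') : ℕ) : ℝ)))) := by
      intro q' hq2
      rw [Finset.mem_range] at hq2
      refine (hK _ _).trans ?_
      have e1 : ((t + q : ℕ) : ℤ) - ((t + q' : ℕ) : ℤ) = (q : ℤ) - q' := by push_cast; ring
      have e2 : (t + q = t + q') = (q = q') := by simp
      rw [e1]
      simp only [e2]
      have hle : ((Int.natAbs ((q : ℤ) - q') : ℕ) : ℝ) ≤ Q := by
        exact_mod_cast (by omega : Int.natAbs ((q : ℤ) - q') ≤ Q)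
      refine mul_le_mul_of_nonneg_left ?_ (by positivity)
      gcongr ?_ + C * (?_ + ?_)
      · exact le_rfl
      · exact Real.sqrt_le_sqrt (by gcongr)
      · rw [Real.sqrt_mul hV0.le]
        apply le_of_eq
        rw [div_mul_div_comm, mul_one]
    refine (Finset.sum_le_sum hbd).trans ?_
    rw [← Finset.mul_sum]
    refine mul_le_mul_of_nonneg_left ?_ (by positivity)
    rw [Finset.sum_add_distrib, Finset.sum_ite_eq, if_pos hq, ← Finset.mul_sum,
      Finset.sum_add_distrib, ← Finset.mul_sum, Finset.sum_const, Finset.card_range, nsmul_eq_mul]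
    have h4 := sum_natAbs_sub_le (g := fun n : ℕ => 1 / √(n : ℝ)) (fun n => by positivity) hq'
    have h5 := sum_inv_sqrt_le Q
    have h6 : ∑ q' ∈ Finset.range Q, 1 / √((Int.natAbs ((q : ℤ) - q') : ℕ) : ℝ) ≤ 4 * √Q := by
      simp only [Nat.cast_zero, Real.sqrt_zero, div_zero] at h4
      linarith
    gcongr
  have htotal : (Q : ℝ) ^ 2 * ∑ m ∈ Finset.Ico M (2 * M), ‖S m‖ ^ 2
      ≤ 2 * N * (2 * N * (Q * (B ^ 2 * (M + C * (Q * √(V * Q) + M / √V * (4 * √Q)))))) := by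
    refine hvdc.trans ?_
    refine mul_le_mul_of_nonneg_left ?_ (by positivity)
    refine (Finset.sum_le_card_nsmul _ _
      (Q * (B ^ 2 * (M + C * (Q * √(V * Q) + M / √V * (4 * √Q))))) fun t _ => ?_).trans ?_
    · refine (Finset.sum_le_card_nsmul _ _ _ (hrow t)).trans ?_
      rw [Finset.card_range, nsmul_eq_mul]
    · rw [Finset.card_range, nsmul_eq_mul]; push_cast; exact le_rfl
  have hQ0 : (0 : ℝ) < Q := by linarith
  have hfin : ∑ m ∈ Finset.Ico M (2 * M), ‖S m‖ ^ 2
      ≤ 4 * N ^ 2 * B ^ 2 * (M / Q + C * (√(V * Q) + 4 * (M / √(V * Q)))) := by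
    have h1 : (Q : ℝ) ^ 2 * (4 * N ^ 2 * B ^ 2 * (M / Q + C * (√(V * Q) + 4 * (M / √(V * Q)))))
        = 2 * N * (2 * N * (Q * (B ^ 2 * (M + C * (Q * √(V * Q) + M / √V * (4 * √Q)))))) := by
      have h2 : (Q : ℝ) * (M / √(V * Q)) = M / √V * √Q := by
        rw [Real.sqrt_mul hV0.le]
        nth_rewrite 1 [← hQQ]
        field_simp
      have h3 : (Q : ℝ) * (M / Q) = M := by field_simp
      calc _ = 4 * N ^ 2 * B ^ 2 * Q * (Q * (M / Q)
              + C * (Q * √(V * Q) + 4 * (Q * (M / √(V * Q))))) := by ring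
        _ = _ := by rw [h2, h3]; ring
    have h4 : 0 < (Q : ℝ) ^ 2 := by positivity
    rw [← h1] at htotal
    exact le_of_mul_le_mul_left htotal h4
  refine hcs.trans ((mul_le_mul_of_nonneg_left hfin (by positivity)).trans ?_)
  have t1 : 0 ≤ ((M : ℝ) * N) ^ 2 / Q := by positivity
  have t2 : 0 ≤ (M : ℝ) * N ^ 2 * √(V * Q) := by positivity
  have t3 : 0 ≤ ((M : ℝ) * N) ^ 2 / √(V * Q) := by positivity
  calc A ^ 2 * M * (4 * N ^ 2 * B ^ 2 * (M / Q + C * (√(V * Q) + 4 * (M / √(V * Q)))))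
      = 4 * (A * B) ^ 2 * (((M : ℝ) * N) ^ 2 / Q + C * (M * N ^ 2 * √(V * Q))
        + 4 * C * (((M : ℝ) * N) ^ 2 / √(V * Q))) := by ring
    _ ≤ 4 * (A * B) ^ 2 * ((1 + 4 * C) * (((M : ℝ) * N) ^ 2 / Q
          + M * N ^ 2 * √(V * Q) + ((M : ℝ) * N) ^ 2 / √(V * Q))) := by
        refine mul_le_mul_of_nonneg_left ?_ (by positivity)
        nlinarith [mul_nonneg hC.le t1, mul_nonneg hC.le t2, mul_nonneg hC.le t3]
    _ = _ := by ring

/-- A dyadic box with `N ≤ M`, after the choice `Q ≈ min(N, X^(5/4) / T)`, where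
`T = |θ| X ^ c`. -/
lemma exists_norm_box_le {c μ : ℝ} (hc1 : 1 < c) (hc2 : c < 2) (hμ1 : 0 < μ) :
    ∃ C : ℝ, 0 < C ∧ ∀ (X θ β A B : ℝ) (a b : ℕ → ℂ) (M N n₁ n₂ : ℕ), 2 ^ 16 ≤ X →
      X ^ (11 / 32 : ℝ) ≤ |θ| * X ^ c → |θ| * X ^ c ≤ X ^ (38 / 32 : ℝ) → 1 ≤ M → N ≤ M →
      X ^ (1 / 16 : ℝ) ≤ 2 * N → (M : ℝ) * N ≤ X → μ * X ≤ 4 * (M * N) →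
      (∀ m ∈ Finset.Ico M (2 * M), ‖a m‖ ≤ A) →
      (∀ l ∈ Finset.Ico N (2 * N), ‖b l‖ ≤ B) →
      ‖∑ m ∈ Finset.Ico M (2 * M), ∑ l ∈ Finset.Ico N (2 * N),
        if n₁ < m * l ∧ m * l ≤ n₂ then
          a m * b l * e (θ * ((m * l : ℕ) : ℝ) ^ c + β * (m * l : ℕ)) else 0‖
      ≤ C * (A * B) * X ^ (31 / 32 : ℝ) := by
  obtain ⟨C, hC, hmain⟩ := exists_norm_sq_bilinear_le hc1 hc2
  set ν : ℝ := (μ / 4) ^ c with hν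
  have hν0 : 0 < ν := by positivity
  refine ⟨√(C * (5 + 1 / √(ν / 2))), by positivity, ?_⟩
  intro X θ β A B a b M N n₁ n₂ hX hT1 hT2 hM hNM hNX hMN hMN2 ha hb
  have hX0 : 0 < X := by linarith
  have hX1 : 1 ≤ X := by linarith
  have hM' : (1 : ℝ) ≤ M := by exact_mod_cast hM
  have hNM' : (N : ℝ) ≤ M := by exact_mod_cast hNM
  have hX16 : 2 ≤ X ^ (1 / 16 : ℝ) := by
    calc (2 : ℝ) = (2 ^ 16 : ℝ) ^ (1 / 16 : ℝ) := by
          rw [← Real.rpow_natCast, ← Real.rpow_mul (by norm_num)]; norm_num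
      _ ≤ _ := Real.rpow_le_rpow (by norm_num) hX (by norm_num)
  have hN' : (1 : ℝ) ≤ N := by linarith
  have hN1 : 1 ≤ N := by exact_mod_cast hN'
  set T : ℝ := |θ| * X ^ c with hT
  have hT0 : 0 < T := lt_of_lt_of_le (by positivity) hT1
  have hθ : θ ≠ 0 := by
    rintro rfl; simp [hT] at hT0
  have hA0 : 0 ≤ A := (norm_nonneg _).trans (ha M (Finset.mem_Ico.2 ⟨le_rfl, by omega⟩))
  have hB0 : 0 ≤ B := (norm_nonneg _).trans (hb N (Finset.mem_Ico.2 ⟨le_rfl, by omega⟩))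
  -- `Q = ⌊x₀⌋` is as large as possible subject to `Q ≤ N` and to the second term of the bilinear
  -- bound staying below `X ^ (31 / 16)`; the other two terms then cost a factor `X ^ (1 / 16)`.
  set x₀ : ℝ := min (N : ℝ) (X ^ (5 / 4 : ℝ) / T) with hx₀
  have hx₀lo : X ^ (1 / 16 : ℝ) / 2 ≤ x₀ := by
    refine le_min (by linarith) ?_
    have : X ^ (1 / 16 : ℝ) ≤ X ^ (5 / 4 : ℝ) / T := by
      rw [le_div_iff₀ hT0]
      calc _ ≤ X ^ (1 / 16 : ℝ) * X ^ (38 / 32 : ℝ) := by gcongr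
        _ = X ^ (5 / 4 : ℝ) := by rw [← Real.rpow_add hX0]; norm_num
    linarith
  have hx₀1 : 1 ≤ x₀ := by linarith
  set Q : ℕ := ⌊x₀⌋₊ with hQ
  have hQ1 : 1 ≤ Q := Nat.le_floor (by exact_mod_cast hx₀1)
  have hQle : (Q : ℝ) ≤ x₀ := Nat.floor_le (by linarith)
  have hQlo : x₀ / 2 ≤ Q := by
    have h1 := Nat.lt_floor_add_one x₀
    have h2 : (1 : ℝ) ≤ Q := by exact_mod_cast hQ1
    linarith
  have hQ0 : (0 : ℝ) < Q := by linarith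
  have hQN : Q ≤ N := by
    have : (Q : ℝ) ≤ N := hQle.trans (min_le_left _ _)
    exact_mod_cast this
  have hmain' := hmain θ β A B a b M N Q n₁ n₂ hθ hM hQ1 hQN ha hb
  set V : ℝ := |θ| * ((M * N : ℕ) : ℝ) ^ c / N with hV
  have hN0 : (0 : ℝ) < N := by linarith
  have hθ0 : 0 < |θ| := abs_pos.2 hθ
  have hVup : V ≤ T / N := by
    rw [hV, hT]; push_cast; gcongr
  have hVlo : ν * T / N ≤ V := by
    rw [hV]
    refine div_le_div_of_nonneg_right ?_ hN0.le
    rw [hν, hT]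
    calc (μ / 4) ^ c * (|θ| * X ^ c) = |θ| * (μ / 4 * X) ^ c := by
          rw [Real.mul_rpow (by positivity) hX0.le]; ring
      _ ≤ _ := by
          refine mul_le_mul_of_nonneg_left ?_ hθ0.le
          refine Real.rpow_le_rpow (by positivity) ?_ (by linarith)
          push_cast; linarith
  have hNX2 : (N : ℝ) ≤ X ^ (1 / 2 : ℝ) := by
    rw [← Real.sqrt_eq_rpow]
    refine Real.le_sqrt_of_sq_le ?_
    nlinarith
  have hV0 : 0 < V := lt_of_lt_of_le (by positivity) hVlo
  have hVQup : V * Q ≤ X ^ (5 / 4 : ℝ) / N := by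
    calc V * Q ≤ T / N * (X ^ (5 / 4 : ℝ) / T) :=
          mul_le_mul hVup (hQle.trans (min_le_right _ _)) hQ0.le (by positivity)
      _ = _ := by field_simp
  have hVQlo : ν / 2 * X ^ (11 / 32 : ℝ) ≤ V * Q := by
    have h1 : X ^ (11 / 32 : ℝ) ≤ T / N * x₀ := by
      rw [hx₀, mul_min_of_nonneg _ _ (by positivity)]
      refine le_min ?_ ?_
      · calc _ ≤ T := hT1
          _ = T / N * N := by field_simp
      · have e1 : T / N * (X ^ (5 / 4 : ℝ) / T) = X ^ (5 / 4 : ℝ) / N := by field_simp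
        rw [e1, le_div_iff₀ hN0]
        calc _ ≤ X ^ (11 / 32 : ℝ) * X ^ (1 / 2 : ℝ) := by gcongr
          _ = X ^ (27 / 32 : ℝ) := by rw [← Real.rpow_add hX0]; norm_num
          _ ≤ _ := Real.rpow_le_rpow_of_exponent_le hX1 (by norm_num)
    calc ν / 2 * X ^ (11 / 32 : ℝ) ≤ ν / 2 * (T / N * x₀) := by gcongr
      _ = ν * T / N * (x₀ / 2) := by ring
      _ ≤ V * Q := mul_le_mul hVlo hQlo (by positivity) hV0.le
  have hMN0 : 0 ≤ (M : ℝ) * N := by positivity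
  have hE : (X ^ (31 / 32 : ℝ)) ^ 2 = X ^ (31 / 16 : ℝ) := by
    rw [← Real.rpow_natCast, ← Real.rpow_mul hX0.le]; norm_num
  have t1 : ((M : ℝ) * N) ^ 2 / Q ≤ 4 * X ^ (31 / 16 : ℝ) := by
    have h1 : X ^ (1 / 16 : ℝ) / 4 ≤ Q := by linarith
    rw [div_le_iff₀ hQ0]
    calc ((M : ℝ) * N) ^ 2 ≤ X ^ 2 := by gcongr
      _ = 4 * X ^ (31 / 16 : ℝ) * (X ^ (1 / 16 : ℝ) / 4) := by
          have : X ^ (31 / 16 : ℝ) * X ^ (1 / 16 : ℝ) = X ^ 2 := by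
            rw [← Real.rpow_add hX0, ← Real.rpow_natCast]; norm_num
          linarith
      _ ≤ _ := by gcongr
  have t2 : (M : ℝ) * N ^ 2 * √(V * Q) ≤ X ^ (31 / 16 : ℝ) := by
    have h1 : (N : ℝ) * √(V * Q) ≤ X ^ (7 / 8 : ℝ) := by
      have h2 : (N : ℝ) * √(V * Q) = √(N ^ 2 * (V * Q)) := by
        rw [Real.sqrt_mul (x := (N : ℝ) ^ 2) (by positivity), Real.sqrt_sq hN0.le]
      rw [h2]
      refine Real.sqrt_le_iff.2 ⟨by positivity, ?_⟩
      calc (N : ℝ) ^ 2 * (V * Q) ≤ N ^ 2 * (X ^ (5 / 4 : ℝ) / N) := by gcongr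
        _ = N * X ^ (5 / 4 : ℝ) := by field_simp
        _ ≤ X ^ (1 / 2 : ℝ) * X ^ (5 / 4 : ℝ) := by gcongr
        _ = (X ^ (7 / 8 : ℝ)) ^ 2 := by
            rw [← Real.rpow_add hX0, ← Real.rpow_natCast, ← Real.rpow_mul hX0.le]; norm_num
    calc (M : ℝ) * N ^ 2 * √(V * Q) = (M * N) * (N * √(V * Q)) := by ring
      _ ≤ X * X ^ (7 / 8 : ℝ) := by gcongr
      _ = X ^ (15 / 8 : ℝ) := by
          nth_rewrite 1 [← Real.rpow_one X]
          rw [← Real.rpow_add hX0]; norm_num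
      _ ≤ _ := Real.rpow_le_rpow_of_exponent_le hX1 (by norm_num)
  have t3 : ((M : ℝ) * N) ^ 2 / √(V * Q) ≤ 1 / √(ν / 2) * X ^ (31 / 16 : ℝ) := by
    have h1 : √(ν / 2) * X ^ (1 / 16 : ℝ) ≤ √(V * Q) := by
      refine Real.le_sqrt_of_sq_le ?_
      rw [mul_pow, Real.sq_sqrt (by positivity)]
      refine le_trans ?_ hVQlo
      refine mul_le_mul_of_nonneg_left ?_ (by positivity)
      rw [← Real.rpow_natCast, ← Real.rpow_mul hX0.le]
      exact Real.rpow_le_rpow_of_exponent_le hX1 (by norm_num)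
    have hs : 0 < √(ν / 2) := Real.sqrt_pos.2 (by positivity)
    rw [div_le_iff₀ (Real.sqrt_pos.2 (by positivity))]
    calc ((M : ℝ) * N) ^ 2 ≤ X ^ 2 := by gcongr
      _ = 1 / √(ν / 2) * X ^ (31 / 16 : ℝ) * (√(ν / 2) * X ^ (1 / 16 : ℝ)) := by
          have : X ^ (31 / 16 : ℝ) * X ^ (1 / 16 : ℝ) = X ^ 2 := by
            rw [← Real.rpow_add hX0, ← Real.rpow_natCast]; norm_num
          rw [← this]; field_simp
      _ ≤ _ := by gcongr
  refine (pow_le_pow_iff_left₀ (norm_nonneg _) (by positivity) two_ne_zero).1 ?_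
  refine hmain'.trans ?_
  have hR : (√(C * (5 + 1 / √(ν / 2))) * (A * B) * X ^ (31 / 32 : ℝ)) ^ 2
      = C * (5 + 1 / √(ν / 2)) * (A * B) ^ 2 * X ^ (31 / 16 : ℝ) := by
    rw [mul_pow, mul_pow, Real.sq_sqrt (by positivity), hE]
  rw [hR]
  calc _ ≤ C * (A * B) ^ 2 * (4 * X ^ (31 / 16 : ℝ) + X ^ (31 / 16 : ℝ)
        + 1 / √(ν / 2) * X ^ (31 / 16 : ℝ)) := by gcongr
    _ = _ := by ring

/-- A dyadic box without any assumption on its shape, for the range `μ X < m l ≤ X`. -/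
lemma exists_norm_box_le_of_range {c μ : ℝ} (hc1 : 1 < c) (hc2 : c < 2) (hμ1 : 0 < μ) :
    ∃ C : ℝ, 0 < C ∧ ∀ (X θ β A B : ℝ) (a b : ℕ → ℂ) (M N : ℕ), 2 ^ 16 ≤ X →
      X ^ (11 / 32 : ℝ) ≤ |θ| * X ^ c → |θ| * X ^ c ≤ X ^ (38 / 32 : ℝ) → 1 ≤ M → 1 ≤ N →
      X ^ (1 / 16 : ℝ) ≤ 2 * M → X ^ (1 / 16 : ℝ) ≤ 2 * N →
      (∀ m ∈ Finset.Ico M (2 * M), ‖a m‖ ≤ A) →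
      (∀ l ∈ Finset.Ico N (2 * N), ‖b l‖ ≤ B) →
      ‖∑ m ∈ Finset.Ico M (2 * M), ∑ l ∈ Finset.Ico N (2 * N),
        if ⌊μ * X⌋₊ < m * l ∧ m * l ≤ ⌊X⌋₊ then
          a m * b l * e (θ * ((m * l : ℕ) : ℝ) ^ c + β * (m * l : ℕ)) else 0‖
      ≤ C * (A * B) * X ^ (31 / 32 : ℝ) := by
  obtain ⟨C, hC, hmain⟩ := exists_norm_box_le hc1 hc2 hμ1
  refine ⟨C, hC, ?_⟩
  intro X θ β A B a b M N hX hT1 hT2 hM hN hMX hNX ha hb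
  have hX0 : 0 < X := by linarith
  have hA0 : 0 ≤ A := (norm_nonneg _).trans (ha M (Finset.mem_Ico.2 ⟨le_rfl, by omega⟩))
  have hB0 : 0 ≤ B := (norm_nonneg _).trans (hb N (Finset.mem_Ico.2 ⟨le_rfl, by omega⟩))
  by_cases h1 : (M : ℝ) * N ≤ X
  · by_cases h2 : μ * X ≤ 4 * (M * N)
    · rcases le_total N M with h | h
      · exact hmain X θ β A B a b M N _ _ hX hT1 hT2 hM h hNX h1 h2 ha hb
      · have := hmain X θ β B A b a N M ⌊μ * X⌋₊ ⌊X⌋₊ hX hT1 hT2 hN h hMX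
          (by linarith) (by linarith) hb ha
        rw [Finset.sum_comm, mul_comm A B]
        refine le_of_eq_of_le ?_ this
        congr 1
        refine Finset.sum_congr rfl fun l _ => Finset.sum_congr rfl fun m _ => ?_
        rw [mul_comm m l, mul_comm (a m) (b l)]
    · refine le_of_eq_of_le ?_ (by positivity : 0 ≤ C * (A * B) * X ^ (31 / 32 : ℝ))
      rw [norm_eq_zero]
      refine Finset.sum_eq_zero fun m hm => Finset.sum_eq_zero fun l hl => if_neg ?_
      rintro ⟨h3, -⟩
      rw [Nat.floor_lt (by positivity)] at h3
      obtain ⟨-, hm⟩ := Finset.mem_Ico.1 hm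
      obtain ⟨-, hl⟩ := Finset.mem_Ico.1 hl
      have h4 : m * l ≤ (2 * M) * (2 * N) := Nat.mul_le_mul hm.le hl.le
      have h5 : ((m * l : ℕ) : ℝ) ≤ (2 * M) * (2 * N) := by exact_mod_cast h4
      linarith
  · refine le_of_eq_of_le ?_ (by positivity : 0 ≤ C * (A * B) * X ^ (31 / 32 : ℝ))
    rw [norm_eq_zero]
    refine Finset.sum_eq_zero fun m hm => Finset.sum_eq_zero fun l hl => if_neg ?_
    rintro ⟨-, h3⟩
    rw [Nat.le_floor_iff hX0.le] at h3
    obtain ⟨hm, -⟩ := Finset.mem_Ico.1 hm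
    obtain ⟨hl, -⟩ := Finset.mem_Ico.1 hl
    have h4 : M * N ≤ m * l := Nat.mul_le_mul hm hl
    have h5 : (M : ℝ) * N ≤ ((m * l : ℕ) : ℝ) := by exact_mod_cast h4
    linarith

lemma sum_Ico_dyadic (f : ℕ → ℂ) (J : ℕ) :
    ∑ m ∈ Finset.Ico 1 (2 ^ J), f m
      = ∑ j ∈ Finset.range J, ∑ m ∈ Finset.Ico (2 ^ j) (2 * 2 ^ j), f m := by
  induction J with
  | zero => simp
  | succ J ih =>
    rw [Finset.sum_range_succ, ← ih, ← pow_succ',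
      Finset.sum_Ico_consecutive _ Nat.one_le_two_pow (Nat.pow_le_pow_right two_pos J.le_succ)]

/-- The type II estimate: bilinear sums over `μ X < m l ≤ X` whose coefficients are supported
on `m, l > X ^ (1 / 16)`. -/
lemma exists_norm_typeII_le {c μ : ℝ} (hc1 : 1 < c) (hc2 : c < 2) (hμ1 : 0 < μ) :
    ∃ C : ℝ, 0 < C ∧ ∀ (X θ β A B : ℝ) (a b : ℕ → ℂ) (J : ℕ), 2 ^ 16 ≤ X →
      X ^ (11 / 32 : ℝ) ≤ |θ| * X ^ c → |θ| * X ^ c ≤ X ^ (38 / 32 : ℝ) → 0 ≤ A → 0 ≤ B →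
      (∀ m < 2 ^ J, ‖a m‖ ≤ A) → (∀ l < 2 ^ J, ‖b l‖ ≤ B) →
      (∀ m : ℕ, (m : ℝ) ≤ X ^ (1 / 16 : ℝ) → a m = 0) →
      (∀ l : ℕ, (l : ℝ) ≤ X ^ (1 / 16 : ℝ) → b l = 0) →
      ‖∑ m ∈ Finset.Ico 1 (2 ^ J), ∑ l ∈ Finset.Ico 1 (2 ^ J),
        if ⌊μ * X⌋₊ < m * l ∧ m * l ≤ ⌊X⌋₊ then
          a m * b l * e (θ * ((m * l : ℕ) : ℝ) ^ c + β * (m * l : ℕ)) else 0‖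
      ≤ J ^ 2 * (C * (A * B) * X ^ (31 / 32 : ℝ)) := by
  obtain ⟨C, hC, hmain⟩ := exists_norm_box_le_of_range hc1 hc2 hμ1
  refine ⟨C, hC, ?_⟩
  intro X θ β A B a b J hX hT1 hT2 hA0 hB0 ha hb ha0 hb0
  have hX0 : 0 < X := by linarith
  have key : ∀ j ∈ Finset.range J, ∀ k ∈ Finset.range J,
      ‖∑ m ∈ Finset.Ico (2 ^ j) (2 * 2 ^ j), ∑ l ∈ Finset.Ico (2 ^ k) (2 * 2 ^ k),
        if ⌊μ * X⌋₊ < m * l ∧ m * l ≤ ⌊X⌋₊ then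
          a m * b l * e (θ * ((m * l : ℕ) : ℝ) ^ c + β * (m * l : ℕ)) else 0‖
      ≤ C * (A * B) * X ^ (31 / 32 : ℝ) := by
    intro j hj k hk
    have hle : ∀ i ∈ Finset.range J, 2 * 2 ^ i ≤ 2 ^ J := by
      intro i hi
      rw [← pow_succ']
      exact Nat.pow_le_pow_right two_pos (Finset.mem_range.1 hi)
    have hvan : ∀ (i n : ℕ), ¬ X ^ (1 / 16 : ℝ) ≤ 2 * ((2 ^ i : ℕ) : ℝ) →
        n ∈ Finset.Ico (2 ^ i) (2 * 2 ^ i) → (n : ℝ) ≤ X ^ (1 / 16 : ℝ) := by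
      intro i n h hn
      have h1 : (n : ℝ) ≤ 2 * ((2 ^ i : ℕ) : ℝ) := by
        exact_mod_cast (Finset.mem_Ico.1 hn).2.le
      linarith
    by_cases h1 : X ^ (1 / 16 : ℝ) ≤ 2 * ((2 ^ j : ℕ) : ℝ)
    · by_cases h2 : X ^ (1 / 16 : ℝ) ≤ 2 * ((2 ^ k : ℕ) : ℝ)
      · exact hmain X θ β A B a b _ _ hX hT1 hT2 Nat.one_le_two_pow Nat.one_le_two_pow h1 h2
          (fun m hm => ha m ((Finset.mem_Ico.1 hm).2.trans_le (hle j hj)))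
          (fun m hm => hb m ((Finset.mem_Ico.1 hm).2.trans_le (hle k hk)))
      · refine le_of_eq_of_le ?_ (by positivity : 0 ≤ C * (A * B) * X ^ (31 / 32 : ℝ))
        rw [norm_eq_zero]
        refine Finset.sum_eq_zero fun m hm => Finset.sum_eq_zero fun l hl => ?_
        simp [hb0 l (hvan k l h2 hl)]
    · refine le_of_eq_of_le ?_ (by positivity : 0 ≤ C * (A * B) * X ^ (31 / 32 : ℝ))
      rw [norm_eq_zero]
      refine Finset.sum_eq_zero fun m hm => Finset.sum_eq_zero fun l hl => ?_
      simp [ha0 m (hvan j m h1 hm)]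
  rw [sum_Ico_dyadic]
  calc _ = ‖∑ j ∈ Finset.range J, ∑ k ∈ Finset.range J,
        ∑ m ∈ Finset.Ico (2 ^ j) (2 * 2 ^ j), ∑ l ∈ Finset.Ico (2 ^ k) (2 * 2 ^ k),
        if ⌊μ * X⌋₊ < m * l ∧ m * l ≤ ⌊X⌋₊ then
          a m * b l * e (θ * ((m * l : ℕ) : ℝ) ^ c + β * (m * l : ℕ)) else 0‖ := by
        congr 1
        refine Finset.sum_congr rfl fun j _ => ?_
        refine Eq.trans ?_ Finset.sum_comm
        refine Finset.sum_congr rfl fun m _ => ?_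
        rw [sum_Ico_dyadic]
    _ ≤ ∑ j ∈ Finset.range J, ∑ k ∈ Finset.range J, C * (A * B) * X ^ (31 / 32 : ℝ) := by
        refine (norm_sum_le _ _).trans (Finset.sum_le_sum fun j hj => ?_)
        exact (norm_sum_le _ _).trans (Finset.sum_le_sum fun k hk => key j hj k hk)
    _ = _ := by simp; ring

/-! ### Type I sums -/

/-- The inner sum of a type I sum, for a fixed `m`. The upper end `k` is free in view of partial
summation. The exponent is `53 / 64`, the maximum of `19 / 32` and `1 - 11 / 64`. -/
lemma exists_norm_typeI_inner_le {c μ : ℝ} (hc1 : 1 < c) (hc2 : c < 2) (hμ1 : 0 < μ)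
    (hμ2 : μ < 1) :
    ∃ C : ℝ, 0 < C ∧ ∀ (X θ β : ℝ) (m k : ℕ), 2 ^ 16 ≤ X →
      X ^ (11 / 32 : ℝ) ≤ |θ| * X ^ c → |θ| * X ^ c ≤ X ^ (38 / 32 : ℝ) → 1 ≤ m →
      (m : ℝ) ≤ μ * X → k ≤ ⌊X⌋₊ / m + 1 →
      ‖∑ l ∈ Finset.Ico (⌊μ * X⌋₊ / m + 1) k,
        e (θ * ((m * l : ℕ) : ℝ) ^ c + β * (m * l : ℕ))‖ ≤ C * X ^ (53 / 64 : ℝ) := by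
  have hR : 1 ≤ 2 / μ := by rw [le_div_iff₀ hμ1]; linarith
  obtain ⟨C, hC, hmain⟩ := exists_norm_sum_e_pow_le hc1 hc2 hR
  set ν : ℝ := μ ^ c with hν
  have hν0 : 0 < ν := by positivity
  refine ⟨C * (√ν + μ / √ν), by positivity, ?_⟩
  intro X θ β m k hX hT1 hT2 hm hmX hk
  have hX0 : 0 < X := by linarith
  have hX1 : 1 ≤ X := by linarith
  have hm0 : (0 : ℝ) < m := by exact_mod_cast hm
  set T : ℝ := |θ| * X ^ c with hT
  have hT0 : 0 < T := lt_of_lt_of_le (by positivity) hT1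
  have hθ : θ ≠ 0 := by
    rintro rfl; simp [hT] at hT0
  have hlo : μ * X / m ≤ ((⌊μ * X⌋₊ / m + 1 : ℕ) : ℝ) := by
    rw [div_le_iff₀ hm0]
    have h1 : ⌊μ * X⌋₊ < (⌊μ * X⌋₊ / m + 1) * m := by
      rw [mul_comm _ m]
      exact Nat.lt_mul_div_succ _ hm
    rw [Nat.floor_lt (by positivity)] at h1
    push_cast at h1 ⊢
    exact h1.le
  have hup : (k : ℝ) ≤ 2 / μ * (μ * X / m) := by
    have h1 : (k : ℝ) ≤ ((⌊X⌋₊ / m : ℕ) : ℝ) + 1 := by exact_mod_cast hk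
    have h2 : ((⌊X⌋₊ / m : ℕ) : ℝ) ≤ X / m :=
      Nat.cast_div_le.trans (div_le_div_of_nonneg_right (Nat.floor_le hX0.le) hm0.le)
    have h3 : 1 ≤ X / m := by
      rw [le_div_iff₀ hm0]; nlinarith
    calc (k : ℝ) ≤ 2 * (X / m) := by linarith
      _ = _ := by field_simp
  have h1M : 1 ≤ μ * X / m := by rw [le_div_iff₀ hm0]; linarith
  have hAne : θ * (m : ℝ) ^ c ≠ 0 := mul_ne_zero hθ (by positivity)
  have hres := hmain (θ * (m : ℝ) ^ c) (β * m) (μ * X / m) _ k hAne h1M hlo hup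
  have hTM : |θ * (m : ℝ) ^ c| * (μ * X / m) ^ c = ν * T := by
    rw [abs_mul, abs_of_nonneg (by positivity : 0 ≤ (m : ℝ) ^ c),
      Real.div_rpow (by positivity) hm0.le, Real.mul_rpow hμ1.le hX0.le, hν, hT]
    field_simp
  rw [hTM] at hres
  have hsum : ∑ l ∈ Finset.Ico (⌊μ * X⌋₊ / m + 1) k,
        e (θ * ((m * l : ℕ) : ℝ) ^ c + β * (m * l : ℕ))
      = ∑ n ∈ Finset.Ico (⌊μ * X⌋₊ / m + 1) k, e (θ * (m : ℝ) ^ c * (n : ℝ) ^ c + β * m * n) := by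
    refine Finset.sum_congr rfl fun l _ => ?_
    push_cast
    rw [Real.mul_rpow hm0.le (Nat.cast_nonneg l)]
    congr 1; ring
  rw [hsum]
  refine hres.trans ?_
  have hsT : √T ≤ X ^ (53 / 64 : ℝ) := by
    refine Real.sqrt_le_iff.2 ⟨by positivity, hT2.trans ?_⟩
    rw [← Real.rpow_natCast, ← Real.rpow_mul hX0.le]
    exact Real.rpow_le_rpow_of_exponent_le hX1 (by norm_num)
  have hsT' : X ^ (11 / 64 : ℝ) ≤ √T := by
    refine Real.le_sqrt_of_sq_le (le_trans ?_ hT1)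
    rw [← Real.rpow_natCast, ← Real.rpow_mul hX0.le]
    exact Real.rpow_le_rpow_of_exponent_le hX1 (by norm_num)
  have hXT : X / √T ≤ X ^ (53 / 64 : ℝ) := by
    rw [div_le_iff₀ (Real.sqrt_pos.2 hT0)]
    calc X = X ^ (53 / 64 : ℝ) * X ^ (11 / 64 : ℝ) := by
          rw [← Real.rpow_add hX0]; norm_num
      _ ≤ _ := by gcongr
  have hm1 : (1 : ℝ) ≤ m := by exact_mod_cast hm
  have hdm : μ * X / m ≤ μ * X := div_le_self (by positivity) hm1
  rw [Real.sqrt_mul hν0.le]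
  have hsν : 0 < √ν := Real.sqrt_pos.2 hν0
  have hsT0 : 0 < √T := Real.sqrt_pos.2 hT0
  calc C * (√ν * √T + μ * X / m / (√ν * √T)) ≤ C * (√ν * √T + μ * X / (√ν * √T)) := by gcongr
    _ = C * (√ν * √T + μ / √ν * (X / √T)) := by field_simp
    _ ≤ C * (√ν * X ^ (53 / 64 : ℝ) + μ / √ν * X ^ (53 / 64 : ℝ)) := by gcongr
    _ = _ := by ring

/-- The type I estimate: a monotone weight on the long variable, and coefficients
supported on `m ≤ X ^ (1 / 8)`. -/
lemma exists_norm_typeI_le {c μ : ℝ} (hc1 : 1 < c) (hc2 : c < 2) (hμ1 : 0 < μ)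
    (hμ2 : μ < 1) :
    ∃ C : ℝ, 0 < C ∧ ∀ (X θ β F G : ℝ) (f w : ℕ → ℝ) (K : ℕ), 2 ^ 16 ≤ X →
      X ^ (1 / 8 : ℝ) ≤ μ * X →
      X ^ (11 / 32 : ℝ) ≤ |θ| * X ^ c → |θ| * X ^ c ≤ X ^ (38 / 32 : ℝ) → 0 ≤ F → 0 ≤ G →
      ⌊X⌋₊ < K →
      (∀ m, |f m| ≤ F) → (∀ m : ℕ, X ^ (1 / 8 : ℝ) < m → f m = 0) →
      (∀ l, 1 ≤ l → w l ≤ w (l + 1)) → (∀ l, 1 ≤ l → l ≤ ⌊X⌋₊ → |w l| ≤ G) →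
      ‖∑ m ∈ Finset.Ico 1 K, ∑ l ∈ Finset.Ico 1 K,
        if ⌊μ * X⌋₊ < m * l ∧ m * l ≤ ⌊X⌋₊ then
          (f m : ℂ) * (w l : ℂ) * e (θ * ((m * l : ℕ) : ℝ) ^ c + β * (m * l : ℕ)) else 0‖
      ≤ C * (F * G) * X ^ (31 / 32 : ℝ) := by
  obtain ⟨C, hC, hmain⟩ := exists_norm_typeI_inner_le hc1 hc2 hμ1 hμ2
  refine ⟨3 * C, by positivity, ?_⟩
  intro X θ β F G f w K hX hμX hT1 hT2 hF hG hK hf hf0 hw hwG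
  have hX0 : 0 < X := by linarith
  have hX1 : 1 ≤ X := by linarith
  have key : ∀ m ∈ Finset.Ico 1 K, ‖∑ l ∈ Finset.Ico 1 K,
        if ⌊μ * X⌋₊ < m * l ∧ m * l ≤ ⌊X⌋₊ then
          (f m : ℂ) * (w l : ℂ) * e (θ * ((m * l : ℕ) : ℝ) ^ c + β * (m * l : ℕ)) else 0‖
      ≤ if (m : ℝ) ≤ X ^ (1 / 8 : ℝ) then F * (3 * (C * X ^ (53 / 64 : ℝ)) * G) else 0 := by
    intro m hm
    have hm1 := (Finset.mem_Ico.1 hm).1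
    split_ifs with hmW
    · have hset : (Finset.Ico 1 K).filter (fun l => ⌊μ * X⌋₊ < m * l ∧ m * l ≤ ⌊X⌋₊)
          = Finset.Ico (⌊μ * X⌋₊ / m + 1) (⌊X⌋₊ / m + 1) := by
        ext l
        simp only [Finset.mem_filter, Finset.mem_Ico]
        have h1 : ⌊μ * X⌋₊ < m * l ↔ ⌊μ * X⌋₊ / m < l := by
          rw [Nat.div_lt_iff_lt_mul hm1, mul_comm m l]
        have h2 : m * l ≤ ⌊X⌋₊ ↔ l ≤ ⌊X⌋₊ / m := by
          rw [Nat.le_div_iff_mul_le hm1, mul_comm m l]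
        rw [h1, h2]
        have h3 : ⌊X⌋₊ / m ≤ ⌊X⌋₊ := Nat.div_le_self _ _
        clear h1 h2
        generalize ⌊X⌋₊ / m = q₂ at *
        generalize ⌊μ * X⌋₊ / m = q₁ at *
        omega
      rw [← Finset.sum_filter, hset]
      simp_rw [mul_assoc (f m : ℂ)]
      rw [← Finset.mul_sum, norm_mul, Complex.norm_real, Real.norm_eq_abs]
      refine mul_le_mul (hf m) ?_ (norm_nonneg _) hF
      have hz : ∀ k ≤ ⌊X⌋₊ / m + 1, _ := fun k hk =>
        hmain X θ β m k hX hT1 hT2 hm1 (hmW.trans hμX) hk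
      have h3 : ⌊X⌋₊ / m ≤ ⌊X⌋₊ := Nat.div_le_self _ _
      have hn1 : 1 ≤ ⌊μ * X⌋₊ / m + 1 := Nat.le_add_left _ _
      generalize ⌊X⌋₊ / m = q₂ at *
      generalize ⌊μ * X⌋₊ / m + 1 = n₀ at *
      rw [Finset.sum_Ico_eq_sum_range]
      refine norm_sum_weight_le (A := C * X ^ (53 / 64 : ℝ)) (B := G)
        (w := fun i => w (n₀ + i)) (by positivity) hG ?_ ?_ ?_
      · left
        intro i _
        exact hw (n₀ + i) (by omega)
      · intro i hi
        exact hwG _ (by omega) (by omega)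
      · intro i hi
        rcases Nat.eq_zero_or_pos i with rfl | hi0
        · simp; positivity
        have := hz (n₀ + i) (by omega)
        rw [Finset.sum_Ico_eq_sum_range] at this
        simpa using this
    · refine le_of_eq ?_
      rw [norm_eq_zero]
      refine Finset.sum_eq_zero fun l _ => ?_
      simp [hf0 m (not_le.1 hmW)]
  refine (norm_sum_le _ _).trans ((Finset.sum_le_sum key).trans ?_)
  rw [← Finset.sum_filter, Finset.sum_const, nsmul_eq_mul]
  have hcard : (((Finset.Ico 1 K).filter (fun m : ℕ => (m : ℝ) ≤ X ^ (1 / 8 : ℝ))).card : ℝ)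
      ≤ X ^ (1 / 8 : ℝ) := by
    have hsub : (Finset.Ico 1 K).filter (fun m : ℕ => (m : ℝ) ≤ X ^ (1 / 8 : ℝ))
        ⊆ Finset.Icc 1 ⌊X ^ (1 / 8 : ℝ)⌋₊ := by
      intro m hm
      obtain ⟨h1, h2⟩ := Finset.mem_filter.1 hm
      exact Finset.mem_Icc.2 ⟨(Finset.mem_Ico.1 h1).1, Nat.le_floor h2⟩
    have h1 := Finset.card_le_card hsub
    rw [Nat.card_Icc, Nat.add_sub_cancel] at h1
    exact (Nat.cast_le.2 h1).trans (Nat.floor_le (by positivity))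
  calc _ ≤ X ^ (1 / 8 : ℝ) * (F * (3 * (C * X ^ (53 / 64 : ℝ)) * G)) := by gcongr
    _ = 3 * C * (F * G) * (X ^ (1 / 8 : ℝ) * X ^ (53 / 64 : ℝ)) := by ring
    _ ≤ 3 * C * (F * G) * X ^ (31 / 32 : ℝ) := by
        rw [← Real.rpow_add hX0]
        refine mul_le_mul_of_nonneg_left ?_ (by positivity)
        exact Real.rpow_le_rpow_of_exponent_le hX1 (by norm_num)

/-! ### Vaughan's identity and the sum over the von Mangoldt function -/

/-- The restriction of an arithmetic function to arguments `n ≤ U`. -/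
noncomputable def truncLow (U : ℝ) (f : ArithmeticFunction ℝ) : ArithmeticFunction ℝ :=
  ⟨fun n => if (n : ℝ) ≤ U then f n else 0, by simp⟩

lemma truncLow_apply (U : ℝ) (f : ArithmeticFunction ℝ) (n : ℕ) :
    truncLow U f n = if (n : ℝ) ≤ U then f n else 0 := rfl

lemma sub_truncLow_apply (U : ℝ) (f : ArithmeticFunction ℝ) (n : ℕ) :
    (f - truncLow U f) n = if (n : ℝ) ≤ U then 0 else f n := by
  rw [sub_eq_add_neg, ArithmeticFunction.add_apply, ArithmeticFunction.neg_apply, truncLow_apply]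
  split_ifs <;> simp

section Vaughan

open ArithmeticFunction ArithmeticFunction.Moebius ArithmeticFunction.zeta

/-- Vaughan's identity, with both truncation parameters equal to `U`. -/
lemma vaughan_identity (U : ℝ) :
    (Λ : ArithmeticFunction ℝ) = truncLow U Λ + truncLow U (μ : ArithmeticFunction ℝ) * log
      - (truncLow U (μ : ArithmeticFunction ℝ) * truncLow U Λ) * (ζ : ArithmeticFunction ℝ)
      + ((μ : ArithmeticFunction ℝ) - truncLow U (μ : ArithmeticFunction ℝ))
        * ((Λ - truncLow U Λ) * (ζ : ArithmeticFunction ℝ)) := by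
  have h1 : (μ : ArithmeticFunction ℝ) * (ζ : ArithmeticFunction ℝ) = 1 :=
    coe_moebius_mul_coe_zeta
  rw [← vonMangoldt_mul_zeta]
  linear_combination (Λ - truncLow U Λ) * (-h1)

/-- Unfolding a Dirichlet convolution over an interval. -/
lemma sum_Ioc_mul_eq (f g : ArithmeticFunction ℝ) (φ : ℕ → ℂ) (n₁ n₂ K : ℕ) (hK : n₂ < K) :
    ∑ n ∈ Finset.Ioc n₁ n₂, (((f * g) n : ℝ) : ℂ) * φ n
      = ∑ m ∈ Finset.Ico 1 K, ∑ l ∈ Finset.Ico 1 K,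
        if n₁ < m * l ∧ m * l ≤ n₂ then (f m : ℂ) * (g l : ℂ) * φ (m * l) else 0 := by
  have h1 : ∀ n ∈ Finset.Ioc n₁ n₂, (((f * g) n : ℝ) : ℂ) * φ n
      = ∑ x ∈ Finset.Ico 1 K ×ˢ Finset.Ico 1 K,
        if x.1 * x.2 = n then (f x.1 : ℂ) * (g x.2 : ℂ) * φ (x.1 * x.2) else 0 := by
    intro n hn
    obtain ⟨hn1, hn2⟩ := Finset.mem_Ioc.1 hn
    have hset : (Finset.Ico 1 K ×ˢ Finset.Ico 1 K).filter (fun x : ℕ × ℕ => x.1 * x.2 = n)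
        = n.divisorsAntidiagonal := by
      ext ⟨x, y⟩
      simp only [Finset.mem_filter, Finset.mem_product, Finset.mem_Ico,
        Nat.mem_divisorsAntidiagonal]
      constructor
      · rintro ⟨-, h⟩
        exact ⟨h, by omega⟩
      · rintro ⟨h, h0⟩
        have hx : 1 ≤ x := Nat.one_le_iff_ne_zero.2 (by rintro rfl; simp at h; omega)
        have hy : 1 ≤ y := Nat.one_le_iff_ne_zero.2 (by rintro rfl; simp at h; omega)
        have h3 : x ≤ n := h ▸ Nat.le_mul_of_pos_right x hy
        have h4 : y ≤ n := h ▸ Nat.le_mul_of_pos_left y hx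
        exact ⟨⟨⟨hx, by omega⟩, hy, by omega⟩, h⟩
    rw [← Finset.sum_filter, hset, ArithmeticFunction.mul_apply]
    push_cast
    rw [Finset.sum_mul]
    refine Finset.sum_congr rfl fun x hx => ?_
    rw [(Nat.mem_divisorsAntidiagonal.1 hx).1]
  rw [Finset.sum_congr rfl h1, Finset.sum_comm, Finset.sum_product]
  refine Finset.sum_congr rfl fun m _ => Finset.sum_congr rfl fun l _ => ?_
  rw [Finset.sum_ite_eq]
  simp only [Finset.mem_Ioc]

lemma abs_truncLow_moebius_le (U : ℝ) (n : ℕ) :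
    |truncLow U (μ : ArithmeticFunction ℝ) n| ≤ 1 := by
  rw [truncLow_apply]
  split_ifs
  · rw [intCoe_apply]; exact_mod_cast abs_moebius_le_one
  · simp

lemma abs_sub_truncLow_moebius_le (U : ℝ) (n : ℕ) :
    |((μ : ArithmeticFunction ℝ) - truncLow U (μ : ArithmeticFunction ℝ)) n| ≤ 1 := by
  rw [sub_truncLow_apply]
  split_ifs
  · simp
  · rw [intCoe_apply]; exact_mod_cast abs_moebius_le_one

lemma abs_truncLow_mul_truncLow_le (U : ℝ) (n : ℕ) :
    |(truncLow U (μ : ArithmeticFunction ℝ) * truncLow U Λ) n| ≤ Real.log n := by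
  rw [← vonMangoldt_sum, ArithmeticFunction.mul_apply,
    Nat.sum_divisorsAntidiagonal' (fun i j => truncLow U (μ : ArithmeticFunction ℝ) i
      * truncLow U Λ j)]
  refine (Finset.abs_sum_le_sum_abs _ _).trans (Finset.sum_le_sum fun d _ => ?_)
  rw [abs_mul]
  have h1 : |truncLow U Λ d| ≤ Λ d := by
    rw [truncLow_apply]
    split_ifs
    · rw [abs_of_nonneg vonMangoldt_nonneg]
    · simp
  calc _ ≤ 1 * Λ d := mul_le_mul (abs_truncLow_moebius_le U _) h1 (abs_nonneg _) zero_le_one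
    _ = _ := one_mul _

lemma truncLow_mul_truncLow_eq_zero {U : ℝ} (hU : 0 ≤ U) (f g : ArithmeticFunction ℝ) (n : ℕ)
    (hn : U * U < n) : (truncLow U f * truncLow U g) n = 0 := by
  rw [ArithmeticFunction.mul_apply]
  refine Finset.sum_eq_zero fun x hx => ?_
  rw [truncLow_apply, truncLow_apply]
  split_ifs with h1 h2 <;> try simp
  exfalso
  have h3 : (n : ℝ) = x.1 * x.2 := by
    rw [← (Nat.mem_divisorsAntidiagonal.1 hx).1]; push_cast; rfl
  have : (x.1 : ℝ) * x.2 ≤ U * U := mul_le_mul h1 h2 (Nat.cast_nonneg _) hU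
  linarith

lemma abs_sub_truncLow_mul_zeta_le (U : ℝ) (n : ℕ) :
    |((Λ - truncLow U Λ) * (ζ : ArithmeticFunction ℝ)) n| ≤ Real.log n := by
  rw [← vonMangoldt_sum, coe_mul_zeta_apply]
  refine (Finset.abs_sum_le_sum_abs _ _).trans (Finset.sum_le_sum fun d _ => ?_)
  rw [sub_truncLow_apply]
  split_ifs
  · simp
  · rw [abs_of_nonneg vonMangoldt_nonneg]

lemma sub_truncLow_mul_zeta_eq_zero (U : ℝ) (n : ℕ) (hn : (n : ℝ) ≤ U) :
    ((Λ - truncLow U Λ) * (ζ : ArithmeticFunction ℝ)) n = 0 := by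
  rw [coe_mul_zeta_apply]
  refine Finset.sum_eq_zero fun d hd => ?_
  rw [sub_truncLow_apply, if_pos]
  refine le_trans ?_ hn
  exact_mod_cast Nat.divisor_le hd

end Vaughan

/-- The exponential sum over the von Mangoldt function, uniformly in the linear phase `β n`:
Vaughan's identity with `U = X ^ (1 / 16)` and the type I and type II estimates. -/
lemma exists_norm_sum_vonMangoldt_le {c μ : ℝ} (hc1 : 1 < c) (hc2 : c < 2) (hμ1 : 0 < μ)
    (hμ2 : μ < 1) :
    ∃ C : ℝ, 0 < C ∧ ∀ (X θ β : ℝ), 2 ^ 16 ≤ X → X ^ (1 / 8 : ℝ) ≤ μ * X →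
      X ^ (11 / 32 : ℝ) ≤ |θ| * X ^ c → |θ| * X ^ c ≤ X ^ (38 / 32 : ℝ) →
      ‖∑ n ∈ Finset.Ioc ⌊μ * X⌋₊ ⌊X⌋₊,
        (ArithmeticFunction.vonMangoldt n : ℂ) * e (θ * (n : ℝ) ^ c + β * n)‖
      ≤ C * Real.log X ^ 3 * X ^ (31 / 32 : ℝ) := by
  obtain ⟨C₁, hC₁, hI⟩ := exists_norm_typeI_le hc1 hc2 hμ1 hμ2
  obtain ⟨C₂, hC₂, hII⟩ := exists_norm_typeII_le hc1 hc2 hμ1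
  refine ⟨2 * C₁ + 18 * C₂, by positivity, ?_⟩
  intro X θ β hX hμX hT1 hT2
  have hX0 : 0 < X := by linarith
  have hX1 : 1 ≤ X := by linarith
  have hlog2 := Real.log_two_gt_d9
  have hlogX : 1 ≤ Real.log X := by
    have h1 : Real.log (2 ^ 16) ≤ Real.log X := Real.log_le_log (by norm_num) hX
    rw [Real.log_pow] at h1
    push_cast at h1
    linarith
  set U : ℝ := X ^ (1 / 16 : ℝ) with hU
  have hU0 : 0 ≤ U := by positivity
  have hUU : U * U = X ^ (1 / 8 : ℝ) := by
    rw [hU, ← Real.rpow_add hX0]; norm_num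
  have hU8 : U ≤ X ^ (1 / 8 : ℝ) := Real.rpow_le_rpow_of_exponent_le hX1 (by norm_num)
  set N : ℕ := ⌊X⌋₊ with hN
  have hN0 : N ≠ 0 := by
    have : 1 ≤ N := Nat.le_floor (by exact_mod_cast hX1)
    omega
  set J : ℕ := Nat.log 2 N + 1 with hJ
  have hNJ : N < 2 ^ J := Nat.lt_pow_succ_log_self one_lt_two N
  have hJ1 : ((2 ^ Nat.log 2 N : ℕ) : ℝ) ≤ X :=
    (Nat.cast_le.2 (Nat.pow_log_le_self 2 hN0)).trans (Nat.floor_le hX0.le)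
  have hJX : ((2 ^ J : ℕ) : ℝ) ≤ 2 * X := by
    rw [hJ, pow_succ']; push_cast at hJ1 ⊢; linarith
  have hJlog : (J : ℝ) ≤ 3 * Real.log X := by
    have h1 := Real.log_le_log (by positivity) hJ1
    push_cast at h1
    rw [Real.log_pow] at h1
    have h2 : (0 : ℝ) ≤ Nat.log 2 N := Nat.cast_nonneg _
    have h3 : (J : ℝ) = Nat.log 2 N + 1 := by rw [hJ]; push_cast; rfl
    rw [h3]
    nlinarith
  set φ : ℕ → ℂ := fun n => e (θ * (n : ℝ) ^ c + β * n) with hφ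
  have hΛ := vaughan_identity U
  set mL := truncLow U (ArithmeticFunction.moebius : ArithmeticFunction ℝ) with hmL
  set mH := (ArithmeticFunction.moebius : ArithmeticFunction ℝ) - mL with hmH
  set vL := truncLow U ArithmeticFunction.vonMangoldt with hvL
  set g := (ArithmeticFunction.vonMangoldt - vL) * (ArithmeticFunction.zeta : ArithmeticFunction ℝ)
    with hg
  have hsplit : ∑ n ∈ Finset.Ioc ⌊μ * X⌋₊ N, (ArithmeticFunction.vonMangoldt n : ℂ) * φ n
      = ∑ n ∈ Finset.Ioc ⌊μ * X⌋₊ N, (((mL * ArithmeticFunction.log) n : ℝ) : ℂ) * φ n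
        - ∑ n ∈ Finset.Ioc ⌊μ * X⌋₊ N,
          ((((mL * vL) * (ArithmeticFunction.zeta : ArithmeticFunction ℝ)) n : ℝ) : ℂ) * φ n
        + ∑ n ∈ Finset.Ioc ⌊μ * X⌋₊ N, (((mH * g) n : ℝ) : ℂ) * φ n := by
    rw [← Finset.sum_sub_distrib, ← Finset.sum_add_distrib]
    refine Finset.sum_congr rfl fun n hn => ?_
    have hn1 := (Finset.mem_Ioc.1 hn).1
    rw [Nat.floor_lt (by positivity)] at hn1
    -- The short von Mangoldt piece does not meet the range `n > μ X`.
    have h0 : vL n = 0 := by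
      rw [hvL, truncLow_apply, if_neg]
      linarith
    have h1 : ArithmeticFunction.vonMangoldt n = (mL * ArithmeticFunction.log) n
        - ((mL * vL) * (ArithmeticFunction.zeta : ArithmeticFunction ℝ)) n + (mH * g) n := by
      conv_lhs => rw [hΛ]
      rw [ArithmeticFunction.add_apply, sub_eq_add_neg, ArithmeticFunction.add_apply,
        ArithmeticFunction.add_apply, ArithmeticFunction.neg_apply, h0]
      ring
    rw [h1]; push_cast; ring
  have b1 : ‖∑ n ∈ Finset.Ioc ⌊μ * X⌋₊ N, (((mL * ArithmeticFunction.log) n : ℝ) : ℂ) * φ n‖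
      ≤ C₁ * (1 * Real.log X) * X ^ (31 / 32 : ℝ) := by
    rw [sum_Ioc_mul_eq _ _ _ _ _ (2 ^ J) hNJ]
    refine hI X θ β 1 (Real.log X) mL ArithmeticFunction.log (2 ^ J) hX hμX hT1 hT2 zero_le_one
      (by linarith) hNJ (abs_truncLow_moebius_le U) ?_ ?_ ?_
    · intro m hm
      rw [hmL, truncLow_apply, if_neg]
      linarith
    · intro l hl
      rw [ArithmeticFunction.log_apply, ArithmeticFunction.log_apply]
      exact Real.log_le_log (by exact_mod_cast hl) (by push_cast; linarith)
    · intro l hl hlN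
      have hl' : (1 : ℝ) ≤ l := by exact_mod_cast hl
      rw [ArithmeticFunction.log_apply, abs_of_nonneg (Real.log_nonneg hl')]
      exact Real.log_le_log (by linarith) ((Nat.le_floor_iff hX0.le).1 hlN)
  have b2 : ‖∑ n ∈ Finset.Ioc ⌊μ * X⌋₊ N,
        ((((mL * vL) * (ArithmeticFunction.zeta : ArithmeticFunction ℝ)) n : ℝ) : ℂ) * φ n‖
      ≤ C₁ * (Real.log X * 1) * X ^ (31 / 32 : ℝ) := by
    rw [sum_Ioc_mul_eq _ _ _ _ _ (2 ^ J) hNJ]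
    refine hI X θ β (Real.log X) 1 (fun m => (mL * vL) m)
      (fun l => (ArithmeticFunction.zeta : ArithmeticFunction ℝ) l) (2 ^ J) hX hμX hT1 hT2
      (by linarith) zero_le_one hNJ ?_ ?_ ?_ ?_
    · intro m
      by_cases hm : U * U < m
      · rw [truncLow_mul_truncLow_eq_zero hU0 _ _ m hm]
        simp; linarith
      · refine (abs_truncLow_mul_truncLow_le U m).trans ?_
        rcases Nat.eq_zero_or_pos m with rfl | hm0
        · simp; linarith
        refine Real.log_le_log (by exact_mod_cast hm0) ?_
        have h8 : X ^ (1 / 8 : ℝ) ≤ X := by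
          nth_rewrite 2 [← Real.rpow_one X]
          exact Real.rpow_le_rpow_of_exponent_le hX1 (by norm_num)
        linarith
    · intro m hm
      exact truncLow_mul_truncLow_eq_zero hU0 _ _ m (by linarith)
    · intro l hl
      simp [ArithmeticFunction.natCoe_apply, ArithmeticFunction.zeta_apply,
        Nat.one_le_iff_ne_zero.1 hl]
    · intro l hl _
      simp [ArithmeticFunction.natCoe_apply, ArithmeticFunction.zeta_apply,
        Nat.one_le_iff_ne_zero.1 hl]
  have b3 : ‖∑ n ∈ Finset.Ioc ⌊μ * X⌋₊ N, (((mH * g) n : ℝ) : ℂ) * φ n‖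
      ≤ J ^ 2 * (C₂ * (1 * (2 * Real.log X)) * X ^ (31 / 32 : ℝ)) := by
    rw [sum_Ioc_mul_eq _ _ _ _ _ (2 ^ J) hNJ]
    refine hII X θ β 1 (2 * Real.log X) (fun m => (mH m : ℂ)) (fun l => (g l : ℂ)) J hX hT1 hT2
      zero_le_one (by linarith) ?_ ?_ ?_ ?_
    · intro m _
      rw [Complex.norm_real, Real.norm_eq_abs]
      exact abs_sub_truncLow_moebius_le U m
    · intro l hl
      rw [Complex.norm_real, Real.norm_eq_abs]
      refine (abs_sub_truncLow_mul_zeta_le U l).trans ?_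
      rcases Nat.eq_zero_or_pos l with rfl | hl0
      · simp; linarith
      have h1 : (l : ℝ) ≤ X * X := by
        have : (l : ℝ) ≤ ((2 ^ J : ℕ) : ℝ) := by exact_mod_cast hl.le
        nlinarith
      have h2 := Real.log_le_log (by exact_mod_cast hl0) h1
      rw [Real.log_mul hX0.ne' hX0.ne'] at h2
      linarith
    · intro m hm
      rw [hmH, sub_truncLow_apply, if_pos hm]; simp
    · intro l hl
      rw [hg, sub_truncLow_mul_zeta_eq_zero U l hl]; simp
  rw [hsplit]
  set Y := X ^ (31 / 32 : ℝ) with hY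
  have hY0 : 0 ≤ Y := by positivity
  have hl3 : Real.log X ≤ Real.log X ^ 3 := by
    nth_rewrite 1 [← pow_one (Real.log X)]
    exact pow_le_pow_right₀ hlogX (by norm_num)
  have b1' : C₁ * (1 * Real.log X) * Y ≤ C₁ * Real.log X ^ 3 * Y := by
    rw [one_mul]; gcongr
  have b2' : C₁ * (Real.log X * 1) * Y ≤ C₁ * Real.log X ^ 3 * Y := by
    rw [mul_one]; gcongr
  have b3' : J ^ 2 * (C₂ * (1 * (2 * Real.log X)) * Y) ≤ 18 * C₂ * Real.log X ^ 3 * Y := by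
    calc _ ≤ (3 * Real.log X) ^ 2 * (C₂ * (1 * (2 * Real.log X)) * Y) := by gcongr
      _ = _ := by ring
  calc _ ≤ ‖∑ n ∈ Finset.Ioc ⌊μ * X⌋₊ N, (((mL * ArithmeticFunction.log) n : ℝ) : ℂ) * φ n‖
        + ‖∑ n ∈ Finset.Ioc ⌊μ * X⌋₊ N,
          ((((mL * vL) * (ArithmeticFunction.zeta : ArithmeticFunction ℝ)) n : ℝ) : ℂ) * φ n‖
        + ‖∑ n ∈ Finset.Ioc ⌊μ * X⌋₊ N, (((mH * g) n : ℝ) : ℂ) * φ n‖ :=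
        (norm_add_le _ _).trans (add_le_add_left (norm_sub_le _ _) _)
    _ ≤ _ := by linarith

/-! ### Fejér approximation and the integer part -/

lemma norm_sq_sum_e_eq (t : ℝ) (H : ℕ) :
    ((‖∑ a ∈ Finset.range H, e (t * a)‖ ^ 2 : ℝ) : ℂ)
      = ∑ a ∈ Finset.range H, ∑ b ∈ Finset.range H, e (t * ((a : ℝ) - b)) := by
  push_cast
  rw [← Complex.mul_conj', map_sum, Finset.sum_mul_sum]
  refine Finset.sum_congr rfl fun a _ => Finset.sum_congr rfl fun b _ => ?_
  rw [← e_neg, ← e_add]; congr 1; ring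

/-- The Fejér kernel of order `H` has constant mean on `K` equidistant nodes. -/
lemma sum_norm_sq_sum_e_eq (y : ℝ) {H K : ℕ} (hK : 0 < K) (hHK : 2 * H ≤ K) :
    ∑ j ∈ Finset.range K, ‖∑ a ∈ Finset.range H, e ((y - j / K) * a)‖ ^ 2 = (K : ℝ) * H := by
  have hK0 : (0 : ℝ) < K := by exact_mod_cast hK
  have h1 : ∀ a ∈ Finset.range H, ∀ b ∈ Finset.range H,
      ∑ j ∈ Finset.range K, e ((y - j / K) * ((a : ℝ) - b)) = if a = b then (K : ℂ) else 0 := by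
    intro a ha b hb
    split_ifs with hab
    · subst hab; simp [e_zero]
    · set s : ℝ := -((a : ℝ) - b) / K with hs
      have h2 : ∀ j : ℕ, e ((y - j / K) * ((a : ℝ) - b)) = e (y * (a - b)) * e s ^ j := by
        intro j
        rw [← e_mul_nat, ← e_add]
        congr 1
        rw [hs]; field_simp; ring
      simp_rw [h2]
      rw [← Finset.mul_sum]
      have hab' : ((a : ℝ) - b) ≠ 0 := sub_ne_zero.2 (by exact_mod_cast hab)
      have hs0 : 0 < |s| := abs_pos.2 (div_ne_zero (neg_ne_zero.2 hab') hK0.ne')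
      have hs2 : |s| ≤ 1 / 2 := by
        rw [hs, abs_div, abs_neg, abs_of_pos hK0, div_le_iff₀ hK0]
        have ha' : (a : ℝ) ≤ H := by exact_mod_cast (Finset.mem_range.1 ha).le
        have hb' : (b : ℝ) ≤ H := by exact_mod_cast (Finset.mem_range.1 hb).le
        have hHK' : 2 * (H : ℝ) ≤ K := by exact_mod_cast hHK
        have : |(a : ℝ) - b| ≤ H := by
          rw [abs_le]; constructor <;> linarith [(Nat.cast_nonneg a : (0 : ℝ) ≤ a),
            (Nat.cast_nonneg b : (0 : ℝ) ≤ b)]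
        linarith
      have hne : e s - 1 ≠ 0 := by
        intro h0
        have := four_mul_le_norm_e_sub_one hs2
        rw [h0, norm_zero] at this
        linarith
      have hpow : e s ^ K = 1 := by
        rw [← e_mul_nat]
        have : s * (K : ℝ) = (((b : ℤ) - a : ℤ) : ℝ) := by
          rw [hs]; push_cast; field_simp; ring
        rw [this, e_int]
      have hgeom : (∑ j ∈ Finset.range K, e s ^ j) * (e s - 1) = 0 := by
        rw [geom_sum_mul, hpow, sub_self]
      rw [(mul_eq_zero.1 hgeom).resolve_right hne, mul_zero]
  have h3 : ((∑ j ∈ Finset.range K, ‖∑ a ∈ Finset.range H, e ((y - j / K) * a)‖ ^ 2 : ℝ) : ℂ)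
      = (K : ℂ) * H := by
    rw [Complex.ofReal_sum]
    simp_rw [norm_sq_sum_e_eq]
    rw [Finset.sum_comm]
    calc _ = ∑ a ∈ Finset.range H, ∑ b ∈ Finset.range H, if a = b then (K : ℂ) else 0 := by
          refine Finset.sum_congr rfl fun a ha => ?_
          rw [Finset.sum_comm]
          exact Finset.sum_congr rfl fun b hb => h1 a ha b hb
      _ = ∑ a ∈ Finset.range H, (K : ℂ) := by
          refine Finset.sum_congr rfl fun a ha => ?_
          rw [Finset.sum_ite_eq, if_pos ha]
      _ = _ := by simp [mul_comm]
  exact_mod_cast h3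

/-- The discrete Fourier coefficient, on `K` equidistant nodes, of `u ↦ e(-αu)` on `[0, 1)` at
the frequency `h`. -/
noncomputable def floorCoeff (α : ℝ) (K : ℕ) (h : ℝ) : ℂ :=
  (1 / K : ℝ) * ∑ j ∈ Finset.range K, e (-((α + h) / K) * j)

/-- The Fejér mean of order `H` built from `floorCoeff`; it approximates `y ↦ e(-α{y})`. -/
noncomputable def floorApprox (α : ℝ) (H K : ℕ) (y : ℝ) : ℂ :=
  (1 / H : ℝ) * ∑ a ∈ Finset.range H, ∑ b ∈ Finset.range H,
    floorCoeff α K ((a : ℝ) - b) * e (y * ((a : ℝ) - b))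

/-- The Fejér mean is an average of the node values against a nonnegative kernel. -/
lemma floorApprox_eq (α : ℝ) {H K : ℕ} (hK : 0 < K) (y : ℝ) :
    floorApprox α H K y = ∑ j ∈ Finset.range K,
      ((1 / (K * H) * ‖∑ a ∈ Finset.range H, e ((y - j / K) * a)‖ ^ 2 : ℝ) : ℂ)
        * e (-α * (j / K)) := by
  have hK0 : (K : ℝ) ≠ 0 := by exact_mod_cast hK.ne'
  have h1 : ∀ j : ℕ, ((1 / (K * H) * ‖∑ a ∈ Finset.range H, e ((y - j / K) * a)‖ ^ 2 : ℝ) : ℂ)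
        * e (-α * (j / K)) = ∑ a ∈ Finset.range H, ∑ b ∈ Finset.range H,
        ((1 / (K * H) : ℝ) : ℂ) * (e ((y - j / K) * ((a : ℝ) - b)) * e (-α * (j / K))) := by
    intro j
    rw [Complex.ofReal_mul, norm_sq_sum_e_eq, mul_assoc, Finset.sum_mul, Finset.mul_sum]
    refine Finset.sum_congr rfl fun a _ => ?_
    rw [Finset.sum_mul, Finset.mul_sum]
  simp_rw [h1]
  rw [Finset.sum_comm, floorApprox, Finset.mul_sum]
  refine Finset.sum_congr rfl fun a _ => ?_
  rw [Finset.sum_comm, Finset.mul_sum]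
  refine Finset.sum_congr rfl fun b _ => ?_
  rw [floorCoeff, Finset.mul_sum, Finset.sum_mul, Finset.mul_sum]
  refine Finset.sum_congr rfl fun j _ => ?_
  have h2 : e ((y - j / K) * ((a : ℝ) - b)) * e (-α * (j / K))
      = e (-((α + (a - b)) / K) * j) * e (y * (a - b)) := by
    rw [← e_add, ← e_add]; congr 1; field_simp; ring
  rw [h2]; push_cast; ring

/-- The pointwise error of the Fejér mean; the second term accounts for the `y` near integers,
where `e(-α{y})` jumps. -/
lemma norm_sub_floorApprox_le {α : ℝ} (hα : |α| ≤ 1 / 2) {H₁ K : ℕ} (hH₁ : 1 ≤ H₁)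
    (hK : 2 * H₁ ^ 3 ≤ K) (y : ℝ) :
    ‖e (-α * Int.fract y) - floorApprox α (H₁ ^ 3) K y‖
      ≤ 129 / H₁ + 8 / H₁ ^ 2 * ‖∑ a ∈ Finset.range H₁, e (y * a)‖ ^ 2 := by
  have hH0 : (0 : ℝ) < H₁ := by exact_mod_cast hH₁
  set H : ℕ := H₁ ^ 3 with hH
  have hHpos : 0 < H := by positivity
  have hHr : (0 : ℝ) < H := by exact_mod_cast hHpos
  have hKpos : 0 < K := by omega
  have hK0 : (0 : ℝ) < K := by exact_mod_cast hKpos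
  set u : ℝ := Int.fract y with hu
  have hu0 : 0 ≤ u := Int.fract_nonneg y
  have hu1 : u < 1 := Int.fract_lt_one y
  have hyu : y = u + ⌊y⌋ := (Int.fract_add_floor y).symm
  set k : ℕ → ℝ := fun j => 1 / (K * H) * ‖∑ a ∈ Finset.range H, e ((y - j / K) * a)‖ ^ 2 with hk
  have hk0 : ∀ j, 0 ≤ k j := fun j => by positivity
  have hksum : ∑ j ∈ Finset.range K, k j = 1 := by
    rw [hk, ← Finset.mul_sum, sum_norm_sq_sum_e_eq y hKpos hK]
    field_simp
  have hdiff : e (-α * u) - floorApprox α H K y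
      = ∑ j ∈ Finset.range K, (k j : ℂ) * (e (-α * u) - e (-α * (j / K))) := by
    rw [floorApprox_eq α hKpos]
    simp_rw [mul_sub]
    rw [Finset.sum_sub_distrib, ← Finset.sum_mul, ← Complex.ofReal_sum, hksum]
    simp [hk]
  have hbase : ‖e (-α * u) - floorApprox α H K y‖
      ≤ ∑ j ∈ Finset.range K, k j * ‖e (-α * u) - e (-α * (j / K))‖ := by
    rw [hdiff]
    refine (norm_sum_le _ _).trans (le_of_eq (Finset.sum_congr rfl fun j _ => ?_))
    rw [norm_mul, Complex.norm_real, Real.norm_eq_abs, abs_of_nonneg (hk0 j)]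
  have htwo : ∀ j : ℕ, ‖e (-α * u) - e (-α * (j / K))‖ ≤ 2 := fun j =>
    (norm_sub_le _ _).trans (by rw [norm_e, norm_e]; norm_num)
  set κ : ℝ := 1 / (16 * H₁) with hκ
  have hκ0 : 0 < κ := by positivity
  by_cases hgood : κ ≤ u ∧ u ≤ 1 - κ
  · refine hbase.trans ?_
    have hterm : ∀ j ∈ Finset.range K, k j * ‖e (-α * u) - e (-α * (j / K))‖
        ≤ k j * (Real.pi * κ) + 2 * (1 / (K * H) * (1 / (2 * κ)) ^ 2) := by
      intro j hj
      have hj0 : (0 : ℝ) ≤ j / K := by positivity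
      have hj1 : (j : ℝ) / K < 1 := by
        rw [div_lt_one hK0]; exact_mod_cast Finset.mem_range.1 hj
      by_cases hnear : |u - j / K| ≤ κ
      · have h1 : ‖e (-α * u) - e (-α * (j / K))‖ ≤ Real.pi * κ := by
          have h2 : e (-α * u) - e (-α * (j / K))
              = e (-α * (j / K)) * (e (-α * (u - j / K)) - 1) := by
            rw [mul_sub, mul_one, ← e_add]; congr 2; ring
          rw [h2, norm_mul, norm_e, one_mul]
          refine (norm_e_sub_one_le _).trans ?_
          rw [abs_mul, abs_neg]
          calc 2 * Real.pi * (|α| * |u - j / K|) ≤ 2 * Real.pi * (1 / 2 * κ) := by gcongr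
            _ = _ := by ring
        have := mul_le_mul_of_nonneg_left h1 (hk0 j)
        have h3 : 0 ≤ 2 * (1 / (K * H : ℝ) * (1 / (2 * κ)) ^ 2) := by positivity
        linarith
      · have hfar := (not_le.1 hnear).le
        have h4 : 4 * κ ≤ ‖e (y - j / K) - 1‖ := by
          have h5 : e (y - j / K) = e (u - j / K) := by
            rw [← e_add_int (u - j / K) ⌊y⌋]; congr 1; linarith
          rw [h5]
          rcases le_or_gt |u - j / K| (1 / 2) with h6 | h6
          · exact le_trans (by linarith) (four_mul_le_norm_e_sub_one h6)
          -- Since `|u - j / K| < 1`, a shift by `±1` brings the argument into `[-1/2, 1/2]`.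
          · rcases abs_cases (u - j / K) with ⟨h7, h8⟩ | ⟨h7, h8⟩
            · rw [h7] at h6
              have h9 : |u - j / K - 1| = 1 - (u - j / K) := by
                rw [abs_of_nonpos (by linarith)]; ring
              have h10 := four_mul_le_norm_e_sub_one (t := u - j / K - 1) (by rw [h9]; linarith)
              rw [h9] at h10
              have h11 : e (u - j / K - 1) = e (u - j / K) := by
                rw [← e_add_int (u - j / K - 1) 1]; congr 1; push_cast; ring
              rw [h11] at h10
              linarith [hgood.2]
            · rw [h7] at h6
              have h9 : |u - j / K + 1| = 1 + (u - j / K) := by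
                rw [abs_of_nonneg (by linarith)]; ring
              have h10 := four_mul_le_norm_e_sub_one (t := u - j / K + 1) (by rw [h9]; linarith)
              rw [h9] at h10
              have h11 : e (u - j / K + 1) = e (u - j / K) := by
                rw [← e_add_int (u - j / K) 1]; congr 1; push_cast; ring
              rw [h11] at h10
              linarith [hgood.1]
        have h12 := norm_sum_e_mul_le (by positivity) h4 H
        have h13 : (2 : ℝ) / (4 * κ) = 1 / (2 * κ) := by field_simp; norm_num
        rw [h13] at h12
        have h14 : k j ≤ 1 / (K * H) * (1 / (2 * κ)) ^ 2 := by
          rw [hk]; dsimp only; gcongr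
        have h15 : 0 ≤ k j * (Real.pi * κ) := mul_nonneg (hk0 j) (by positivity)
        have h16 := mul_le_mul h14 (htwo j) (norm_nonneg _) (by positivity)
        linarith
    refine (Finset.sum_le_sum hterm).trans ?_
    rw [Finset.sum_add_distrib, ← Finset.sum_mul, hksum, Finset.sum_const, Finset.card_range,
      nsmul_eq_mul]
    have h17 : (K : ℝ) * (2 * (1 / (K * H) * (1 / (2 * κ)) ^ 2)) = 128 / H₁ := by
      rw [hH, hκ]; push_cast; field_simp; norm_num
    have h18 : Real.pi * κ ≤ 1 / H₁ := by
      rw [hκ, mul_one_div, div_le_div_iff₀ (by positivity) hH0]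
      nlinarith [Real.pi_lt_four]
    have h19 : (129 : ℝ) / H₁ = 128 / H₁ + 1 / H₁ := by ring
    have h20 : 0 ≤ 8 / (H₁ : ℝ) ^ 2 * ‖∑ a ∈ Finset.range H₁, e (y * a)‖ ^ 2 := by positivity
    rw [h17, h19]
    linarith
  · have h1 : ‖e (-α * u) - floorApprox α H K y‖ ≤ 2 := by
      refine hbase.trans ?_
      calc _ ≤ ∑ j ∈ Finset.range K, k j * 2 :=
            Finset.sum_le_sum fun j _ => mul_le_mul_of_nonneg_left (htwo j) (hk0 j)
        _ = 2 := by rw [← Finset.sum_mul, hksum, one_mul]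
    obtain ⟨t, z, hyt, ht⟩ : ∃ (t : ℝ) (z : ℤ), y = t + z ∧ |t| ≤ κ := by
      rcases not_and_or.1 hgood with h | h
      · exact ⟨u, ⌊y⌋, hyu, by rw [abs_of_nonneg hu0]; linarith⟩
      · refine ⟨u - 1, ⌊y⌋ + 1, by push_cast; linarith, ?_⟩
        rw [abs_of_nonpos (by linarith)]; linarith
    have h2 : ‖∑ a ∈ Finset.range H₁, e (y * a) - H₁‖ ≤ H₁ / 2 := by
      have h3 : ∑ a ∈ Finset.range H₁, e (y * a) - (H₁ : ℂ)
          = ∑ a ∈ Finset.range H₁, (e (y * a) - 1) := by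
        rw [Finset.sum_sub_distrib]; simp
      rw [h3]
      calc _ ≤ ∑ a ∈ Finset.range H₁, (1 / 2 : ℝ) := by
            refine (norm_sum_le _ _).trans (Finset.sum_le_sum fun a ha => ?_)
            have h4 : e (y * a) = e (t * a) := by
              rw [← e_add_int (t * a) (z * a), hyt]; congr 1; push_cast; ring
            rw [h4]
            refine (norm_e_sub_one_le _).trans ?_
            have ha' : (a : ℝ) ≤ H₁ := by exact_mod_cast (Finset.mem_range.1 ha).le
            rw [abs_mul, abs_of_nonneg (Nat.cast_nonneg a : (0 : ℝ) ≤ a)]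
            calc 2 * Real.pi * (|t| * a) ≤ 2 * Real.pi * (κ * H₁) := by gcongr
              _ = Real.pi / 8 := by rw [hκ]; field_simp; norm_num
              _ ≤ 1 / 2 := by linarith [Real.pi_lt_four]
        _ = _ := by simp; ring
    have h5 : (H₁ : ℝ) / 2 ≤ ‖∑ a ∈ Finset.range H₁, e (y * a)‖ := by
      have h6 := norm_sub_le (∑ a ∈ Finset.range H₁, e (y * a))
        (∑ a ∈ Finset.range H₁, e (y * a) - H₁)
      rw [sub_sub_cancel, Complex.norm_natCast] at h6
      linarith
    have h8 : 2 ≤ 8 / (H₁ : ℝ) ^ 2 * ‖∑ a ∈ Finset.range H₁, e (y * a)‖ ^ 2 := by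
      calc (2 : ℝ) = 8 / (H₁ : ℝ) ^ 2 * (H₁ / 2) ^ 2 := by field_simp; norm_num
        _ ≤ _ := by gcongr
    have h9 : (0 : ℝ) ≤ 129 / H₁ := by positivity
    linarith

lemma norm_floorCoeff_le_one (α : ℝ) {K : ℕ} (hK : 0 < K) (h : ℝ) : ‖floorCoeff α K h‖ ≤ 1 := by
  have hK0 : (0 : ℝ) < K := by exact_mod_cast hK
  rw [floorCoeff, norm_mul, Complex.norm_real, Real.norm_eq_abs, abs_of_pos (by positivity)]
  have h1 : ‖∑ j ∈ Finset.range K, e (-((α + h) / K) * j)‖ ≤ K := by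
    refine (norm_sum_le _ _).trans ?_
    simp [norm_e]
  calc 1 / (K : ℝ) * _ ≤ 1 / K * K := by gcongr
    _ = 1 := by field_simp

lemma norm_floorCoeff_le {α : ℝ} (hα : |α| ≤ 1 / 2) {K : ℕ} {h : ℤ} (hh : h ≠ 0)
    (hK : 2 * |(h : ℝ)| + 1 ≤ K) : ‖floorCoeff α K h‖ ≤ 1 / |(h : ℝ)| := by
  have hh1 : (1 : ℝ) ≤ |(h : ℝ)| := by exact_mod_cast Int.one_le_abs hh
  have hK0 : (0 : ℝ) < K := by linarith
  have hlo : |(h : ℝ)| / 2 ≤ |α + h| := by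
    have := abs_sub_abs_le_abs_sub (h : ℝ) (-α)
    rw [abs_neg, sub_neg_eq_add, add_comm (h : ℝ) α] at this
    linarith
  have hup : |α + h| ≤ |(h : ℝ)| + 1 / 2 := (abs_add_le _ _).trans (by linarith)
  have h1 : |-((α + h) / K)| ≤ 1 / 2 := by
    rw [abs_neg, abs_div, abs_of_pos hK0, div_le_iff₀ hK0]; linarith
  have h2 := four_mul_le_norm_e_sub_one h1
  have h3 : 2 * |(h : ℝ)| / K ≤ ‖e (-((α + h) / K)) - 1‖ := by
    refine le_trans ?_ h2
    rw [abs_neg, abs_div, abs_of_pos hK0, ← mul_div_assoc]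
    exact div_le_div_of_nonneg_right (by linarith) hK0.le
  have h4 := norm_sum_e_mul_le (by positivity) h3 K
  rw [floorCoeff, norm_mul, Complex.norm_real, Real.norm_eq_abs, abs_of_pos (by positivity)]
  calc 1 / (K : ℝ) * _ ≤ 1 / K * (2 / (2 * |(h : ℝ)| / K)) := by gcongr
    _ = _ := by field_simp

/-- The total mass of the Fourier coefficients grows only logarithmically. -/
lemma sum_norm_floorCoeff_le {α : ℝ} (hα : |α| ≤ 1 / 2) {H K : ℕ} (hH : 1 ≤ H)
    (hK : 2 * H + 1 ≤ K) :
    (1 / H : ℝ) * ∑ a ∈ Finset.range H, ∑ b ∈ Finset.range H, ‖floorCoeff α K ((a : ℝ) - b)‖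
      ≤ 3 + 2 * Real.log H := by
  have hH0 : (0 : ℝ) < H := by exact_mod_cast hH
  set g : ℕ → ℝ := fun n => if n = 0 then 1 else 1 / n with hg
  have hg0 : ∀ n, 0 ≤ g n := by
    intro n; rw [hg]; dsimp only; split_ifs <;> positivity
  have hsum : ∑ i ∈ Finset.range H, g (i + 1) ≤ 1 + Real.log H := by
    have h1 := harmonic_le_one_add_log H
    rw [harmonic] at h1
    push_cast at h1
    simpa [hg] using h1
  have hrow : ∀ a ∈ Finset.range H, ∑ b ∈ Finset.range H, ‖floorCoeff α K ((a : ℝ) - b)‖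
      ≤ 3 + 2 * Real.log H := by
    intro a ha
    have h2 := sum_natAbs_sub_le hg0 (Finset.mem_range.1 ha)
    have h3 : g 0 = 1 := by simp [hg]
    refine le_trans (Finset.sum_le_sum fun b hb => ?_) (h2.trans (by rw [h3]; linarith))
    have hcast : ((a : ℝ) - b) = (((a : ℤ) - b : ℤ) : ℝ) := by push_cast; rfl
    by_cases hab : (a : ℤ) - b = 0
    · rw [hcast, hab]
      simpa [hg] using norm_floorCoeff_le_one α (by omega : 0 < K) 0
    · have hnat : Int.natAbs ((a : ℤ) - b) ≠ 0 := Int.natAbs_ne_zero.2 hab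
      have habs : |(((a : ℤ) - b : ℤ) : ℝ)| = (Int.natAbs ((a : ℤ) - b) : ℝ) := by
        rw [Nat.cast_natAbs, Int.cast_abs]
      have hle : Int.natAbs ((a : ℤ) - b) ≤ H := by
        have := Finset.mem_range.1 ha
        have := Finset.mem_range.1 hb
        omega
      have h4 : 2 * |(((a : ℤ) - b : ℤ) : ℝ)| + 1 ≤ K := by
        rw [habs]
        have : 2 * Int.natAbs ((a : ℤ) - b) + 1 ≤ K := by omega
        exact_mod_cast this
      rw [hcast]
      refine (norm_floorCoeff_le hα hab h4).trans (le_of_eq ?_)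
      rw [habs, hg]; simp [hnat]
  calc _ ≤ (1 / H : ℝ) * ∑ a ∈ Finset.range H, (3 + 2 * Real.log H) := by
        gcongr with a ha
        exact hrow a ha
    _ = _ := by
        rw [Finset.sum_const, Finset.card_range, nsmul_eq_mul]; field_simp

/-- Removal of the integer part: a weighted exponential sum with phase `α ⌊y n⌋` is controlled
by sums with phases `(α + h) y n`, `|h| ≤ H₁ ^ 3`, and unweighted sums with phases `h y n`,
`0 < |h| ≤ H₁`, which count the `n` for which `y n` is close to an integer. -/
lemma norm_sum_floor_le {α : ℝ} (hα : |α| ≤ 1 / 2) {H₁ : ℕ} (hH₁ : 1 ≤ H₁) (s : Finset ℕ)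
    (y w : ℕ → ℝ) (z : ℕ → ℂ) {W E₁ E₂ : ℝ} (hW : 0 ≤ W) (hw0 : ∀ n ∈ s, 0 ≤ w n)
    (hw : ∀ n ∈ s, w n ≤ W) (hz : ∀ n ∈ s, ‖z n‖ ≤ 1) (hE₂ : 0 ≤ E₂)
    (h₁ : ∀ h : ℤ, |(h : ℝ)| ≤ (H₁ ^ 3 : ℕ) →
      ‖∑ n ∈ s, (w n : ℂ) * (z n * e ((α + h) * y n))‖ ≤ E₁)
    (h₂ : ∀ h : ℤ, h ≠ 0 → |(h : ℝ)| ≤ H₁ → ‖∑ n ∈ s, e (h * y n)‖ ≤ E₂) :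
    ‖∑ n ∈ s, (w n : ℂ) * (z n * e (α * ⌊y n⌋))‖
      ≤ (3 + 2 * Real.log (H₁ ^ 3 : ℕ)) * E₁ + W * (137 * s.card / H₁ + 8 * E₂) := by
  have hH0 : (0 : ℝ) < H₁ := by exact_mod_cast hH₁
  set H : ℕ := H₁ ^ 3 with hH
  have hH1 : 1 ≤ H := Nat.one_le_pow _ _ hH₁
  set K : ℕ := 2 * H + 1 with hK
  have hE₁ : 0 ≤ E₁ := (norm_nonneg _).trans (h₁ 0 (by simp))
  set G : ℝ → ℂ := floorApprox α H K with hG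
  have hsplit : ∑ n ∈ s, (w n : ℂ) * (z n * e (α * ⌊y n⌋))
      = ∑ n ∈ s, (w n : ℂ) * (z n * e (α * y n)) * G (y n)
        + ∑ n ∈ s, (w n : ℂ) * (z n * e (α * y n)) * (e (-α * Int.fract (y n)) - G (y n)) := by
    rw [← Finset.sum_add_distrib]
    refine Finset.sum_congr rfl fun n _ => ?_
    have h3 : e (α * ⌊y n⌋) = e (α * y n) * e (-α * Int.fract (y n)) := by
      rw [← e_add]; congr 1; rw [Int.fract]; ring
    rw [h3]; ring
  have hA : ‖∑ n ∈ s, (w n : ℂ) * (z n * e (α * y n)) * G (y n)‖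
      ≤ (3 + 2 * Real.log H) * E₁ := by
    have h4 : ∑ n ∈ s, (w n : ℂ) * (z n * e (α * y n)) * G (y n)
        = (1 / H : ℝ) * ∑ a ∈ Finset.range H, ∑ b ∈ Finset.range H,
          floorCoeff α K ((a : ℝ) - b) *
            ∑ n ∈ s, (w n : ℂ) * (z n * e ((α + ((a : ℤ) - b : ℤ)) * y n)) := by
      simp_rw [hG, floorApprox, Finset.mul_sum]
      rw [Finset.sum_comm]
      refine Finset.sum_congr rfl fun a _ => ?_
      rw [Finset.sum_comm]
      refine Finset.sum_congr rfl fun b _ => Finset.sum_congr rfl fun n _ => ?_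
      have h5 : e ((α + ((a : ℤ) - b : ℤ)) * y n) = e (α * y n) * e (y n * ((a : ℝ) - b)) := by
        rw [← e_add]; congr 1; push_cast; ring
      rw [h5]; ring
    rw [h4, norm_mul, Complex.norm_real, Real.norm_eq_abs, abs_of_nonneg (by positivity)]
    calc _ ≤ (1 / H : ℝ) * ∑ a ∈ Finset.range H, ∑ b ∈ Finset.range H,
          ‖floorCoeff α K ((a : ℝ) - b)‖ * E₁ := by
          refine mul_le_mul_of_nonneg_left ?_ (by positivity)
          refine (norm_sum_le _ _).trans (Finset.sum_le_sum fun a ha => ?_)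
          refine (norm_sum_le _ _).trans (Finset.sum_le_sum fun b hb => ?_)
          rw [norm_mul]
          refine mul_le_mul_of_nonneg_left (h₁ _ ?_) (norm_nonneg _)
          have ha' : (a : ℝ) ≤ H := by exact_mod_cast (Finset.mem_range.1 ha).le
          have hb' : (b : ℝ) ≤ H := by exact_mod_cast (Finset.mem_range.1 hb).le
          push_cast
          rw [abs_le]; constructor <;> linarith [(Nat.cast_nonneg a : (0 : ℝ) ≤ a),
            (Nat.cast_nonneg b : (0 : ℝ) ≤ b)]
      _ = ((1 / H : ℝ) * ∑ a ∈ Finset.range H, ∑ b ∈ Finset.range H,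
          ‖floorCoeff α K ((a : ℝ) - b)‖) * E₁ := by
          simp_rw [← Finset.sum_mul]; ring
      _ ≤ _ := mul_le_mul_of_nonneg_right (sum_norm_floorCoeff_le hα hH1 le_rfl) hE₁
  have hsq : ∑ n ∈ s, ‖∑ a ∈ Finset.range H₁, e (y n * a)‖ ^ 2
      ≤ H₁ * s.card + H₁ ^ 2 * E₂ := by
    have h6 : ((∑ n ∈ s, ‖∑ a ∈ Finset.range H₁, e (y n * a)‖ ^ 2 : ℝ) : ℂ)
        = ∑ a ∈ Finset.range H₁, ∑ b ∈ Finset.range H₁,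
          ∑ n ∈ s, e ((((a : ℤ) - b : ℤ) : ℝ) * y n) := by
      rw [Complex.ofReal_sum]
      simp_rw [norm_sq_sum_e_eq]
      rw [Finset.sum_comm]
      refine Finset.sum_congr rfl fun a _ => ?_
      rw [Finset.sum_comm]
      refine Finset.sum_congr rfl fun b _ => Finset.sum_congr rfl fun n _ => ?_
      congr 1; push_cast; ring
    have h7 : ∑ n ∈ s, ‖∑ a ∈ Finset.range H₁, e (y n * a)‖ ^ 2
        = ‖((∑ n ∈ s, ‖∑ a ∈ Finset.range H₁, e (y n * a)‖ ^ 2 : ℝ) : ℂ)‖ := by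
      rw [Complex.norm_real, Real.norm_eq_abs, abs_of_nonneg]
      exact Finset.sum_nonneg fun n _ => by positivity
    rw [h7, h6]
    calc _ ≤ ∑ a ∈ Finset.range H₁, ∑ b ∈ Finset.range H₁,
          ((if a = b then (s.card : ℝ) else 0) + E₂) := by
          refine (norm_sum_le _ _).trans (Finset.sum_le_sum fun a ha => ?_)
          refine (norm_sum_le _ _).trans (Finset.sum_le_sum fun b hb => ?_)
          split_ifs with hab
          · refine (norm_sum_le _ _).trans ?_
            simp [norm_e, hE₂]
          · rw [zero_add]
            refine h₂ _ (by omega) ?_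
            have ha' : (a : ℝ) ≤ H₁ := by exact_mod_cast (Finset.mem_range.1 ha).le
            have hb' : (b : ℝ) ≤ H₁ := by exact_mod_cast (Finset.mem_range.1 hb).le
            push_cast
            rw [abs_le]; constructor <;> linarith [(Nat.cast_nonneg a : (0 : ℝ) ≤ a),
              (Nat.cast_nonneg b : (0 : ℝ) ≤ b)]
      _ = ∑ a ∈ Finset.range H₁, ((s.card : ℝ) + H₁ * E₂) := by
          refine Finset.sum_congr rfl fun a ha => ?_
          rw [Finset.sum_add_distrib, Finset.sum_ite_eq, if_pos ha]
          simp
      _ = _ := by simp; ring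
  have hB : ‖∑ n ∈ s, (w n : ℂ) * (z n * e (α * y n))
      * (e (-α * Int.fract (y n)) - G (y n))‖ ≤ W * (137 * s.card / H₁ + 8 * E₂) := by
    calc _ ≤ ∑ n ∈ s, W * (129 / H₁ + 8 / H₁ ^ 2 * ‖∑ a ∈ Finset.range H₁, e (y n * a)‖ ^ 2) := by
          refine (norm_sum_le _ _).trans (Finset.sum_le_sum fun n hn => ?_)
          rw [norm_mul, norm_mul, norm_mul, norm_e, mul_one, Complex.norm_real, Real.norm_eq_abs,
            abs_of_nonneg (hw0 n hn)]
          refine mul_le_mul ?_ (norm_sub_floorApprox_le hα hH₁ (by omega) (y n)) (norm_nonneg _) hW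
          calc w n * ‖z n‖ ≤ W * 1 := mul_le_mul (hw n hn) (hz n hn) (norm_nonneg _) hW
            _ = W := mul_one _
      _ = W * (s.card * (129 / H₁)
          + 8 / H₁ ^ 2 * ∑ n ∈ s, ‖∑ a ∈ Finset.range H₁, e (y n * a)‖ ^ 2) := by
          rw [← Finset.mul_sum, Finset.sum_add_distrib, ← Finset.mul_sum]; simp
      _ ≤ W * (s.card * (129 / H₁) + 8 / H₁ ^ 2 * (H₁ * s.card + H₁ ^ 2 * E₂)) := by gcongr
      _ = _ := by field_simp; ring
  rw [hsplit]
  exact (norm_add_le _ _).trans (add_le_add hA hB)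

/-- Removal of the integer part with `H₁ ≈ X ^ (1 / 32)`. Since `c < 17 / 16`, all the frequencies
`θ = α + h` with `|h| ≤ H₁ ^ 3` satisfy `X ^ (11 / 32) ≤ |θ| X ^ c ≤ X ^ (38 / 32)`. -/
lemma exists_norm_sum_vonMangoldt_floor_le {c μ : ℝ} (hc1 : 1 < c) (hc2 : c < 17 / 16)
    (hμ1 : 0 < μ) (hμ2 : μ < 1) :
    ∃ C : ℝ, 0 < C ∧ ∀ (X α β : ℝ), 2 ^ 128 ≤ X → X ^ (1 / 8 : ℝ) ≤ μ * X →
      X ^ ((16 * c - 5) / 32 - c) ≤ |α| → |α| ≤ 1 / 2 →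
      ‖∑ n ∈ Finset.Ioc ⌊μ * X⌋₊ ⌊X⌋₊,
        (ArithmeticFunction.vonMangoldt n : ℂ) * (e (β * n) * e (α * ⌊(n : ℝ) ^ c⌋))‖
      ≤ C * Real.log X ^ 4 * X ^ (31 / 32 : ℝ) := by
  obtain ⟨C₁, hC₁, hmain⟩ := exists_norm_sum_vonMangoldt_le hc1 (by linarith) hμ1 hμ2
  obtain ⟨C₂, hC₂, hexp⟩ := exists_norm_typeI_inner_le hc1 (by linarith) hμ1 hμ2
  refine ⟨5 * C₁ + 137 + 8 * C₂, by positivity, ?_⟩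
  intro X α β hX hμX hα1 hα2
  have hX16 : (2 : ℝ) ^ 16 ≤ X := le_trans (by norm_num) hX
  have hX0 : 0 < X := by linarith
  have hX1 : 1 ≤ X := by linarith
  have hlogX : 1 ≤ Real.log X := by
    have h1 : Real.log (2 ^ 16) ≤ Real.log X := Real.log_le_log (by norm_num) hX16
    have hlog2 := Real.log_two_gt_d9
    rw [Real.log_pow] at h1
    push_cast at h1
    linarith
  set P : ℝ := X ^ (1 / 32 : ℝ) with hP
  have hP16 : 16 ≤ P := by
    calc (16 : ℝ) = (2 ^ 128 : ℝ) ^ (1 / 32 : ℝ) := by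
          rw [← Real.rpow_natCast, ← Real.rpow_mul (by norm_num)]; norm_num
      _ ≤ _ := Real.rpow_le_rpow (by norm_num) hX (by norm_num)
  have hPpow : ∀ k : ℕ, P ^ k = X ^ (k / 32 : ℝ) := by
    intro k
    rw [hP, ← Real.rpow_natCast, ← Real.rpow_mul hX0.le]; congr 1; ring
  set H₁ : ℕ := ⌈P⌉₊ with hH₁
  have hPH : P ≤ H₁ := Nat.le_ceil P
  have hHP : (H₁ : ℝ) ≤ 2 * P := by
    have := (Nat.ceil_lt_add_one (by linarith : 0 ≤ P)).le
    linarith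
  have hH1 : 1 ≤ H₁ := by
    have : (1 : ℝ) ≤ H₁ := by linarith
    exact_mod_cast this
  have hH1r : (1 : ℝ) ≤ H₁ := by exact_mod_cast hH1
  have hH3 : ((H₁ ^ 3 : ℕ) : ℝ) ≤ 8 * P ^ 3 := by
    push_cast
    calc (H₁ : ℝ) ^ 3 ≤ (2 * P) ^ 3 := by gcongr
      _ = _ := by ring
  have hH3X : ((H₁ ^ 3 : ℕ) : ℝ) ≤ X := by
    calc _ ≤ 8 * P ^ 3 := hH3
      _ ≤ P * P ^ 3 := by gcongr; linarith
      _ = X ^ ((4 : ℕ) / 32 : ℝ) := by rw [← hPpow]; ring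
      _ ≤ X ^ (1 : ℝ) := Real.rpow_le_rpow_of_exponent_le hX1 (by norm_num)
      _ = X := Real.rpow_one X
  have hupper : ∀ θ : ℝ, |θ| ≤ (H₁ ^ 3 : ℕ) + 1 / 2 → |θ| * X ^ c ≤ X ^ (38 / 32 : ℝ) := by
    intro θ hθ
    have h1 : |θ| ≤ 16 * P ^ 3 := by
      have : 1 ≤ P ^ 3 := one_le_pow₀ (by linarith)
      linarith
    calc |θ| * X ^ c ≤ P * P ^ 3 * X ^ (17 / 16 : ℝ) := by
          refine mul_le_mul (h1.trans (by gcongr)) ?_ (by positivity) (by positivity)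
          exact Real.rpow_le_rpow_of_exponent_le hX1 hc2.le
      _ = X ^ ((4 : ℕ) / 32 : ℝ) * X ^ (17 / 16 : ℝ) := by rw [← hPpow]; ring
      _ = X ^ (38 / 32 : ℝ) := by rw [← Real.rpow_add hX0]; norm_num
  have hlower : ∀ θ : ℝ, 1 / 2 ≤ |θ| → X ^ (11 / 32 : ℝ) ≤ |θ| * X ^ c := by
    intro θ hθ
    have h1 : X ≤ X ^ c := by
      nth_rewrite 1 [← Real.rpow_one X]
      exact Real.rpow_le_rpow_of_exponent_le hX1 hc1.le
    have h2 : X ^ (11 / 32 : ℝ) * P ≤ X := by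
      rw [hP, ← Real.rpow_add hX0]
      nth_rewrite 2 [← Real.rpow_one X]
      exact Real.rpow_le_rpow_of_exponent_le hX1 (by norm_num)
    have h3 : 0 ≤ X ^ (11 / 32 : ℝ) := by positivity
    nlinarith
  have hres := norm_sum_floor_le hα2 hH1 (Finset.Ioc ⌊μ * X⌋₊ ⌊X⌋₊) (fun n => (n : ℝ) ^ c)
    (fun n => ArithmeticFunction.vonMangoldt n) (fun n => e (β * n)) (W := Real.log X)
    (E₁ := C₁ * Real.log X ^ 3 * X ^ (31 / 32 : ℝ)) (E₂ := C₂ * X ^ (53 / 64 : ℝ))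
    (by linarith) (fun n _ => ArithmeticFunction.vonMangoldt_nonneg)
    (fun n hn => by
      obtain ⟨h1, h2⟩ := Finset.mem_Ioc.1 hn
      refine ArithmeticFunction.vonMangoldt_le_log.trans ?_
      exact Real.log_le_log (by exact_mod_cast (by omega : 0 < n))
        ((Nat.le_floor_iff hX0.le).1 h2))
    (fun n _ => (norm_e _).le) (by positivity)
    (fun h hh => by
      refine le_of_eq_of_le ?_ (hmain X (α + h) β hX16 hμX ?_ (hupper _ ?_))
      · congr 1
        refine Finset.sum_congr rfl fun n _ => ?_
        rw [← e_add, add_comm (β * (n : ℝ))]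
      · by_cases h0 : h = 0
        · rw [h0, Int.cast_zero, add_zero]
          calc X ^ (11 / 32 : ℝ) ≤ X ^ ((16 * c - 5) / 32) :=
                Real.rpow_le_rpow_of_exponent_le hX1 (by linarith)
            _ = X ^ ((16 * c - 5) / 32 - c) * X ^ c := by
                rw [← Real.rpow_add hX0]; congr 1; ring
            _ ≤ _ := by gcongr
        · refine hlower _ ?_
          have hh1 : (1 : ℝ) ≤ |(h : ℝ)| := by exact_mod_cast Int.one_le_abs h0
          have := abs_sub_abs_le_abs_sub (h : ℝ) (-α)
          rw [abs_neg, sub_neg_eq_add, add_comm (h : ℝ) α] at this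
          linarith
      · exact (abs_add_le _ _).trans (by linarith))
    (fun h h0 hh => by
      have hh1 : (1 : ℝ) ≤ |(h : ℝ)| := by exact_mod_cast Int.one_le_abs h0
      have h13 : (H₁ : ℝ) ≤ (H₁ ^ 3 : ℕ) := by
        push_cast; exact le_self_pow₀ hH1r (by norm_num)
      have h1 := hexp X h 0 1 (⌊X⌋₊ + 1) hX16 (hlower _ (by linarith)) (hupper _ (by linarith))
        le_rfl (by
          have : 1 ≤ X ^ (1 / 8 : ℝ) := Real.one_le_rpow hX1 (by norm_num)
          push_cast; linarith) (by simp)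
      refine le_of_eq_of_le ?_ h1
      congr 1
      rw [Nat.div_one]
      refine Finset.sum_congr ?_ fun n _ => by simp
      ext n; simp only [Finset.mem_Ioc, Finset.mem_Ico]; omega)
  refine hres.trans ?_
  set Y := X ^ (31 / 32 : ℝ) with hY
  set l := Real.log X with hl
  have hY0 : 0 < Y := by positivity
  have hlogH : Real.log (H₁ ^ 3 : ℕ) ≤ l :=
    Real.log_le_log (by exact_mod_cast Nat.pow_pos hH1) hH3X
  have hcard : ((Finset.Ioc ⌊μ * X⌋₊ ⌊X⌋₊).card : ℝ) ≤ X := by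
    rw [Nat.card_Ioc]
    exact (Nat.cast_le.2 (Nat.sub_le _ _)).trans (Nat.floor_le hX0.le)
  have hYP : Y * P = X := by
    rw [hY, hP, ← Real.rpow_add hX0]; norm_num
  have hdiv : 137 * ((Finset.Ioc ⌊μ * X⌋₊ ⌊X⌋₊).card : ℝ) / H₁ ≤ 137 * Y := by
    rw [div_le_iff₀ (by linarith)]
    nlinarith
  have hE2 : C₂ * X ^ (53 / 64 : ℝ) ≤ C₂ * Y := by
    refine mul_le_mul_of_nonneg_left ?_ hC₂.le
    exact Real.rpow_le_rpow_of_exponent_le hX1 (by norm_num)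
  have hl4 : l ≤ l ^ 4 := le_self_pow₀ hlogX (by norm_num)
  calc _ ≤ (5 * l) * (C₁ * l ^ 3 * Y) + l * (137 * Y + 8 * (C₂ * Y)) := by
        gcongr
        linarith
    _ = 5 * C₁ * l ^ 4 * Y + l * (137 * Y + 8 * (C₂ * Y)) := by ring
    _ ≤ 5 * C₁ * l ^ 4 * Y + l ^ 4 * (137 * Y + 8 * (C₂ * Y)) := by gcongr
    _ = _ := by ring

/-! ### Congruence conditions and the conclusion -/

/-- Detection of `d ∣ m` by additive characters. -/
lemma sum_range_e_mul_div (d m : ℕ) (hd : 0 < d) :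
    ∑ a ∈ Finset.range d, e ((m : ℝ) / d * a) = if d ∣ m then (d : ℂ) else 0 := by
  have hd0 : (d : ℝ) ≠ 0 := by exact_mod_cast hd.ne'
  split_ifs with h
  · obtain ⟨k, rfl⟩ := h
    have h1 : ∀ a : ℕ, e (((d * k : ℕ) : ℝ) / d * a) = 1 := by
      intro a
      rw [← e_int (k * a)]; congr 1; push_cast; field_simp
    rw [Finset.sum_congr rfl fun a _ => h1 a]; simp
  · simp_rw [e_mul_nat]
    have hpow : e ((m : ℝ) / d) ^ d = 1 := by
      rw [← e_mul_nat, div_mul_cancel₀ _ hd0]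
      exact_mod_cast e_int m
    have hne : e ((m : ℝ) / d) - 1 ≠ 0 := by
      intro h0
      have h1 : Real.sin (Real.pi * ((m : ℝ) / d)) = 0 := by
        have := norm_e_sub_one ((m : ℝ) / d)
        rw [h0, norm_zero] at this
        exact abs_eq_zero.1 (by linarith)
      obtain ⟨k, hk⟩ := Real.sin_eq_zero_iff.1 h1
      have h2 : (k : ℝ) = m / d := by
        have := Real.pi_ne_zero
        apply mul_left_cancel₀ this
        linarith
      rw [eq_div_iff hd0] at h2
      have h3 : (m : ℤ) = d * k := by
        have : ((m : ℤ) : ℝ) = ((d * k : ℤ) : ℝ) := by push_cast; linarith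
        exact_mod_cast this
      exact h (Int.natCast_dvd_natCast.1 ⟨k, h3⟩)
    have hgeom : (∑ j ∈ Finset.range d, e ((m : ℝ) / d) ^ j) * (e ((m : ℝ) / d) - 1) = 0 := by
      rw [geom_sum_mul, hpow, sub_self]
    exact (mul_eq_zero.1 hgeom).resolve_right hne

/-- A bound that is uniform in the linear phase passes to the subsum over `n ≡ -2 (mod d)`, without
any loss in `d`. -/
lemma norm_sum_filter_dvd_le (s : Finset ℕ) (F : ℕ → ℂ) {d : ℕ} (hd : 0 < d) {E : ℝ}
    (hE : ∀ β : ℝ, ‖∑ n ∈ s, F n * e (β * n)‖ ≤ E) :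
    ‖∑ n ∈ s with d ∣ n + 2, F n‖ ≤ E := by
  have hd0 : (0 : ℝ) < d := by exact_mod_cast hd
  have hdc : (d : ℂ) ≠ 0 := by exact_mod_cast hd.ne'
  have h1 : ∑ n ∈ s with d ∣ n + 2, F n = (1 / d : ℝ) *
      ∑ a ∈ Finset.range d, e (2 * a / d) * ∑ n ∈ s, F n * e ((a / d : ℝ) * n) := by
    rw [Finset.sum_filter]
    have h2 : ∀ n ∈ s, (if d ∣ n + 2 then F n else 0)
        = ∑ a ∈ Finset.range d, (1 / d : ℝ) * (e (2 * a / d) * (F n * e ((a / d : ℝ) * n))) := by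
      intro n _
      have h3 := sum_range_e_mul_div d (n + 2) hd
      have h4 : ∀ a : ℕ, (((1 / d : ℝ)) : ℂ) * (e (2 * a / d) * (F n * e ((a / d : ℝ) * n)))
          = (1 / d : ℝ) * F n * e (((n + 2 : ℕ) : ℝ) / d * a) := by
        intro a
        have h5 : e (((n + 2 : ℕ) : ℝ) / d * a) = e (2 * a / d) * e ((a / d : ℝ) * n) := by
          rw [← e_add]; congr 1; push_cast; ring
        rw [h5]; ring
      simp_rw [h4]
      rw [← Finset.mul_sum, h3]
      split_ifs
      · push_cast; field_simp
      · simp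
    rw [Finset.sum_congr rfl h2, Finset.sum_comm, Finset.mul_sum]
    refine Finset.sum_congr rfl fun a _ => ?_
    rw [Finset.mul_sum, Finset.mul_sum]
  rw [h1, norm_mul, Complex.norm_real, Real.norm_eq_abs, abs_of_pos (by positivity)]
  calc _ ≤ (1 / d : ℝ) * ∑ a ∈ Finset.range d, E := by
        refine mul_le_mul_of_nonneg_left ?_ (by positivity)
        refine (norm_sum_le _ _).trans (Finset.sum_le_sum fun a _ => ?_)
        rw [norm_mul, norm_e, one_mul]
        exact hE _
    _ = E := by rw [Finset.sum_const, Finset.card_range, nsmul_eq_mul]; field_simp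

/-- Prime powers contribute little, so `Λ` may replace `log` on primes. -/
lemma norm_sum_prime_sub_le {X μ : ℝ} (hX : 1 ≤ X) (hμ : 0 ≤ μ) (d : ℕ) (φ : ℕ → ℂ)
    (hφ : ∀ n, ‖φ n‖ = 1) :
    ‖∑ p ∈ (Finset.range (⌊X⌋₊ + 1)).filter
        (fun p : ℕ => p.Prime ∧ μ * X < (p : ℝ) ∧ d ∣ (p + 2)), (Real.log p : ℂ) * φ p
      - ∑ n ∈ Finset.Ioc ⌊μ * X⌋₊ ⌊X⌋₊ with d ∣ n + 2,
        (ArithmeticFunction.vonMangoldt n : ℂ) * φ n‖ ≤ 2 * √X * Real.log X := by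
  have hset : (Finset.range (⌊X⌋₊ + 1)).filter
        (fun p : ℕ => p.Prime ∧ μ * X < (p : ℝ) ∧ d ∣ (p + 2))
      = ((Finset.Ioc ⌊μ * X⌋₊ ⌊X⌋₊).filter (fun n => d ∣ n + 2)).filter Nat.Prime := by
    ext n
    simp only [Finset.mem_filter, Finset.mem_range, Finset.mem_Ioc,
      Nat.floor_lt (by positivity : 0 ≤ μ * X), Nat.lt_succ_iff]
    tauto
  set s := (Finset.Ioc ⌊μ * X⌋₊ ⌊X⌋₊).filter (fun n => d ∣ n + 2) with hs
  rw [hset, ← Finset.sum_filter_add_sum_filter_not s Nat.Prime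
    (fun n => (ArithmeticFunction.vonMangoldt n : ℂ) * φ n)]
  have h1 : ∑ p ∈ s.filter Nat.Prime, (Real.log p : ℂ) * φ p
      = ∑ n ∈ s.filter Nat.Prime, (ArithmeticFunction.vonMangoldt n : ℂ) * φ n := by
    refine Finset.sum_congr rfl fun p hp => ?_
    rw [ArithmeticFunction.vonMangoldt_apply_prime (Finset.mem_filter.1 hp).2]
  rw [h1, sub_add_cancel_left, norm_neg]
  refine le_trans ?_ (Chebyshev.psi_sub_theta_le hX)
  rw [Chebyshev.psi_sub_theta_eq_sum_not_prime]
  refine (norm_sum_le _ _).trans ?_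
  calc _ = ∑ n ∈ s with ¬ n.Prime, ArithmeticFunction.vonMangoldt n := by
        refine Finset.sum_congr rfl fun n _ => ?_
        rw [norm_mul, hφ, mul_one, Complex.norm_real, Real.norm_eq_abs,
          abs_of_nonneg ArithmeticFunction.vonMangoldt_nonneg]
    _ ≤ _ := by
        refine Finset.sum_le_sum_of_subset_of_nonneg ?_
          fun n _ _ => ArithmeticFunction.vonMangoldt_nonneg
        refine Finset.filter_subset_filter _ ((Finset.filter_subset _ _).trans ?_)
        exact Finset.Ioc_subset_Ioc_left (Nat.zero_le _)

theorem stmt_9 (c μ : ℝ) (hc1 : 1 < c) (hc2 : c < 17 / 16) (hμ1 : 0 < μ) (hμ2 : μ < 1) :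
    ∃ ε₀ : ℝ, 0 < ε₀ ∧ ∃ X₀ : ℝ, 0 < X₀ ∧
      ∀ X : ℝ, X₀ ≤ X →
        ∀ lam : ℕ → ℝ, IsSieveWeight (X ^ ((17 - 16 * c) / 32)) lam →
          ∀ α : ℝ, X ^ ((16 * c - 5) / 32 - c) ≤ |α| → |α| ≤ 1 / 2 →
            ‖L c μ X (X ^ ((17 - 16 * c) / 32)) lam α‖ ≤ X ^ (1 - ε₀) := by
  obtain ⟨C, hC, hmain⟩ := exists_norm_sum_vonMangoldt_floor_le hc1 hc2 hμ1 hμ2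
  -- The exponents add up to `31 / 32 + (17 - 16 c) / 32 = 1 - (c - 1) / 2`; half of the saving
  -- absorbs the logarithms.
  have hev1 : ∀ᶠ X : ℝ in Filter.atTop, (C + 2) * Real.log X ^ 4 ≤ X ^ ((c - 1) / 4) := by
    have h1 := (isLittleO_log_rpow_rpow_atTop (s := (c - 1) / 4) (4 : ℝ)
      (by linarith)).bound (by positivity : 0 < 1 / (C + 2))
    filter_upwards [h1, Filter.eventually_ge_atTop 1] with X hX hX1
    have hl : 0 ≤ Real.log X := Real.log_nonneg hX1
    rw [Real.norm_of_nonneg (by positivity), Real.norm_of_nonneg (by positivity)] at hX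
    have h4 : Real.log X ^ (4 : ℝ) = Real.log X ^ 4 := by
      rw [← Real.rpow_natCast]; norm_num
    rw [h4, one_div, ← div_eq_inv_mul, le_div_iff₀ (by positivity)] at hX
    linarith
  have hev2 : ∀ᶠ X : ℝ in Filter.atTop, X ^ (1 / 8 : ℝ) ≤ μ * X := by
    have h1 := (tendsto_rpow_atTop (by norm_num : (0 : ℝ) < 7 / 8)).eventually_ge_atTop (1 / μ)
    filter_upwards [h1, Filter.eventually_ge_atTop 1] with X hX hX1
    have hX0 : 0 < X := by linarith
    rw [div_le_iff₀ hμ1] at hX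
    have h2 : X ^ (7 / 8 : ℝ) * X ^ (1 / 8 : ℝ) = X := by
      rw [← Real.rpow_add hX0]; norm_num
    have h3 : 0 ≤ X ^ (1 / 8 : ℝ) := by positivity
    nlinarith
  obtain ⟨X₀, hX₀⟩ := Filter.eventually_atTop.1
    ((hev1.and hev2).and (Filter.eventually_ge_atTop (2 ^ 128 : ℝ)))
  refine ⟨(c - 1) / 4, by linarith, max X₀ 1, by positivity, ?_⟩
  intro X hX lam hlam α hα1 hα2
  obtain ⟨⟨hbig, hμX⟩, hX128⟩ := hX₀ X ((le_max_left _ _).trans hX)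
  have hX16 : (2 : ℝ) ^ 16 ≤ X := le_trans (by norm_num) hX128
  have hX0 : 0 < X := by linarith
  have hX1 : 1 ≤ X := by linarith
  have hlogX : 1 ≤ Real.log X := by
    have h1 : Real.log (2 ^ 16) ≤ Real.log X := Real.log_le_log (by norm_num) hX16
    have hlog2 := Real.log_two_gt_d9
    rw [Real.log_pow] at h1
    push_cast at h1
    linarith
  set D : ℝ := X ^ ((17 - 16 * c) / 32) with hD
  have hD0 : 0 < D := by positivity
  set Y : ℝ := X ^ (31 / 32 : ℝ) with hY
  have hY0 : 0 < Y := by positivity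
  set B : ℝ := (C + 2) * Real.log X ^ 4 * Y with hB
  have hB0 : 0 ≤ B := by positivity
  have hS : ∀ d : ℕ, 0 < d → ‖∑ p ∈ (Finset.range (⌊X⌋₊ + 1)).filter
        (fun p : ℕ => p.Prime ∧ μ * X < (p : ℝ) ∧ d ∣ (p + 2)),
      (Real.log p : ℂ) * e (α * ⌊(p : ℝ) ^ c⌋)‖ ≤ B := by
    intro d hd
    have h1 := norm_sum_prime_sub_le hX1 hμ1.le d (fun n => e (α * ⌊(n : ℝ) ^ c⌋))
      (fun n => norm_e _)
    have h2 := norm_sum_filter_dvd_le (Finset.Ioc ⌊μ * X⌋₊ ⌊X⌋₊)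
      (fun n => (ArithmeticFunction.vonMangoldt n : ℂ) * e (α * ⌊(n : ℝ) ^ c⌋)) hd
      (E := C * Real.log X ^ 4 * Y) (by
        intro β
        refine le_of_eq_of_le ?_ (hmain X α β hX128 hμX hα1 hα2)
        congr 1
        refine Finset.sum_congr rfl fun n _ => ?_
        ring)
    have h3 : √X ≤ Y := by
      rw [Real.sqrt_eq_rpow]
      exact Real.rpow_le_rpow_of_exponent_le hX1 (by norm_num)
    have h4 : Real.log X ≤ Real.log X ^ 4 := le_self_pow₀ hlogX (by norm_num)
    have h5 : 2 * √X * Real.log X ≤ 2 * Y * Real.log X ^ 4 := by gcongr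
    have h6 := norm_sub_norm_le (∑ p ∈ (Finset.range (⌊X⌋₊ + 1)).filter
        (fun p : ℕ => p.Prime ∧ μ * X < (p : ℝ) ∧ d ∣ (p + 2)),
      (Real.log p : ℂ) * e (α * ⌊(p : ℝ) ^ c⌋)) (∑ n ∈ Finset.Ioc ⌊μ * X⌋₊ ⌊X⌋₊ with d ∣ n + 2,
        (ArithmeticFunction.vonMangoldt n : ℂ) * e (α * ⌊(n : ℝ) ^ c⌋))
    have h7 : B = C * Real.log X ^ 4 * Y + 2 * Y * Real.log X ^ 4 := by rw [hB]; ring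
    linarith
  have hL : ‖L c μ X D lam α‖ ≤ D * B := by
    -- The term `d = 0` vanishes because `0` is even.
    rw [L, Finset.sum_range_succ']
    have h0 : lam 0 = 0 := hlam.2 0 (Or.inr (Or.inl (dvd_zero 2)))
    rw [h0, Complex.ofReal_zero, zero_mul, add_zero]
    calc _ ≤ ∑ d ∈ Finset.range ⌊D⌋₊, B := by
          refine (norm_sum_le _ _).trans (Finset.sum_le_sum fun d _ => ?_)
          rw [norm_mul, Complex.norm_real, Real.norm_eq_abs]
          calc _ ≤ 1 * B := mul_le_mul (hlam.1 _) (hS (d + 1) d.succ_pos) (norm_nonneg _)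
                zero_le_one
            _ = B := one_mul B
      _ = ⌊D⌋₊ * B := by simp
      _ ≤ D * B := mul_le_mul_of_nonneg_right (Nat.floor_le hD0.le) hB0
  calc _ ≤ D * B := hL
    _ = ((C + 2) * Real.log X ^ 4) * (D * Y) := by rw [hB]; ring
    _ ≤ X ^ ((c - 1) / 4) * (D * Y) := by gcongr
    _ = X ^ (1 - (c - 1) / 4) := by
        rw [hD, hY, ← Real.rpow_add hX0, ← Real.rpow_add hX0]
        congr 1; ring
end

section
/- Let $c$, $\mu$, $\varepsilon$ be fixed real numbers with $1 < c < 2$, $0 < \mu < 1$ and $\varepsilon > 0$. There exists a constant $C = C(c, \mu, \varepsilon) > 0$ such that for every real $X \geq 3$ and every integer $M$ with $3 \leq M \leq X$, one has $\sum_{\mu X < n \leq X} \min\left(1, \frac{1}{M \|n^c\|}\right) \leq C X^{\varepsilon} \left( X M^{-1} + M^{\frac{1}{2}} X^{\frac{c}{2}} \right)$, where the sum is over integers $n$. -/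
/-!
Write `f x = x ^ c` and `‖t‖ = |t - round t|`. The proof is elementary and uses no exponential sums.

*Counting.* Let `S` be the set of `n ≤ X` with `‖f n‖ ≤ δ`, and put `L = X ^ ((2 - c) / 3)`. At most
`X / L + 1` elements of `S` are followed by a gap longer than `L`. For every other `n ∈ S`, with
successor `m ∈ S`, consider the slope `s = (round (f m) - round (f n)) / (m - n)`, a rational with
denominator `q ≤ m - n ≤ L`. By the mean value theorem `f' ξ` is within `2 δ / q` of `s` for some
`ξ` between `n` and `m`. Since `f'' ≥ c (c - 1) X ^ (c - 2)`, all `n` with the same slope lie in an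
interval of length `≪ δ X ^ (2 - c) / q + L`, and they are `q`-separated because `q` divides each
gap. There are `≪ q X ^ (c - 1)` possible slopes of denominator `q`, so summing over `q ≤ L` gives
`#S ≪ δ X (1 + log X) + X ^ ((c + 1) / 3)` (`card_near_le`).

*Conclusion.* Since `min 1 (1 / (M t)) ≤ (2 / M) #{k ≤ M : t ≤ 1 / k}` for `t ≤ 1 / 2`, the sum is at
most `(2 / M) ∑_{k ≤ M} #S(1 / k) ≪ (X / M) (1 + log X) ^ 2 + X ^ ((c + 1) / 3)`. The last term is
at most `X / M + M ^ (1 / 2) X ^ (c / 2)` for every `M`, as that expression is smallest at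
`M ≈ X ^ ((2 - c) / 3)`.
-/

/-! ### Separated sets and the derivative of `x ^ c` -/

lemma card_le_of_separated (A : Finset ℕ) (d D : ℝ) (hd : 0 < d) (hD : 0 ≤ D)
    (h1 : ∀ a ∈ A, ∀ b ∈ A, a < b → d ≤ (b : ℝ) - a)
    (h2 : ∀ a ∈ A, ∀ b ∈ A, a < b → (b : ℝ) - a ≤ D) :
    (A.card : ℝ) ≤ D / d + 1 := by
  rcases A.eq_empty_or_nonempty with rfl | hne
  · simp; positivity
  set a₀ := A.min' hne with ha₀
  have ha₀A : a₀ ∈ A := A.min'_mem hne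
  have hmin : ∀ a ∈ A, a₀ ≤ a := fun a ha => A.min'_le a ha
  have hcard : A.card ≤ (Finset.range (⌊D / d⌋₊ + 1)).card := by
    apply Finset.card_le_card_of_injOn (fun n : ℕ => ⌊((n : ℝ) - a₀) / d⌋₊)
    · intro n hn
      simp only [Finset.coe_range, Set.mem_Iio, Nat.lt_succ_iff]
      apply Nat.floor_le_floor
      gcongr
      rcases (hmin n hn).eq_or_lt with h | h
      · rw [← h]; simpa using hD
      · exact h2 _ ha₀A _ hn h
    · have key : ∀ a ∈ A, ∀ b ∈ A, a < b →
          ⌊((a : ℝ) - a₀) / d⌋₊ ≠ ⌊((b : ℝ) - a₀) / d⌋₊ := by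
        intro a ha b hb hab
        have h3 := h1 a ha b hb hab
        have h0 : (0 : ℝ) ≤ ((a : ℝ) - a₀) / d :=
          div_nonneg (sub_nonneg.2 (by exact_mod_cast hmin a ha)) hd.le
        have : ((a : ℝ) - a₀) / d + 1 ≤ ((b : ℝ) - a₀) / d := by
          rw [div_add_one hd.ne']; gcongr; linarith
        have h4 := Nat.floor_le_floor this
        rw [Nat.floor_add_one h0] at h4
        omega
      intro a ha b hb hab
      rcases lt_trichotomy a b with h | h | h
      · exact absurd hab (key a ha b hb h)
      · exact h
      · exact absurd hab.symm (key b hb a ha h)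
  rw [Finset.card_range] at hcard
  have : (A.card : ℝ) ≤ (⌊D / d⌋₊ : ℝ) + 1 := by exact_mod_cast hcard
  have := Nat.floor_le (show 0 ≤ D / d by positivity)
  linarith

lemma exists_deriv_near (c : ℝ) (hc1 : 1 < c) (δ q s x y gx gy : ℝ) (hq : 0 < q)
    (hxy : x < y) (hqr : q ≤ y - x)
    (hgx : |x ^ c - gx| ≤ δ) (hgy : |y ^ c - gy| ≤ δ) (hs : s * (y - x) = gy - gx) :
    ∃ ξ, x < ξ ∧ ξ < y ∧ |c * ξ ^ (c - 1) - s| ≤ 2 * δ / q := by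
  obtain ⟨ξ, hξ, h⟩ := exists_hasDerivAt_eq_slope (fun t : ℝ => t ^ c)
    (fun t : ℝ => c * t ^ (c - 1)) hxy
    (Real.continuous_rpow_const (by linarith)).continuousOn
    (fun t ht => Real.hasDerivAt_rpow_const (Or.inr hc1.le))
  refine ⟨ξ, hξ.1, hξ.2, ?_⟩
  have hr : 0 < y - x := by linarith
  have hδ : 0 ≤ δ := (abs_nonneg _).trans hgx
  have h5 : c * ξ ^ (c - 1) - s = ((y ^ c - gy) - (x ^ c - gx)) / (y - x) := by
    rw [h, eq_div_iff hr.ne', sub_mul, hs, div_mul_cancel₀ _ hr.ne']; ring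
  rw [h5, abs_div, abs_of_pos hr]
  have h6 : |(y ^ c - gy) - (x ^ c - gx)| ≤ 2 * δ := (abs_sub _ _).trans (by linarith)
  gcongr

/-- Lower bound for the growth of the derivative of `x ^ c`, from `f'' x ≥ c (c - 1) X ^ (c - 2)`
on `(0, X]`. -/
lemma deriv_growth (c X x y : ℝ) (hc1 : 1 < c) (hc2 : c < 2) (hx0 : 0 < x) (hxy : x < y)
    (hyX : y ≤ X) :
    c * (c - 1) * X ^ (c - 2) * (y - x) ≤ c * y ^ (c - 1) - c * x ^ (c - 1) := by
  obtain ⟨ξ, hξ, h⟩ := exists_hasDerivAt_eq_slope (fun t : ℝ => t ^ (c - 1))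
    (fun t : ℝ => (c - 1) * t ^ (c - 1 - 1)) hxy
    (Real.continuous_rpow_const (by linarith)).continuousOn
    (fun t ht => Real.hasDerivAt_rpow_const (Or.inl (by linarith [ht.1])))
  have hr : 0 < y - x := by linarith
  rw [eq_div_iff hr.ne'] at h
  have h7 : X ^ (c - 2) ≤ ξ ^ (c - 1 - 1) := by
    rw [show c - 1 - 1 = c - 2 by ring]
    exact Real.rpow_le_rpow_of_nonpos (by linarith [hξ.1]) (by linarith [hξ.2]) (by linarith)
  rw [← mul_sub, ← h]
  have : (c - 1) * X ^ (c - 2) * (y - x) ≤ (c - 1) * ξ ^ (c - 1 - 1) * (y - x) := by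
    have : 0 ≤ c - 1 := by linarith
    gcongr
  nlinarith

/-! ### Integers with `n ^ c` close to an integer -/

/-- The integers `1 ≤ n ≤ X` for which `n ^ c` is within `δ` of an integer. -/
noncomputable def near (c X δ : ℝ) : Finset ℕ :=
  (Finset.Icc 1 ⌊X⌋₊).filter (fun n : ℕ => |(n : ℝ) ^ c - round ((n : ℝ) ^ c)| ≤ δ)

lemma mem_near {c X δ : ℝ} (hX : 0 ≤ X) {n : ℕ} : n ∈ near c X δ ↔
    1 ≤ n ∧ (n : ℝ) ≤ X ∧ |(n : ℝ) ^ c - round ((n : ℝ) ^ c)| ≤ δ := by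
  simp [near, Nat.le_floor_iff hX, and_assoc]

/-- Slope of the segment joining the integer points nearest to the graph of `x ^ c` above `n`
and `m`. -/
noncomputable def latSlope (c : ℝ) (n m : ℕ) : ℚ :=
  Rat.divInt (round ((m : ℝ) ^ c) - round ((n : ℝ) ^ c)) ((m : ℤ) - n)

lemma latSlope_mul (c : ℝ) {n m : ℕ} (h : n < m) :
    (latSlope c n m : ℝ) * ((m : ℝ) - n) = round ((m : ℝ) ^ c) - round ((n : ℝ) ^ c) := by
  have : ((m : ℝ) - n) ≠ 0 := sub_ne_zero.2 (by exact_mod_cast h.ne')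
  rw [latSlope, Rat.divInt_eq_div]
  push_cast
  field_simp

lemma latSlope_den_le (c : ℝ) {n m : ℕ} (h : n < m) : (latSlope c n m).den ≤ m - n := by
  have h1 : ((latSlope c n m).den : ℤ) ∣ (m : ℤ) - n := Rat.den_dvd _ _
  have := Int.le_of_dvd (by omega) h1
  omega

/-- Contribution of a single denominator `q`: each slope `p / q` is attained at `q`-separated
points of a short interval, and there are `≪ q X ^ (c - 1)` numerators `p`. -/
lemma card_den_le (c X δ L : ℝ) (hc1 : 1 < c) (hc2 : c < 2) (hX : 1 ≤ X) (hδ0 : 0 < δ)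
    (hδ1 : δ ≤ 1) (T : Finset ℕ) (nxt : ℕ → ℕ) (q : ℕ) (hq : 1 ≤ q) (hqL : (q : ℝ) ≤ L)
    (hT : ∀ n ∈ T, n ∈ near c X δ ∧ nxt n ∈ near c X δ ∧ n < nxt n ∧ (nxt n : ℝ) ≤ n + L ∧
      ∀ m ∈ near c X δ, n < m → nxt n ≤ m)
    (hden : ∀ n ∈ T, (latSlope c n (nxt n)).den = q) :
    (T.card : ℝ) ≤ 20 / (c * (c - 1)) * δ * X * (1 / q) + 10 * X ^ (c - 1) * L := by
  have hX0 : 0 < X := by linarith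
  have hqR : (1 : ℝ) ≤ q := by exact_mod_cast hq
  have hL0 : 0 < L := by linarith
  have hXc : 1 ≤ X ^ (c - 1) := Real.one_le_rpow hX (by linarith)
  have hlam0 : 0 < c * (c - 1) * X ^ (c - 2) := by
    have : 0 < c - 1 := by linarith
    positivity
  set lam := c * (c - 1) * X ^ (c - 2) with hlam
  -- the mean value point between `n` and its successor
  have hξ : ∀ n ∈ T, ∃ ξ : ℝ, n < ξ ∧ ξ < nxt n ∧
      |c * ξ ^ (c - 1) - (latSlope c n (nxt n) : ℝ)| ≤ 2 * δ / q := by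
    intro n hn
    obtain ⟨h1, h2, h3, h4, h5⟩ := hT n hn
    rw [mem_near hX0.le] at h1 h2
    have hd := latSlope_den_le c h3
    rw [hden n hn] at hd
    have hd' : (q : ℝ) ≤ (nxt n : ℝ) - n := by
      have : q + n ≤ nxt n := by omega
      have : (q : ℝ) + n ≤ nxt n := by exact_mod_cast this
      linarith
    exact exists_deriv_near c hc1 δ q _ n (nxt n) _ _ (by linarith)
      (by exact_mod_cast h3) hd' h1.2.2 h2.2.2 (latSlope_mul c h3)
  set P := ⌊4 * X ^ (c - 1) * q⌋₊ with hP
  have hmaps : ∀ n ∈ T, (latSlope c n (nxt n)).num.toNat ∈ Finset.range (P + 1) := by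
    intro n hn
    obtain ⟨h1, h2, h3, h4, h5⟩ := hT n hn
    obtain ⟨ξ, h6, h7, h8⟩ := hξ n hn
    rw [mem_near hX0.le] at h1 h2
    have hξX : ξ ≤ X := by linarith [h2.2.1]
    have hn0 : (0 : ℝ) ≤ n := Nat.cast_nonneg n
    have h9 : ξ ^ (c - 1) ≤ X ^ (c - 1) :=
      Real.rpow_le_rpow (by linarith) hξX (by linarith)
    have h10 : 2 * δ / q ≤ 2 := by
      rw [div_le_iff₀ (by linarith)]; nlinarith
    have h11 : (latSlope c n (nxt n) : ℝ) ≤ 4 * X ^ (c - 1) := by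
      have := (abs_le.1 h8).1
      have : c * ξ ^ (c - 1) ≤ 2 * X ^ (c - 1) := by
        have : 0 ≤ ξ ^ (c - 1) := Real.rpow_nonneg (by linarith) _
        nlinarith
      linarith
    have h12 : ((latSlope c n (nxt n)).num : ℝ) = (latSlope c n (nxt n) : ℝ) * q := by
      rw [← hden n hn]
      exact_mod_cast (Rat.mul_den_eq_num _).symm
    have h13 : ((latSlope c n (nxt n)).num : ℝ) ≤ 4 * X ^ (c - 1) * q := by
      rw [h12]; gcongr
    rw [Finset.mem_range, Nat.lt_succ_iff, hP]
    apply Nat.le_floor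
    have h14 : (((latSlope c n (nxt n)).num.toNat : ℤ) : ℝ) =
        ((max (latSlope c n (nxt n)).num 0 : ℤ) : ℝ) := by
      rw [Int.toNat_eq_max]
    rw [Int.cast_natCast] at h14
    rw [h14, Int.cast_max]
    exact max_le h13 (by rw [Int.cast_zero]; positivity)
  have hnn : ∀ n ∈ T, 0 ≤ (latSlope c n (nxt n)).num := by
    intro n hn
    obtain ⟨h1, h2, h3, h4, h5⟩ := hT n hn
    rw [Rat.num_nonneg]
    have : (0 : ℝ) ≤ latSlope c n (nxt n) := by
      have h15 := latSlope_mul c h3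
      have h16 : (0 : ℝ) < (nxt n : ℝ) - n := sub_pos.2 (by exact_mod_cast h3)
      have h17 : round ((n : ℝ) ^ c) ≤ round ((nxt n : ℝ) ^ c) := by
        rw [round_eq, round_eq]
        apply Int.floor_le_floor
        gcongr
      have h18 : (round ((n : ℝ) ^ c) : ℝ) ≤ round ((nxt n : ℝ) ^ c) := by exact_mod_cast h17
      by_contra hcon
      push Not at hcon
      nlinarith
    exact_mod_cast this
  set B : ℝ := (4 * δ / (q * lam) + L) / q + 1 with hB
  have hfib : ∀ p ∈ Finset.range (P + 1),
      ((T.filter (fun n => (latSlope c n (nxt n)).num.toNat = p)).card : ℝ) ≤ B := by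
    intro p _
    have hslope : ∀ a ∈ T, ∀ b ∈ T, (latSlope c a (nxt a)).num.toNat = p →
        (latSlope c b (nxt b)).num.toNat = p → latSlope c a (nxt a) = latSlope c b (nxt b) := by
      intro a ha b hb h1 h2
      have := hnn a ha
      have := hnn b hb
      apply Rat.ext
      · omega
      · rw [hden a ha, hden b hb]
    apply card_le_of_separated _ _ _ (by linarith) (by positivity)
    · intro a ha b hb hab
      rw [Finset.mem_filter] at ha hb
      obtain ⟨h1, h2, h3, h4, h5⟩ := hT a ha.1
      have hd := latSlope_den_le c h3
      rw [hden a ha.1] at hd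
      have h6 := h5 b (hT b hb.1).1 hab
      have : q + a ≤ b := by omega
      have : (q : ℝ) + a ≤ b := by exact_mod_cast this
      linarith
    · intro a ha b hb hab
      rw [Finset.mem_filter] at ha hb
      obtain ⟨h1, h2, h3, h4, h5⟩ := hT a ha.1
      obtain ⟨k1, k2, k3, k4, k5⟩ := hT b hb.1
      have h6 : (nxt a : ℝ) ≤ b := by exact_mod_cast h5 b k1 hab
      obtain ⟨ξ, x1, x2, x3⟩ := hξ a ha.1
      obtain ⟨η, y1, y2, y3⟩ := hξ b hb.1
      rw [mem_near hX0.le] at k2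
      rw [hslope a ha.1 b hb.1 ha.2 hb.2] at x3
      have ha0 : (0 : ℝ) ≤ a := Nat.cast_nonneg a
      have hg := deriv_growth c X ξ η hc1 hc2 (by linarith) (by linarith) (by linarith [k2.2.1])
      rw [← hlam] at hg
      have h7 : lam * (η - ξ) ≤ 4 * δ / q := by
        have := (abs_le.1 x3).1
        have := (abs_le.1 y3).2
        have : 4 * δ / q = 2 * δ / q + 2 * δ / q := by ring
        linarith
      have h8 : η - ξ ≤ 4 * δ / (q * lam) := by
        rw [← div_div, le_div_iff₀ hlam0]; linarith
      linarith
  have hcard : (T.card : ℝ) ≤ ((P : ℝ) + 1) * B := by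
    rw [Finset.card_eq_sum_card_fiberwise hmaps]
    push_cast
    refine (Finset.sum_le_sum hfib).trans ?_
    simp
  have hP1 : (P : ℝ) + 1 ≤ 5 * X ^ (c - 1) * q := by
    have := Nat.floor_le (show 0 ≤ 4 * X ^ (c - 1) * q by positivity)
    rw [← hP] at this
    nlinarith
  have hB1 : B ≤ 4 * δ / (q * lam) / q + 2 * L / q := by
    have : 1 ≤ L / q := by rw [le_div_iff₀ (by linarith)]; linarith
    have e : B = 4 * δ / (q * lam) / q + L / q + 1 := by rw [hB]; ring
    rw [e, mul_div_assoc 2 L]; linarith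
  have hXX : X ^ (c - 1) = X ^ (c - 2) * X := by
    rw [← Real.rpow_add_one hX0.ne']; ring_nf
  calc (T.card : ℝ) ≤ ((P : ℝ) + 1) * B := hcard
    _ ≤ (5 * X ^ (c - 1) * q) * (4 * δ / (q * lam) / q + 2 * L / q) := by
        have : 0 ≤ B := by positivity
        gcongr
    _ = 20 / (c * (c - 1)) * δ * X * (1 / q) + 10 * X ^ (c - 1) * L := by
        have h1 : c - 1 ≠ 0 := by linarith
        have h2 : X ^ (c - 2) ≠ 0 := by positivity
        have h3 : (q : ℝ) ≠ 0 := by positivity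
        have h4 : c ≠ 0 := by linarith
        rw [mul_add]
        congr 1
        · rw [hlam, hXX]; field_simp; ring
        · field_simp; ring

lemma sum_inv_le (Q : ℕ) (X : ℝ) (hX : 1 ≤ X) (hQ : (Q : ℝ) ≤ X) :
    ∑ q ∈ Finset.Icc 1 Q, (1 / (q : ℝ)) ≤ 1 + Real.log X := by
  have h := harmonic_floor_le_one_add_log X hX
  rw [harmonic_eq_sum_Icc] at h
  push_cast at h
  refine le_trans ?_ h
  simp only [one_div]
  apply Finset.sum_le_sum_of_subset_of_nonneg
  · exact Finset.Icc_subset_Icc_right (Nat.le_floor hQ)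
  · intros; positivity

lemma card_near_le (c X δ : ℝ) (hc1 : 1 < c) (hc2 : c < 2) (hX : 1 ≤ X) (hδ0 : 0 < δ)
    (hδ1 : δ ≤ 1) :
    ((near c X δ).card : ℝ) ≤ 20 / (c * (c - 1)) * δ * X * (1 + Real.log X)
      + 12 * X ^ ((c + 1) / 3) := by
  classical
  have hX0 : 0 < X := by linarith
  set L := X ^ ((2 - c) / 3) with hL
  have hL1 : 1 ≤ L := Real.one_le_rpow hX (by linarith)
  have hLX : L ≤ X := by
    conv_rhs => rw [← Real.rpow_one X]
    exact Real.rpow_le_rpow_of_exponent_le hX (by linarith)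
  set S := near c X δ with hS
  set T := S.filter (fun n => ∃ m ∈ S, n < m ∧ (m : ℝ) ≤ n + L) with hTdef
  have hnext : ∀ n ∈ T, ∃ m, m ∈ S ∧ n < m ∧ (m : ℝ) ≤ n + L ∧ ∀ m' ∈ S, n < m' → m ≤ m' := by
    intro n hn
    obtain ⟨m, hm, hnm, hmL⟩ := (Finset.mem_filter.1 hn).2
    have hex : ∃ k, k ∈ S ∧ n < k := ⟨m, hm, hnm⟩
    refine ⟨Nat.find hex, (Nat.find_spec hex).1, (Nat.find_spec hex).2, ?_,
      fun m' h1 h2 => Nat.find_min' hex ⟨h1, h2⟩⟩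
    have : Nat.find hex ≤ m := Nat.find_min' hex ⟨hm, hnm⟩
    have : (Nat.find hex : ℝ) ≤ m := by exact_mod_cast this
    linarith
  choose! nxt hnxt using hnext
  have hYL : X / L = X ^ ((c + 1) / 3) := by
    rw [hL, div_eq_iff (by positivity), ← Real.rpow_add hX0,
      show (c + 1) / 3 + (2 - c) / 3 = 1 by ring, Real.rpow_one]
  have hYL2 : X ^ (c - 1) * L * L = X ^ ((c + 1) / 3) := by
    rw [hL, ← Real.rpow_add hX0, ← Real.rpow_add hX0]; congr 1; ring
  have hY1 : 1 ≤ X ^ ((c + 1) / 3) := Real.one_le_rpow hX (by linarith)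
  -- elements of `S` followed by a long gap
  have hsparse : ((S.filter (fun n => ¬ ∃ m ∈ S, n < m ∧ (m : ℝ) ≤ n + L)).card : ℝ)
      ≤ X / L + 1 := by
    apply card_le_of_separated _ _ _ (by linarith) hX0.le
    · intro a ha b hb hab
      rw [Finset.mem_filter] at ha hb
      by_contra hcon
      exact ha.2 ⟨b, hb.1, hab, by linarith⟩
    · intro a ha b hb hab
      rw [Finset.mem_filter] at hb
      have := ((mem_near hX0.le).1 hb.1).2.1
      have : (0 : ℝ) ≤ a := Nat.cast_nonneg a
      linarith
  have hdense : (T.card : ℝ) ≤ 20 / (c * (c - 1)) * δ * X * (1 + Real.log X)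
      + 10 * X ^ ((c + 1) / 3) := by
    have hmaps : ∀ n ∈ T, (latSlope c n (nxt n)).den ∈ Finset.Icc 1 ⌊L⌋₊ := by
      intro n hn
      obtain ⟨h1, h2, h3, h4⟩ := hnxt n hn
      rw [Finset.mem_Icc]
      refine ⟨(latSlope c n (nxt n)).den_pos, Nat.le_floor ?_⟩
      have h5 := latSlope_den_le c h2
      have : (latSlope c n (nxt n)).den + n ≤ nxt n := by omega
      have : ((latSlope c n (nxt n)).den : ℝ) + n ≤ nxt n := by exact_mod_cast this
      linarith
    rw [Finset.card_eq_sum_card_fiberwise hmaps]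
    push_cast
    have hK : 0 ≤ 20 / (c * (c - 1)) * δ * X := by
      have : 0 < c - 1 := by linarith
      positivity
    have hfl := Nat.floor_le (show 0 ≤ L by linarith)
    calc _ ≤ ∑ q ∈ Finset.Icc 1 ⌊L⌋₊,
          (20 / (c * (c - 1)) * δ * X * (1 / (q : ℝ)) + 10 * X ^ (c - 1) * L) := by
          apply Finset.sum_le_sum
          intro q hq
          rw [Finset.mem_Icc] at hq
          apply card_den_le c X δ L hc1 hc2 hX hδ0 hδ1 _ nxt q hq.1
          · exact (Nat.le_floor_iff (by linarith)).1 hq.2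
          · intro n hn
            have hn' := (Finset.mem_filter.1 hn).1
            obtain ⟨h1, h2, h3, h4⟩ := hnxt n hn'
            exact ⟨(Finset.mem_filter.1 hn').1, h1, h2, h3, h4⟩
          · intro n hn
            exact (Finset.mem_filter.1 hn).2
      _ = 20 / (c * (c - 1)) * δ * X * (∑ q ∈ Finset.Icc 1 ⌊L⌋₊, (1 / (q : ℝ)))
          + ⌊L⌋₊ * (10 * X ^ (c - 1) * L) := by
          rw [Finset.sum_add_distrib, ← Finset.mul_sum]; simp
      _ ≤ 20 / (c * (c - 1)) * δ * X * (1 + Real.log X) + L * (10 * X ^ (c - 1) * L) := by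
          gcongr
          exact sum_inv_le _ X hX (hfl.trans hLX)
      _ = _ := by rw [← hYL2]; ring
  have hsplit := Finset.card_filter_add_card_filter_not (s := S)
    (fun n => ∃ m ∈ S, n < m ∧ (m : ℝ) ≤ n + L)
  have hsplit' : (S.card : ℝ) = (T.card : ℝ)
      + ((S.filter (fun n => ¬ ∃ m ∈ S, n < m ∧ (m : ℝ) ≤ n + L)).card : ℝ) := by
    rw [← hsplit]; push_cast; rfl
  rw [hYL] at hsparse
  linarith

/-! ### From counting to the sum -/

/-- Layer-cake bound: `min 1 (1 / (M t)) ≤ (2 / M) #{k ≤ M : t ≤ 1 / k}`, which holds because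
`⌊y⌋ ≥ y / 2` for `y ≥ 1`. At `t = 0` the left side is `0`, since `1 / 0 = 0`. -/
lemma min_le_card (M : ℕ) (hM : 1 ≤ M) (t : ℝ) (ht0 : 0 ≤ t) (ht : t ≤ 1 / 2) :
    min 1 (1 / (M * t)) ≤
      2 / M * ∑ k ∈ Finset.Icc 1 M, (if t ≤ 1 / (k : ℝ) then (1 : ℝ) else 0) := by
  have hMR : (1 : ℝ) ≤ M := by exact_mod_cast hM
  rcases ht0.eq_or_lt with rfl | ht0
  · have : 0 ≤ ∑ k ∈ Finset.Icc 1 M, (if (0 : ℝ) ≤ 1 / (k : ℝ) then (1 : ℝ) else 0) :=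
      Finset.sum_nonneg (fun k _ => by split_ifs <;> norm_num)
    simp only [mul_zero, div_zero]
    rw [min_eq_right zero_le_one]
    positivity
  set K := min M ⌊1 / t⌋₊ with hK
  have h1 : (K : ℝ) ≤ ∑ k ∈ Finset.Icc 1 M, (if t ≤ 1 / (k : ℝ) then (1 : ℝ) else 0) := by
    calc (K : ℝ) = ∑ k ∈ Finset.Icc 1 K, (1 : ℝ) := by simp
      _ ≤ ∑ k ∈ Finset.Icc 1 K, (if t ≤ 1 / (k : ℝ) then (1 : ℝ) else 0) := by
          apply Finset.sum_le_sum
          intro k hk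
          rw [Finset.mem_Icc] at hk
          have hk0 : (0 : ℝ) < k := by exact_mod_cast hk.1
          have : (k : ℝ) ≤ 1 / t :=
            (Nat.le_floor_iff (by positivity)).1 (hk.2.trans (min_le_right _ _))
          rw [if_pos]
          rw [le_div_iff₀ ht0] at this
          rw [le_div_iff₀ hk0]; linarith
      _ ≤ _ := by
          apply Finset.sum_le_sum_of_subset_of_nonneg
          · exact Finset.Icc_subset_Icc_right (min_le_left _ _)
          · intros; split_ifs <;> norm_num
  have h2 : min 1 (1 / (M * t)) ≤ 2 / M * (K : ℝ) := by
    have h3 : 2 ≤ 1 / t := by rw [le_div_iff₀ ht0]; linarith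
    have h4 := Nat.lt_floor_add_one (1 / t)
    rw [hK, Nat.cast_min]
    rcases le_total (M : ℝ) (⌊1 / t⌋₊ : ℝ) with h | h
    · rw [min_eq_left h, div_mul_cancel₀ _ (by positivity)]
      exact (min_le_left _ _).trans (by norm_num)
    · rw [min_eq_right h]
      refine (min_le_right _ _).trans ?_
      rw [show 1 / (M * t) = 1 / M * (1 / t) by field_simp,
        show 2 / (M : ℝ) * (⌊1 / t⌋₊ : ℝ) = 1 / M * (2 * (⌊1 / t⌋₊ : ℝ)) by ring]
      gcongr
      linarith
  refine h2.trans ?_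
  gcongr

lemma log_sq_le (ε X : ℝ) (hε : 0 < ε) (hX : 1 ≤ X) :
    (1 + Real.log X) ^ 2 ≤ (1 + 2 / ε) ^ 2 * X ^ ε := by
  have h1 := Real.log_le_rpow_div (show 0 ≤ X by linarith) (half_pos hε)
  have h2 : 1 ≤ X ^ (ε / 2) := Real.one_le_rpow hX (by linarith)
  have h3 : 0 ≤ Real.log X := Real.log_nonneg hX
  have h4 : X ^ (ε / 2) / (ε / 2) = 2 / ε * X ^ (ε / 2) := by field_simp
  have h5 : X ^ ε = (X ^ (ε / 2)) ^ 2 := by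
    rw [← Real.rpow_natCast, ← Real.rpow_mul (by linarith)]; congr 1; push_cast; ring
  rw [h5, ← mul_pow]
  apply pow_le_pow_left₀ (by linarith)
  rw [h4] at h1
  linarith

/-- The right side is smallest at `M = X ^ ((2 - c) / 3)`, where both terms equal the left side. -/
lemma rpow_le_balance (c X : ℝ) (M : ℝ) (hX : 1 ≤ X) (hM : 1 ≤ M) :
    X ^ ((c + 1) / 3) ≤ X * M⁻¹ + M ^ ((1 : ℝ) / 2) * X ^ (c / 2) := by
  have hX0 : 0 < X := by linarith
  rcases le_total M (X ^ ((2 - c) / 3)) with h | h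
  · have h1 : X ^ ((c + 1) / 3) ≤ X * M⁻¹ := by
      rw [← div_eq_mul_inv, le_div_iff₀ (by linarith)]
      calc X ^ ((c + 1) / 3) * M ≤ X ^ ((c + 1) / 3) * X ^ ((2 - c) / 3) := by gcongr
        _ = X := by
          rw [← Real.rpow_add hX0, show (c + 1) / 3 + (2 - c) / 3 = 1 by ring, Real.rpow_one]
    have : 0 ≤ M ^ ((1 : ℝ) / 2) * X ^ (c / 2) := by positivity
    linarith
  · have h1 : X ^ ((c + 1) / 3) ≤ M ^ ((1 : ℝ) / 2) * X ^ (c / 2) := by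
      calc X ^ ((c + 1) / 3) = (X ^ ((2 - c) / 3)) ^ ((1 : ℝ) / 2) * X ^ (c / 2) := by
            rw [← Real.rpow_mul hX0.le, ← Real.rpow_add hX0]; congr 1; ring
        _ ≤ _ := by gcongr
    have : 0 ≤ X * M⁻¹ := by positivity
    linarith

theorem stmt_12 (c μ ε : ℝ) (hc1 : 1 < c) (hc2 : c < 2) (hμ1 : 0 < μ) (hμ2 : μ < 1)
    (hε : 0 < ε) :
    ∃ C : ℝ, 0 < C ∧
      ∀ X : ℝ, 3 ≤ X → ∀ M : ℕ, 3 ≤ M → (M : ℝ) ≤ X →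
        (∑ n ∈ (Finset.range (⌊X⌋₊ + 1)).filter (fun n : ℕ => μ * X < (n : ℝ)),
            min 1 (1 / (M * |(n : ℝ) ^ c - round ((n : ℝ) ^ c)|))) ≤
          C * X ^ ε * (X * (M : ℝ)⁻¹ + (M : ℝ) ^ ((1 : ℝ) / 2) * X ^ (c / 2)) := by
  have hc0 : 0 < c - 1 := by linarith
  set A : ℝ := 20 / (c * (c - 1)) with hA
  have hA0 : 0 < A := by positivity
  refine ⟨2 * A * (1 + 2 / ε) ^ 2 + 24, by positivity, ?_⟩
  intro X hX3 M hM3 hMX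
  have hX1 : 1 ≤ X := by linarith
  have hX0 : 0 < X := by linarith
  have hM1 : (1 : ℝ) ≤ M := by exact_mod_cast (by omega : 1 ≤ M)
  have hM0 : (0 : ℝ) < M := by linarith
  set Y := X ^ ((c + 1) / 3) with hY
  have hlog : 0 ≤ Real.log X := Real.log_nonneg hX1
  have hstep1 : (∑ n ∈ (Finset.range (⌊X⌋₊ + 1)).filter (fun n : ℕ => μ * X < (n : ℝ)),
      min 1 (1 / (M * |(n : ℝ) ^ c - round ((n : ℝ) ^ c)|))) ≤
      2 / M * ∑ k ∈ Finset.Icc 1 M, ((near c X (1 / (k : ℝ))).card : ℝ) := by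
    have hsub : (Finset.range (⌊X⌋₊ + 1)).filter (fun n : ℕ => μ * X < (n : ℝ)) ⊆
        Finset.Icc 1 ⌊X⌋₊ := by
      intro n hn
      rw [Finset.mem_filter, Finset.mem_range] at hn
      have : (0 : ℝ) < n := lt_trans (by positivity) hn.2
      have : 0 < n := by exact_mod_cast this
      rw [Finset.mem_Icc]
      omega
    calc _ ≤ ∑ n ∈ Finset.Icc 1 ⌊X⌋₊, min 1 (1 / (M * |(n : ℝ) ^ c - round ((n : ℝ) ^ c)|)) := by
          apply Finset.sum_le_sum_of_subset_of_nonneg hsub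
          intros; positivity
      _ ≤ ∑ n ∈ Finset.Icc 1 ⌊X⌋₊, 2 / M * ∑ k ∈ Finset.Icc 1 M,
            (if |(n : ℝ) ^ c - round ((n : ℝ) ^ c)| ≤ 1 / (k : ℝ) then (1 : ℝ) else 0) := by
          apply Finset.sum_le_sum
          intro n _
          exact min_le_card M (by omega) _ (abs_nonneg _) (abs_sub_round _)
      _ = _ := by
          rw [← Finset.mul_sum, Finset.sum_comm]
          simp only [near, Finset.sum_boole]
  have hstep2 : ∑ k ∈ Finset.Icc 1 M, ((near c X (1 / (k : ℝ))).card : ℝ) ≤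
      A * X * (1 + Real.log X) ^ 2 + M * (12 * Y) := by
    calc _ ≤ ∑ k ∈ Finset.Icc 1 M, (A * X * (1 + Real.log X) * (1 / (k : ℝ)) + 12 * Y) := by
          apply Finset.sum_le_sum
          intro k hk
          rw [Finset.mem_Icc] at hk
          have hk1 : (1 : ℝ) ≤ k := by exact_mod_cast hk.1
          have := card_near_le c X (1 / k) hc1 hc2 hX1 (by positivity)
            (by rw [div_le_one (by linarith)]; exact hk1)
          rw [← hA, ← hY] at this
          refine this.trans (le_of_eq ?_)
          ring
      _ = A * X * (1 + Real.log X) * (∑ k ∈ Finset.Icc 1 M, (1 / (k : ℝ))) + M * (12 * Y) := by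
          rw [Finset.sum_add_distrib, ← Finset.mul_sum]; simp
      _ ≤ A * X * (1 + Real.log X) * (1 + Real.log X) + M * (12 * Y) := by
          gcongr
          exact sum_inv_le M X hX1 hMX
      _ = _ := by ring
  have hbal := rpow_le_balance c X M hX1 hM1
  rw [← hY] at hbal
  set R := X * (M : ℝ)⁻¹ + (M : ℝ) ^ ((1 : ℝ) / 2) * X ^ (c / 2) with hR
  have hXM : X * (M : ℝ)⁻¹ ≤ R := by
    rw [hR]
    have : 0 ≤ (M : ℝ) ^ ((1 : ℝ) / 2) * X ^ (c / 2) := by positivity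
    linarith
  have hR0 : 0 ≤ R := le_trans (by positivity) hXM
  have hXε : 1 ≤ X ^ ε := Real.one_le_rpow hX1 hε.le
  calc _ ≤ 2 / M * (A * X * (1 + Real.log X) ^ 2 + M * (12 * Y)) := by
        refine hstep1.trans ?_
        gcongr
    _ = 2 * A * (1 + Real.log X) ^ 2 * (X * (M : ℝ)⁻¹) + 24 * 1 * Y := by
        field_simp; ring
    _ ≤ 2 * A * ((1 + 2 / ε) ^ 2 * X ^ ε) * R + 24 * X ^ ε * R := by
        gcongr
        exact log_sq_le ε X hε hX1
    _ = _ := by ring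
end
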